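/- arXiv:0704.0347 — 2 statements merged into one kernel-verified Lean document; each statement's English description precedes it below -/
import Mathlib

section
/- Let n ≥ 2 and let δ satisfy 0 < δ ≤ 1 if n ≥ 3 and 0 < δ < 1 if n = 2. Let q ∈ C^∞(ℝⁿ∖{0}) be homogeneous of degree zero. There exists a constant C > 0 such that for every Schwartz function f on ℝⁿ, ‖ ⟨x⟩^{δ} q(D_x) f ‖_{L²(ℝⁿ)} ≤ C ‖ ⟨x⟩^{δ} f ‖_{L²(ℝⁿ)}. -/
open MeasureTheory Real Complex RealInnerProductSpace

noncomputable section

/-- Fourier transform with convention `(2π)^(-n/2) ∫ e^(-ix·ξ) f(x) dx`. -/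
def FT (n : ℕ) (f : EuclideanSpace ℝ (Fin n) → ℂ) (ξ : EuclideanSpace ℝ (Fin n)) : ℂ :=
  ((2 * π) ^ (-(n : ℝ) / 2) : ℝ) •
    ∫ x : EuclideanSpace ℝ (Fin n), Complex.exp (-Complex.I * ((⟪x, ξ⟫ : ℝ) : ℂ)) * f x

/-- Inverse Fourier transform. -/
def IFT (n : ℕ) (F : EuclideanSpace ℝ (Fin n) → ℂ) (x : EuclideanSpace ℝ (Fin n)) : ℂ :=
  ((2 * π) ^ (-(n : ℝ) / 2) : ℝ) •
    ∫ ξ : EuclideanSpace ℝ (Fin n), Complex.exp (Complex.I * ((⟪x, ξ⟫ : ℝ) : ℂ)) * F ξ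

/-- Fourier multiplier with symbol `q`: `q(D_x) f = IFT (q · FT f)`. -/
def mult (n : ℕ) (q : EuclideanSpace ℝ (Fin n) → ℂ) (f : EuclideanSpace ℝ (Fin n) → ℂ) :
    EuclideanSpace ℝ (Fin n) → ℂ :=
  IFT n fun ξ => q ξ * FT n f ξ

theorem eLpNorm_two_sq {α E : Type*} [MeasurableSpace α] [NormedAddCommGroup E] (μ : Measure α)
    (f : α → E) : eLpNorm f 2 μ ^ 2 = ∫⁻ x, ‖f x‖ₑ ^ 2 ∂μ := by
  have h := eLpNorm_nnreal_pow_eq_lintegral (f := f) (μ := μ) (p := 2) two_ne_zero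
  simp only [NNReal.coe_ofNat, ENNReal.coe_ofNat, ENNReal.rpow_ofNat] at h
  exact h

section Plancherel

open FourierTransform SchwartzMap
open scoped ContDiff

variable {V : Type*} [NormedAddCommGroup V] [InnerProductSpace ℝ V] [FiniteDimensional ℝ V]
  [MeasurableSpace V] [BorelSpace V]

/-- On `L¹ ∩ L²` the integral Fourier transform agrees with the `L²` Fourier transform. -/
theorem fourier_ae_eq_fourier_toLp {f : V → ℂ} (hf1 : Integrable f) (hf2 : MemLp f 2) :
    𝓕 f =ᵐ[volume] (𝓕 (hf2.toLp f) : Lp ℂ 2 (volume : Measure V)) := by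
  have hcont : Continuous (𝓕 f) :=
    VectorFourier.fourierIntegral_continuous continuous_fourierChar
      (by exact continuous_inner) hf1
  apply ae_eq_of_integral_contDiff_smul_eq hcont.locallyIntegrable
    ((Lp.memLp _).locallyIntegrable (by norm_num))
  intro g g_smooth g_cpt
  have hg₁ : HasCompactSupport (Complex.ofRealCLM ∘ g) := g_cpt.comp_left rfl
  have hg₂ : ContDiff ℝ ∞ (Complex.ofRealCLM ∘ g) := by fun_prop
  set φ : 𝓢(V, ℂ) := hg₁.toSchwartzMap hg₂ with hφ
  have hφg : ∀ x, φ x = (g x : ℂ) := fun x => rfl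
  calc
    ∫ x, g x • 𝓕 f x = ∫ x, φ x • 𝓕 f x := by simp [hφg]
    _ = ∫ x, 𝓕 φ x • f x := by
      have h := VectorFourier.integral_fourierIntegral_smul_eq_flip (L := innerₗ V)
        continuous_fourierChar (by exact continuous_inner) φ.integrable hf1
        (μ := volume) (ν := volume)
      rw [SchwartzMap.fourier_coe]
      simpa using! h.symm
    _ = ∫ x, 𝓕 φ x • (hf2.toLp f) x := by
      apply integral_congr_ae
      filter_upwards [hf2.coeFn_toLp] with x hx
      rw [hx]
    _ = 𝓕 (hf2.toLp f : 𝓢'(V, ℂ)) φ := by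
      rw [TemperedDistribution.fourier_apply, Lp.toTemperedDistribution_apply]
    _ = ∫ x, g x • (𝓕 (hf2.toLp f) : Lp ℂ 2 (volume : Measure V)) x := by
      rw [Lp.fourier_toTemperedDistribution_eq, Lp.toTemperedDistribution_apply]
      simp [hφg]

/-- Plancherel's theorem for the integral Fourier transform on `L¹ ∩ L²`. -/
theorem lintegral_enorm_fourier_sq {f : V → ℂ} (hf1 : Integrable f) (hf2 : MemLp f 2) :
    ∫⁻ x, ‖𝓕 f x‖ₑ ^ 2 = ∫⁻ x, ‖f x‖ₑ ^ 2 := by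
  have key : eLpNorm (𝓕 f) 2 volume = eLpNorm f 2 volume := by
    rw [eLpNorm_congr_ae (fourier_ae_eq_fourier_toLp hf1 hf2), ← Lp.enorm_def,
      ← ofReal_norm, Lp.norm_fourier_eq, ofReal_norm, Lp.enorm_def,
      eLpNorm_congr_ae hf2.coeFn_toLp]
  rw [← eLpNorm_two_sq, key, eLpNorm_two_sq]

end Plancherel

section Scaling

theorem lintegral_comp_smul_addHaar {E : Type*} [NormedAddCommGroup E] [NormedSpace ℝ E]
    [FiniteDimensional ℝ E] [MeasurableSpace E] [BorelSpace E] (μ : Measure E)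
    [μ.IsAddHaarMeasure] (f : E → ENNReal) {r : ℝ} (hr : r ≠ 0) :
    ∫⁻ x, f (r • x) ∂μ =
      ENNReal.ofReal |(r ^ Module.finrank ℝ E)⁻¹| * ∫⁻ x, f x ∂μ := by
  have h := lintegral_map_equiv (μ := μ) f
    (Homeomorph.smul (α := E) (isUnit_iff_ne_zero.2 hr).unit).toMeasurableEquiv
  have h2 := Measure.map_addHaar_smul μ hr
  rw [← smul_eq_mul, ← lintegral_smul_measure, ← h2]
  exact h.symm

/-- Scaling of the measure `t ^ (-1 - s) dt` on the half-line. -/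
theorem lintegral_Ioi_comp_mul_rpow (φ : ℝ → ENNReal) {s : ℝ} (hs : 0 < s) (hφ : φ 0 = 0)
    {a : ℝ} (ha : 0 ≤ a) :
    ∫⁻ t in Set.Ioi 0, φ (t * a) * ENNReal.ofReal (t ^ (-1 - s)) =
      ENNReal.ofReal (a ^ s) * ∫⁻ t in Set.Ioi 0, φ t * ENNReal.ofReal (t ^ (-1 - s)) := by
  rcases ha.eq_or_lt with rfl | ha
  · simp [hφ, Real.zero_rpow hs.ne']
  · rw [← lintegral_indicator measurableSet_Ioi, ← lintegral_indicator measurableSet_Ioi]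
    have h := lintegral_comp_smul_addHaar volume (Set.indicator (Set.Ioi (0 : ℝ)) fun t =>
      φ t * ENNReal.ofReal (t ^ (-1 - s))) ha.ne'
    have h2 : ∀ t : ℝ, (Set.indicator (Set.Ioi (0 : ℝ)) fun t =>
        φ (t * a) * ENNReal.ofReal (t ^ (-1 - s))) t = ENNReal.ofReal (a ^ (1 + s)) *
        (Set.indicator (Set.Ioi (0 : ℝ)) fun t => φ t * ENNReal.ofReal (t ^ (-1 - s))) (a • t) := by
      intro t
      by_cases ht : 0 < t
      · have hat : 0 < a * t := by positivity
        rw [Set.indicator_of_mem (by exact ht), Set.indicator_of_mem (by exact hat), smul_eq_mul,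
          mul_comm a t, mul_left_comm, ← ENNReal.ofReal_mul (by positivity),
          Real.mul_rpow ht.le ha.le, mul_left_comm, ← Real.rpow_add ha]
        simp
      · have hat : ¬ 0 < a * t := by
          rw [not_lt] at ht ⊢
          exact mul_nonpos_of_nonneg_of_nonpos ha.le ht
        rw [Set.indicator_of_notMem (by exact ht), Set.indicator_of_notMem (by exact hat), mul_zero]
    simp_rw [h2]
    rw [lintegral_const_mul' _ _ ENNReal.ofReal_ne_top, h, ← mul_assoc,
      ← ENNReal.ofReal_mul (by positivity)]
    congr 2
    rw [Module.finrank_self, pow_one, abs_of_pos (by positivity), Real.rpow_add ha, Real.rpow_one]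
    field_simp

end Scaling

section FourierNormalized

open FourierTransform

variable {n : ℕ}

theorem FT_eq_fourier (f : EuclideanSpace ℝ (Fin n) → ℂ) (ξ : EuclideanSpace ℝ (Fin n)) :
    FT n f ξ = ((2 * π) ^ (-(n : ℝ) / 2) : ℝ) • 𝓕 f ((2 * π)⁻¹ • ξ) := by
  rw [FT, Real.fourier_eq']
  congr 2
  ext x
  rw [smul_eq_mul, inner_smul_right]
  congr 2
  push_cast
  have : (π : ℂ) ≠ 0 := by exact_mod_cast pi_ne_zero
  field_simp

theorem IFT_eq_FT_neg (F : EuclideanSpace ℝ (Fin n) → ℂ) (x : EuclideanSpace ℝ (Fin n)) :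
    IFT n F x = FT n F (-x) := by
  simp only [IFT, FT]
  congr 2
  ext ξ
  rw [inner_neg_right, real_inner_comm]
  simp

theorem continuous_FT {f : EuclideanSpace ℝ (Fin n) → ℂ} (hf : Integrable f) :
    Continuous (FT n f) := by
  have hcont : Continuous (𝓕 f) :=
    VectorFourier.fourierIntegral_continuous continuous_fourierChar
      (by exact continuous_inner) hf
  have : FT n f = fun ξ => ((2 * π) ^ (-(n : ℝ) / 2) : ℝ) • 𝓕 f ((2 * π)⁻¹ • ξ) :=
    funext (FT_eq_fourier f)
  rw [this]
  fun_prop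

theorem continuous_IFT {F : EuclideanSpace ℝ (Fin n) → ℂ} (hF : Integrable F) :
    Continuous (IFT n F) := by
  rw [show IFT n F = fun x => FT n F (-x) from funext (IFT_eq_FT_neg F)]
  exact (continuous_FT hF).comp continuous_neg

/-- Plancherel's theorem for `FT`. -/
theorem lintegral_enorm_FT_sq {f : EuclideanSpace ℝ (Fin n) → ℂ} (hf1 : Integrable f)
    (hf2 : MemLp f 2) : ∫⁻ ξ, ‖FT n f ξ‖ₑ ^ 2 = ∫⁻ x, ‖f x‖ₑ ^ 2 := by
  simp_rw [FT_eq_fourier, enorm_smul, mul_pow]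
  have h2π : (0 : ℝ) < 2 * π := by positivity
  rw [lintegral_const_mul' _ _ (by simp),
    lintegral_comp_smul_addHaar volume (fun ξ => ‖𝓕 f ξ‖ₑ ^ 2) (inv_ne_zero h2π.ne'),
    lintegral_enorm_fourier_sq hf1 hf2, ← mul_assoc]
  convert one_mul _
  rw [Real.enorm_eq_ofReal (by positivity), ← ENNReal.ofReal_pow (by positivity),
    ← ENNReal.ofReal_mul (by positivity), finrank_euclideanSpace_fin, abs_of_pos (by positivity),
    ← ENNReal.ofReal_one]
  congr 1
  rw [← Real.rpow_natCast _ 2, ← Real.rpow_mul h2π.le, inv_pow, inv_inv, ← Real.rpow_natCast _ n,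
    ← Real.rpow_add h2π]
  norm_num

theorem lintegral_enorm_IFT_sq {F : EuclideanSpace ℝ (Fin n) → ℂ} (hF1 : Integrable F)
    (hF2 : MemLp F 2) : ∫⁻ x, ‖IFT n F x‖ₑ ^ 2 = ∫⁻ ξ, ‖F ξ‖ₑ ^ 2 := by
  simp_rw [IFT_eq_FT_neg]
  rw [lintegral_neg_eq_self (μ := volume) (fun x => ‖FT n F x‖ₑ ^ 2), lintegral_enorm_FT_sq hF1 hF2]

theorem enorm_FT_le (f : EuclideanSpace ℝ (Fin n) → ℂ) (ξ : EuclideanSpace ℝ (Fin n)) :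
    ‖FT n f ξ‖ₑ ≤ ∫⁻ x, ‖f x‖ₑ := by
  rw [FT, enorm_smul]
  have h1 : ‖((2 * π) ^ (-(n : ℝ) / 2) : ℝ)‖ₑ ≤ 1 := by
    rw [Real.enorm_eq_ofReal (by positivity), ENNReal.ofReal_le_one]
    apply Real.rpow_le_one_of_one_le_of_nonpos
    · nlinarith [Real.pi_gt_three]
    · have : (0 : ℝ) ≤ n := n.cast_nonneg
      linarith
  calc _ ≤ 1 * ∫⁻ x, ‖Complex.exp (-Complex.I * ((⟪x, ξ⟫ : ℝ) : ℂ)) * f x‖ₑ :=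
        mul_le_mul' h1 (enorm_integral_le_lintegral_enorm _)
    _ = ∫⁻ x, ‖f x‖ₑ := by
      rw [one_mul]
      congr 1
      ext x
      rw [enorm_mul, ← ofReal_norm, Complex.norm_exp]
      simp

theorem FT_add {f g : EuclideanSpace ℝ (Fin n) → ℂ} (hf : Integrable f) (hg : Integrable g)
    (ξ : EuclideanSpace ℝ (Fin n)) : FT n (fun x => f x + g x) ξ = FT n f ξ + FT n g ξ := by
  rw [FT_eq_fourier, FT_eq_fourier, FT_eq_fourier, ← smul_add]
  congr 1
  exact congrFun (VectorFourier.fourierIntegral_add (L := innerₗ (EuclideanSpace ℝ (Fin n)))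
    continuous_fourierChar (by exact continuous_inner) hf hg) _

theorem integrable_exp_inner_mul {f : EuclideanSpace ℝ (Fin n) → ℂ} (hf : Integrable f) (c : ℝ)
    (ξ : EuclideanSpace ℝ (Fin n)) :
    Integrable fun x => Complex.exp (c * Complex.I * ((⟪x, ξ⟫ : ℝ) : ℂ)) * f x := by
  refine hf.bdd_mul (c := 1) (Continuous.aestronglyMeasurable (by fun_prop)) (ae_of_all _ fun x => ?_)
  simp [Complex.norm_exp]

theorem FT_modulation_sub {f : EuclideanSpace ℝ (Fin n) → ℂ} (hf : Integrable f)
    (ξ h : EuclideanSpace ℝ (Fin n)) :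
    FT n (fun x => (Complex.exp (-Complex.I * ((⟪x, h⟫ : ℝ) : ℂ)) - 1) * f x) ξ =
      FT n f (ξ + h) - FT n f ξ := by
  have h1 := integrable_exp_inner_mul hf (-1) ξ
  have h2 := integrable_exp_inner_mul hf (-1) (ξ + h)
  simp only [ofReal_neg, ofReal_one, neg_one_mul] at h1 h2
  simp only [FT]
  rw [← smul_sub, ← integral_sub h2 h1]
  congr 2
  ext x
  rw [inner_add_right, ofReal_add, mul_add, Complex.exp_add]
  ring

theorem IFT_translation_sub {F : EuclideanSpace ℝ (Fin n) → ℂ} (hF : Integrable F)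
    (x h : EuclideanSpace ℝ (Fin n)) :
    IFT n (fun ξ => F (ξ + h) - F ξ) x =
      (Complex.exp (-Complex.I * ((⟪x, h⟫ : ℝ) : ℂ)) - 1) * IFT n F x := by
  have h1 := integrable_exp_inner_mul hF 1 x
  have h2 := integrable_exp_inner_mul (hF.comp_add_right h) 1 x
  simp only [ofReal_one, one_mul] at h1 h2
  have h3 : ∫ ξ, Complex.exp (Complex.I * ((⟪x, ξ⟫ : ℝ) : ℂ)) * F (ξ + h) =
      Complex.exp (-Complex.I * ((⟪x, h⟫ : ℝ) : ℂ)) *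
        ∫ ξ, Complex.exp (Complex.I * ((⟪x, ξ⟫ : ℝ) : ℂ)) * F ξ := by
    rw [← integral_add_right_eq_self (fun ξ => Complex.exp (Complex.I * ((⟪x, ξ⟫ : ℝ) : ℂ)) * F ξ) h,
      ← integral_const_mul]
    congr 1
    ext ξ
    rw [inner_add_right, ofReal_add, mul_add, Complex.exp_add, neg_mul, Complex.exp_neg]
    field_simp [Complex.exp_ne_zero]
  simp only [IFT, mul_sub]
  simp_rw [real_inner_comm x] at h1 h2 h3 ⊢
  rw [integral_sub h2 h1, h3, mul_smul_comm]
  congr 1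
  ring

theorem integrable_FT_schwartz (f : SchwartzMap (EuclideanSpace ℝ (Fin n)) ℂ) :
    Integrable (FT n f) := by
  rw [show FT n f = fun ξ => ((2 * π) ^ (-(n : ℝ) / 2) : ℝ) • 𝓕 (f : _ → ℂ) ((2 * π)⁻¹ • ξ) from
    funext (FT_eq_fourier f)]
  rw [← SchwartzMap.fourier_coe]
  exact (((𝓕 f).integrable (μ := volume)).comp_smul (inv_ne_zero Real.two_pi_pos.ne')).smul
    ((2 * π) ^ (-(n : ℝ) / 2) : ℝ)

theorem memLp_two_of_lintegral {α : Type*} [MeasurableSpace α] {μ : Measure α} {f : α → ℂ}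
    (hf : AEStronglyMeasurable f μ) (h : ∫⁻ x, ‖f x‖ₑ ^ 2 ∂μ < ⊤) : MemLp f 2 μ := by
  refine ⟨hf, ?_⟩
  rw [← eLpNorm_two_sq] at h
  simpa using h

theorem memLp_FT_schwartz (f : SchwartzMap (EuclideanSpace ℝ (Fin n)) ℂ) :
    MemLp (FT n f) 2 := by
  refine memLp_two_of_lintegral (continuous_FT f.integrable).aestronglyMeasurable ?_
  rw [lintegral_enorm_FT_sq f.integrable (f.memLp 2 volume), ← eLpNorm_two_sq]
  exact ENNReal.pow_lt_top (f.memLp 2 volume).2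

end FourierNormalized

section Hardy

theorem enorm_add_sq_le {E : Type*} [NormedAddCommGroup E] (a b : E) :
    ‖a + b‖ₑ ^ 2 ≤ 2 * ‖a‖ₑ ^ 2 + 2 * ‖b‖ₑ ^ 2 := by
  have h := ENNReal.rpow_add_le_mul_rpow_add_rpow ‖a‖ₑ ‖b‖ₑ (p := 2) (by norm_num)
  norm_num at h
  rw [← mul_add]
  exact (pow_le_pow_left' (enorm_add_le a b) 2).trans h

theorem lintegral_mul_sq_le {α : Type*} [MeasurableSpace α] {μ : Measure α} {f g : α → ENNReal}
    (hf : AEMeasurable f μ) (hg : AEMeasurable g μ) :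
    (∫⁻ x, f x * g x ∂μ) ^ 2 ≤ (∫⁻ x, f x ^ 2 ∂μ) * ∫⁻ x, g x ^ 2 ∂μ := by
  have h := ENNReal.lintegral_mul_le_Lp_mul_Lq μ Real.HolderConjugate.two_two hf hg
  have h2 := pow_le_pow_left' h 2
  rw [mul_pow, ← ENNReal.rpow_natCast (_ ^ _) 2, ← ENNReal.rpow_natCast (_ ^ _) 2,
    ← ENNReal.rpow_mul, ← ENNReal.rpow_mul] at h2
  simpa using h2

theorem lintegral_Ioi_indicator_rpow {s : ℝ} (hs : 0 < s) :
    ∫⁻ t in Set.Ioi 0, (Set.Ioi (1 : ℝ)).indicator 1 t * ENNReal.ofReal (t ^ (-1 - s)) =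
      ENNReal.ofReal (1 / s) := by
  have h1 : ∀ t : ℝ, (Set.Ioi (1 : ℝ)).indicator 1 t * ENNReal.ofReal (t ^ (-1 - s)) =
      (Set.Ioi (1 : ℝ)).indicator (fun t => ENNReal.ofReal (t ^ (-1 - s))) t := by
    intro t
    by_cases ht : t ∈ Set.Ioi (1 : ℝ) <;> simp [ht]
  simp_rw [h1]
  rw [setLIntegral_indicator measurableSet_Ioi,
    Set.inter_eq_left.2 (Set.Ioi_subset_Ioi zero_le_one),
    ← ofReal_integral_eq_lintegral_ofReal (integrableOn_Ioi_rpow_of_lt (by linarith) one_pos),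
    integral_Ioi_rpow_of_lt (by linarith) one_pos]
  · congr 1
    simp
    rw [show -1 - s + 1 = -s by ring, neg_div_neg_eq, one_div]
  · filter_upwards [ae_restrict_mem measurableSet_Ioi] with t ht
    have : (0 : ℝ) < t := one_pos.trans ht
    simp only [Pi.zero_apply]
    positivity

theorem lintegral_Ioi_indicator_Iic_rpow_lt_top {s b : ℝ} (hsb : s < b) :
    ∫⁻ t in Set.Ioi 0, (Set.Iic (1 : ℝ)).indicator (fun t => ENNReal.ofReal (t ^ b)) t *
      ENNReal.ofReal (t ^ (-1 - s)) < ⊤ := by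
  have h1 : ∀ t ∈ Set.Ioi (0 : ℝ), (Set.Iic (1 : ℝ)).indicator (fun t => ENNReal.ofReal (t ^ b)) t *
      ENNReal.ofReal (t ^ (-1 - s)) =
      (Set.Iic (1 : ℝ)).indicator (fun t => ENNReal.ofReal (t ^ (b - 1 - s))) t := by
    intro t ht
    have ht0 : (0 : ℝ) < t := ht
    by_cases ht : t ∈ Set.Iic (1 : ℝ)
    · rw [Set.indicator_of_mem ht, Set.indicator_of_mem ht, ← ENNReal.ofReal_mul (by positivity),
        ← Real.rpow_add ht0]
      congr 2
      ring
    · simp [ht]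
  rw [setLIntegral_congr_fun measurableSet_Ioi h1, setLIntegral_indicator measurableSet_Iic,
    Set.inter_comm, Set.Ioi_inter_Iic]
  have h2 : IntegrableOn (fun t : ℝ => t ^ (b - 1 - s)) (Set.Ioc 0 1) := by
    rw [← intervalIntegrable_iff_integrableOn_Ioc_of_le zero_le_one]
    exact intervalIntegral.intervalIntegrable_rpow' (by linarith)
  exact h2.lintegral_lt_top

variable {n : ℕ}

theorem lintegral_indicator_closedBall_rpow_lt_top {b : ℝ} (hn : 1 ≤ n) (hb : b < n) :
    ∫⁻ x : EuclideanSpace ℝ (Fin n), (Metric.closedBall 0 1).indicator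
      (fun x => ENNReal.ofReal (‖x‖ ^ (-b))) x < ⊤ := by
  rw [lintegral_indicator measurableSet_closedBall]
  have h : LocallyIntegrable (fun x : EuclideanSpace ℝ (Fin n) => ‖x‖ ^ (-b)) volume := by
    refine locallyIntegrable_of_norm_le_rpow (C := 1) (α := b) (by simpa using hn)
      (by simpa using hb) (ae_of_all _ fun x => ?_) ?_
    · rw [one_mul, Real.norm_of_nonneg (by positivity)]
    · exact (measurable_norm.pow_const _).aestronglyMeasurable
  exact (h.integrableOn_isCompact (isCompact_closedBall 0 1)).lintegral_lt_top

/-- The low-frequency/high-frequency splitting behind the fractional Hardy inequality. -/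
theorem lintegral_FT_ball_le (hn : 1 ≤ n) (b : ℝ) {r : ℝ} (hr : 0 < r)
    {f : EuclideanSpace ℝ (Fin n) → ℂ} (hf1 : Integrable f) (hf2 : MemLp f 2) :
    ∫⁻ ξ, (Set.Ioi (1 : ℝ)).indicator 1 (r * ‖ξ‖⁻¹) * ‖FT n f ξ‖ₑ ^ 2 ≤
      2 * (∫⁻ x, (Set.Ioi (1 : ℝ)).indicator 1 (r * ‖x‖) * ‖f x‖ₑ ^ 2) +
      2 * (volume (Metric.ball (0 : EuclideanSpace ℝ (Fin n)) 1) *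
        ∫⁻ x : EuclideanSpace ℝ (Fin n), (Metric.closedBall 0 1).indicator
          (fun x => ENNReal.ofReal (‖x‖ ^ (-b))) x) *
        ∫⁻ x, (Set.Iic (1 : ℝ)).indicator (fun t => ENNReal.ofReal (t ^ b)) (r * ‖x‖) *
          ‖f x‖ₑ ^ 2 := by
  have : Nonempty (Fin n) := ⟨⟨0, hn⟩⟩
  set B : Set (EuclideanSpace ℝ (Fin n)) := {x | r * ‖x‖ ≤ 1} with hB
  have hBm : MeasurableSet B := measurableSet_le (by fun_prop) (by fun_prop)
  set K := ∫⁻ x : EuclideanSpace ℝ (Fin n), (Metric.closedBall 0 1).indicator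
          (fun x => ENNReal.ofReal (‖x‖ ^ (-b))) x with hK
  set P := ∫⁻ x, (Set.Iic (1 : ℝ)).indicator (fun t => ENNReal.ofReal (t ^ b)) (r * ‖x‖) *
          ‖f x‖ₑ ^ 2 with hP
  have hsplit : ∀ ξ, FT n f ξ = FT n (Bᶜ.indicator f) ξ + FT n (B.indicator f) ξ := by
    intro ξ
    rw [← FT_add (hf1.indicator hBm.compl) (hf1.indicator hBm)]
    congr 1
    exact (Set.indicator_compl_add_self B f).symm
  have hhigh : ∫⁻ ξ, ‖FT n (Bᶜ.indicator f) ξ‖ₑ ^ 2 =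
      ∫⁻ x, (Set.Ioi (1 : ℝ)).indicator 1 (r * ‖x‖) * ‖f x‖ₑ ^ 2 := by
    rw [lintegral_enorm_FT_sq (hf1.indicator hBm.compl) (hf2.indicator hBm.compl)]
    congr 1
    ext x
    by_cases hx : x ∈ B
    · have hx' : r * ‖x‖ ∉ Set.Ioi (1 : ℝ) := by
        simpa [hB] using hx
      simp [hx, hx']
    · have hx' : r * ‖x‖ ∈ Set.Ioi (1 : ℝ) := by
        simpa [hB] using hx
      simp [hx, hx']
  have hlow : ∀ ξ, ‖FT n (B.indicator f) ξ‖ₑ ^ 2 ≤ P * (ENNReal.ofReal ((r ^ n)⁻¹) * K) := by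
    intro ξ
    have hscale := lintegral_comp_smul_addHaar volume ((Metric.closedBall 0 1).indicator
          (fun x : EuclideanSpace ℝ (Fin n) => ENNReal.ofReal (‖x‖ ^ (-b)))) hr.ne'
    rw [finrank_euclideanSpace_fin, abs_of_pos (by positivity)] at hscale
    rw [← hscale]
    have hCS := lintegral_mul_sq_le (μ := volume)
      (f := fun x => B.indicator (fun x => ENNReal.ofReal ((r * ‖x‖) ^ (b / 2)) * ‖f x‖ₑ) x)
      (g := fun x => B.indicator (fun x => ENNReal.ofReal ((r * ‖x‖) ^ (-b / 2))) x)
      (AEMeasurable.indicator (AEMeasurable.mul (by fun_prop) hf1.1.enorm) hBm)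
      (Measurable.aemeasurable (Measurable.indicator (by fun_prop) hBm))
    refine (pow_le_pow_left' (enorm_FT_le _ ξ) 2).trans (le_trans (le_of_eq ?_)
      (hCS.trans (le_of_eq ?_)))
    · congr 1
      apply lintegral_congr_ae
      filter_upwards [compl_mem_ae_iff.2 (measure_singleton (0 : EuclideanSpace ℝ (Fin n)))]
        with x hx
      have hx0 : 0 < r * ‖x‖ := mul_pos hr (norm_pos_iff.2 hx)
      by_cases hxB : x ∈ B
      · simp only [Set.indicator_of_mem hxB]
        rw [mul_right_comm, ← ENNReal.ofReal_mul (by positivity), ← Real.rpow_add hx0, neg_div,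
          add_neg_cancel, Real.rpow_zero, ENNReal.ofReal_one, one_mul]
      · simp [hxB]
    · rw [hP]
      congr 1
      · congr 1
        ext x
        by_cases hxB : x ∈ B
        · have hx' : r * ‖x‖ ∈ Set.Iic (1 : ℝ) := hxB
          simp only [Set.indicator_of_mem hxB, Set.indicator_of_mem hx']
          rw [mul_pow, ← ENNReal.ofReal_pow (by positivity), ← Real.rpow_natCast _ 2,
            ← Real.rpow_mul (by positivity)]
          norm_num
        · have hx' : r * ‖x‖ ∉ Set.Iic (1 : ℝ) := hxB
          simp [hxB, hx']
      · congr 1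
        ext x
        have hnorm : ‖r • x‖ = r * ‖x‖ := by rw [norm_smul, Real.norm_of_nonneg hr.le]
        by_cases hxB : x ∈ B
        · have hx' : r • x ∈ Metric.closedBall (0 : EuclideanSpace ℝ (Fin n)) 1 := by
            rw [mem_closedBall_zero_iff, hnorm]
            exact hxB
          simp only [Set.indicator_of_mem hxB, Set.indicator_of_mem hx']
          rw [← ENNReal.ofReal_pow (by positivity), ← Real.rpow_natCast _ 2,
            ← Real.rpow_mul (by positivity), hnorm]
          norm_num
        · have hx' : r • x ∉ Metric.closedBall (0 : EuclideanSpace ℝ (Fin n)) 1 := by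
            rw [mem_closedBall_zero_iff, hnorm]
            exact hxB
          simp [hxB, hx']
  have hball : ∫⁻ ξ : EuclideanSpace ℝ (Fin n), (Set.Ioi (1 : ℝ)).indicator 1 (r * ‖ξ‖⁻¹) ≤
      ENNReal.ofReal (r ^ n) * volume (Metric.ball (0 : EuclideanSpace ℝ (Fin n)) 1) := by
    have hvol := Measure.addHaar_ball volume (0 : EuclideanSpace ℝ (Fin n)) hr.le
    rw [finrank_euclideanSpace_fin] at hvol
    rw [← hvol, ← lintegral_indicator_one measurableSet_ball]
    refine lintegral_mono fun ξ => ?_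
    by_cases hξ : r * ‖ξ‖⁻¹ ∈ Set.Ioi (1 : ℝ)
    · have hξ' : ξ ∈ Metric.ball (0 : EuclideanSpace ℝ (Fin n)) r := by
        rw [mem_ball_zero_iff]
        rcases (norm_nonneg ξ).eq_or_lt with h0 | h0
        · rwa [← h0]
        · rwa [Set.mem_Ioi, ← div_eq_mul_inv, one_lt_div h0] at hξ
      simp [hξ']
      exact Set.indicator_le_self' (fun _ _ => zero_le) _
    · simp [hξ]
  have hmono : ∀ ξ, (Set.Ioi (1 : ℝ)).indicator 1 (r * ‖ξ‖⁻¹) * ‖FT n f ξ‖ₑ ^ 2 ≤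
      2 * ‖FT n (Bᶜ.indicator f) ξ‖ₑ ^ 2 + (2 * (P * (ENNReal.ofReal ((r ^ n)⁻¹) * K))) *
        (Set.Ioi (1 : ℝ)).indicator 1 (r * ‖ξ‖⁻¹) := by
    intro ξ
    by_cases hξ : r * ‖ξ‖⁻¹ ∈ Set.Ioi (1 : ℝ)
    · simp only [Set.indicator_of_mem hξ, Pi.one_apply, one_mul, mul_one]
      rw [hsplit ξ]
      exact (enorm_add_sq_le _ _).trans (by gcongr; exact hlow ξ)
    · simp [hξ]
  have hFTm : Measurable fun ξ => 2 * ‖FT n (Bᶜ.indicator f) ξ‖ₑ ^ 2 :=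
    ((continuous_FT (hf1.indicator hBm.compl)).measurable.enorm.pow_const 2).const_mul 2
  have hindm : Measurable fun ξ : EuclideanSpace ℝ (Fin n) =>
      (Set.Ioi (1 : ℝ)).indicator (1 : ℝ → ENNReal) (r * ‖ξ‖⁻¹) :=
    (measurable_one.indicator measurableSet_Ioi).comp (by fun_prop)
  refine (lintegral_mono hmono).trans ?_
  rw [lintegral_add_left hFTm, lintegral_const_mul' _ _ (by simp), hhigh,
    lintegral_const_mul _ hindm]
  refine add_le_add le_rfl ?_
  refine (mul_le_mul_right hball _).trans (le_of_eq ?_)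
  have hr1 : ENNReal.ofReal ((r ^ n)⁻¹) * ENNReal.ofReal (r ^ n) = 1 := by
    rw [← ENNReal.ofReal_mul (by positivity), inv_mul_cancel₀ (by positivity), ENNReal.ofReal_one]
  calc _ = 2 * (volume (Metric.ball (0 : EuclideanSpace ℝ (Fin n)) 1) * K) * P *
        (ENNReal.ofReal ((r ^ n)⁻¹) * ENNReal.ofReal (r ^ n)) := by ring
    _ = _ := by rw [hr1, mul_one]

/-- Exchange the order of integration and use homogeneity of `t ^ (-1 - s) dt`. -/
theorem lintegral_Ioi_lintegral_comp_mul_rpow {α : Type*} [MeasurableSpace α] {μ : Measure α}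
    [SFinite μ] {φ : ℝ → ENNReal} (hφm : Measurable φ) (hφ : φ 0 = 0) {s : ℝ} (hs : 0 < s)
    {a : α → ℝ} (ham : Measurable a) (ha : ∀ x, 0 ≤ a x) {g : α → ENNReal} (hg : Measurable g) :
    ∫⁻ t in Set.Ioi 0, (∫⁻ x, φ (t * a x) * g x ∂μ) * ENNReal.ofReal (t ^ (-1 - s)) =
      (∫⁻ t in Set.Ioi 0, φ t * ENNReal.ofReal (t ^ (-1 - s))) *
        ∫⁻ x, ENNReal.ofReal (a x ^ s) * g x ∂μ := by
  have hmeas : Measurable fun p : ℝ × α =>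
      φ (p.1 * a p.2) * g p.2 * ENNReal.ofReal (p.1 ^ (-1 - s)) :=
    ((hφm.comp (by fun_prop)).mul (by fun_prop)).mul (by fun_prop)
  have h1 : ∀ t : ℝ, (∫⁻ x, φ (t * a x) * g x ∂μ) * ENNReal.ofReal (t ^ (-1 - s)) =
      ∫⁻ x, φ (t * a x) * g x * ENNReal.ofReal (t ^ (-1 - s)) ∂μ := fun t =>
    (lintegral_mul_const' _ _ ENNReal.ofReal_ne_top).symm
  simp_rw [h1]
  rw [lintegral_lintegral_swap hmeas.aemeasurable, ← lintegral_const_mul _ (by fun_prop)]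
  congr 1
  ext x
  have h2 : ∀ t : ℝ, φ (t * a x) * g x * ENNReal.ofReal (t ^ (-1 - s)) =
      g x * (φ (t * a x) * ENNReal.ofReal (t ^ (-1 - s))) := fun t => by ring
  simp_rw [h2]
  have h3 : Measurable fun t : ℝ => φ (t * a x) * ENNReal.ofReal (t ^ (-1 - s)) :=
    (hφm.comp (by fun_prop)).mul (by fun_prop)
  rw [lintegral_const_mul _ h3,
    lintegral_Ioi_comp_mul_rpow φ hs hφ (ha x)]
  ring

/-- **Fractional Hardy inequality**, on the Fourier side. -/
theorem exists_lintegral_FT_hardy (hn : 1 ≤ n) {s : ℝ} (hs : 0 < s) (hsn : s < n) :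
    ∃ C : ENNReal, C ≠ ⊤ ∧ ∀ f : EuclideanSpace ℝ (Fin n) → ℂ, Continuous f → Integrable f →
      MemLp f 2 → ∫⁻ ξ, ENNReal.ofReal (‖ξ‖⁻¹ ^ s) * ‖FT n f ξ‖ₑ ^ 2 ≤
        C * ∫⁻ x, ENNReal.ofReal (‖x‖ ^ s) * ‖f x‖ₑ ^ 2 := by
  obtain ⟨b, hsb, hbn⟩ := exists_between hsn
  have hK := lintegral_indicator_closedBall_rpow_lt_top hn hbn
  have hc2 := lintegral_Ioi_indicator_Iic_rpow_lt_top hsb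
  have hc1 := lintegral_Ioi_indicator_rpow hs
  set c₁ := ∫⁻ t in Set.Ioi 0, (Set.Ioi (1 : ℝ)).indicator (1 : ℝ → ENNReal) t *
    ENNReal.ofReal (t ^ (-1 - s))
  set c₂ := ∫⁻ t in Set.Ioi 0, (Set.Iic (1 : ℝ)).indicator (fun t => ENNReal.ofReal (t ^ b)) t *
      ENNReal.ofReal (t ^ (-1 - s))
  set A := volume (Metric.ball (0 : EuclideanSpace ℝ (Fin n)) 1) *
        ∫⁻ x : EuclideanSpace ℝ (Fin n), (Metric.closedBall 0 1).indicator
          (fun x => ENNReal.ofReal (‖x‖ ^ (-b))) x with hA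
  have hAtop : A ≠ ⊤ := ENNReal.mul_ne_top measure_ball_lt_top.ne hK.ne
  have hc1top : c₁ ≠ ⊤ := by rw [hc1]; exact ENNReal.ofReal_ne_top
  have hc1zero : c₁ ≠ 0 := by
    rw [hc1, Ne, ENNReal.ofReal_eq_zero, not_le]
    positivity
  refine ⟨c₁⁻¹ * (2 * c₁ + 2 * A * c₂), ENNReal.mul_ne_top (ENNReal.inv_ne_top.2 hc1zero)
    (ENNReal.add_ne_top.2 ⟨ENNReal.mul_ne_top (by simp) hc1top,
      ENNReal.mul_ne_top (ENNReal.mul_ne_top (by simp) hAtop) hc2.ne⟩), ?_⟩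
  intro f hfc hf1 hf2
  set φ₁ : ℝ → ENNReal := (Set.Ioi (1 : ℝ)).indicator 1 with hφ₁
  set φ₂ : ℝ → ENNReal := (Set.Iic (1 : ℝ)).indicator (fun t => ENNReal.ofReal (t ^ b)) with hφ₂
  have hφ₁m : Measurable φ₁ := measurable_one.indicator measurableSet_Ioi
  have hφ₂m : Measurable φ₂ := Measurable.indicator (by fun_prop) measurableSet_Iic
  have hφ₁0 : φ₁ 0 = 0 := by simp [hφ₁]
  have hφ₂0 : φ₂ 0 = 0 := by simp [hφ₂, Real.zero_rpow (hs.trans hsb).ne']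
  have hfm : Measurable fun x => ‖f x‖ₑ ^ 2 := hfc.measurable.enorm.pow_const 2
  have hFm : Measurable fun ξ => ‖FT n f ξ‖ₑ ^ 2 :=
    (continuous_FT hf1).measurable.enorm.pow_const 2
  have e1 := lintegral_Ioi_lintegral_comp_mul_rpow (μ := volume) hφ₁m hφ₁0 hs
    (a := fun ξ : EuclideanSpace ℝ (Fin n) => ‖ξ‖⁻¹) (by fun_prop) (fun _ => by positivity) hFm
  have e2 := lintegral_Ioi_lintegral_comp_mul_rpow (μ := volume) hφ₁m hφ₁0 hs
    (a := fun ξ : EuclideanSpace ℝ (Fin n) => ‖ξ‖) (by fun_prop) (fun _ => by positivity) hfm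
  have e3 := lintegral_Ioi_lintegral_comp_mul_rpow (μ := volume) hφ₂m hφ₂0 hs
    (a := fun ξ : EuclideanSpace ℝ (Fin n) => ‖ξ‖) (by fun_prop) (fun _ => by positivity) hfm
  set I := ∫⁻ x, ENNReal.ofReal (‖x‖ ^ s) * ‖f x‖ₑ ^ 2
  set J := ∫⁻ ξ, ENNReal.ofReal (‖ξ‖⁻¹ ^ s) * ‖FT n f ξ‖ₑ ^ 2
  have key : c₁ * J ≤ 2 * (c₁ * I) + 2 * A * (c₂ * I) := by
    rw [← e1, ← e2, ← e3, ← lintegral_const_mul' _ _ (by simp),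
      ← lintegral_const_mul' _ _ (ENNReal.mul_ne_top (by simp) hAtop), ← lintegral_add_left]
    · refine setLIntegral_mono' measurableSet_Ioi fun t ht => ?_
      rw [← mul_assoc, ← mul_assoc, ← add_mul]
      gcongr
      exact lintegral_FT_ball_le hn b ht hf1 hf2
    · refine Measurable.const_mul (Measurable.mul (Measurable.lintegral_prod_right'
        (f := fun p : ℝ × EuclideanSpace ℝ (Fin n) => φ₁ (p.1 * ‖p.2‖) * ‖f p.2‖ₑ ^ 2) ?_)
        (by fun_prop)) _
      exact (hφ₁m.comp (by fun_prop)).mul (hfm.comp measurable_snd)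
  calc J = c₁⁻¹ * (c₁ * J) := by
        rw [← mul_assoc, ENNReal.inv_mul_cancel hc1zero hc1top, one_mul]
    _ ≤ c₁⁻¹ * (2 * (c₁ * I) + 2 * A * (c₂ * I)) := by gcongr
    _ = _ := by ring

end Hardy

section Homogeneous

variable {E : Type*} [NormedAddCommGroup E] [NormedSpace ℝ E] [FiniteDimensional ℝ E]

theorem exists_bound_of_homogeneous {q : E → ℂ} (hq : ContinuousOn q {(0 : E)}ᶜ)
    (hq_hom : ∀ t : ℝ, 0 < t → ∀ ξ, q (t • ξ) = q ξ) : ∃ M, 0 ≤ M ∧ ∀ ξ, ‖q ξ‖ ≤ M := by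
  have hsub : Metric.sphere (0 : E) 1 ⊆ {(0 : E)}ᶜ := fun ξ hξ h0 => by
    simp [Set.mem_singleton_iff.1 h0] at hξ
  obtain ⟨M, hM⟩ := (isCompact_sphere (0 : E) 1).exists_bound_of_continuousOn (hq.mono hsub)
  refine ⟨max M ‖q 0‖, (norm_nonneg _).trans (le_max_right _ _), fun ξ => ?_⟩
  rcases eq_or_ne ξ 0 with rfl | hξ
  · exact le_max_right _ _
  · rw [← hq_hom ‖ξ‖⁻¹ (by positivity) ξ]
    refine (hM _ ?_).trans (le_max_left _ _)
    rw [mem_sphere_zero_iff_norm, norm_smul, norm_inv, norm_norm,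
      inv_mul_cancel₀ (norm_ne_zero_iff.2 hξ)]

theorem exists_lipschitz_of_homogeneous {q : E → ℂ} (hq : ContDiffOn ℝ 1 q {(0 : E)}ᶜ)
    (hq_hom : ∀ t : ℝ, 0 < t → ∀ ξ, q (t • ξ) = q ξ) :
    ∃ M, 0 ≤ M ∧ (∀ ξ, ‖q ξ‖ ≤ M) ∧
      ∀ ξ h, ξ ≠ 0 → ‖q (ξ + h) - q ξ‖ ≤ 2 * M * min 1 (‖h‖ * ‖ξ‖⁻¹) := by
  obtain ⟨M, hM0, hM⟩ := exists_bound_of_homogeneous hq.continuousOn hq_hom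
  have hopen : IsOpen ({(0 : E)}ᶜ) := isOpen_compl_singleton
  set K : Set E := Metric.closedBall 0 2 \ Metric.ball 0 (1 / 2) with hK
  have hKc : IsCompact K := (isCompact_closedBall 0 2).diff Metric.isOpen_ball
  have hK0 : K ⊆ {(0 : E)}ᶜ := fun ξ hξ h0 => by
    simp [hK, Set.mem_singleton_iff.1 h0] at hξ
  obtain ⟨L, hL⟩ := hKc.exists_bound_of_continuousOn
    ((hq.continuousOn_fderiv_of_isOpen hopen le_rfl).mono hK0)
  have hunit : ∀ ξ h : E, ‖ξ‖ = 1 → ‖q (ξ + h) - q ξ‖ ≤ max (4 * M) L * ‖h‖ := by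
    intro ξ h hξ
    by_cases hh : ‖h‖ < 1 / 2
    · have hball : Metric.ball ξ (1 / 2) ⊆ K := by
        intro η hη
        rw [mem_ball_iff_norm] at hη
        have h1 := norm_sub_norm_le η ξ
        have h2 := norm_sub_norm_le ξ η
        rw [norm_sub_rev ξ η] at h2
        simp only [hK, Set.mem_sdiff, mem_closedBall_zero_iff, mem_ball_zero_iff, not_lt]
        constructor <;> linarith
      have := (convex_ball ξ (1 / 2)).norm_image_sub_le_of_norm_fderiv_le (𝕜 := ℝ) (f := q) (C := L)
        (x := ξ) (y := ξ + h)
        (fun η hη => ((hq.differentiableOn one_ne_zero).differentiableAt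
          (hopen.mem_nhds (hK0 (hball hη))))) (fun η hη => hL η (hball hη))
        (Metric.mem_ball_self (by norm_num)) (by simpa [mem_ball_iff_norm] using hh)
      rw [add_sub_cancel_left] at this
      exact this.trans (by gcongr; exact le_max_right _ _)
    · rw [not_lt] at hh
      have h4 : 4 * M ≤ max (4 * M) L := le_max_left _ _
      calc ‖q (ξ + h) - q ξ‖ ≤ M + M := (norm_sub_le _ _).trans (add_le_add (hM _) (hM _))
        _ ≤ max (4 * M) L * (1 / 2) := by linarith
        _ ≤ _ := by gcongr
  refine ⟨max (4 * M) L, by positivity, fun ξ => (hM ξ).trans ?_, fun ξ h hξ => ?_⟩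
  · exact le_trans (by linarith) (le_max_left _ _)
  · have hξ0 : 0 < ‖ξ‖⁻¹ := by positivity
    have hA0 : 0 ≤ max (4 * M) L := by positivity
    rcases min_cases 1 (‖h‖ * ‖ξ‖⁻¹) with ⟨hm, -⟩ | ⟨hm, -⟩ <;> rw [hm]
    · have h4 : 4 * M ≤ max (4 * M) L := le_max_left _ _
      calc ‖q (ξ + h) - q ξ‖ ≤ M + M := (norm_sub_le _ _).trans (add_le_add (hM _) (hM _))
        _ ≤ _ := by linarith
    · have := hunit (‖ξ‖⁻¹ • ξ) (‖ξ‖⁻¹ • h) (by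
        rw [norm_smul, norm_inv, norm_norm, inv_mul_cancel₀ (norm_ne_zero_iff.2 hξ)])
      rw [← smul_add, hq_hom _ hξ0, hq_hom _ hξ0, norm_smul, norm_inv, norm_norm] at this
      have h5 : 0 ≤ max (4 * M) L * (‖h‖ * ‖ξ‖⁻¹) := by positivity
      linarith

end Homogeneous

section SingularIntegral

/-- `|e^{it} - 1|²` as an extended nonnegative real. -/
def expDiffSq (t : ℝ) : ENNReal := ENNReal.ofReal ((2 * Real.sin (t / 2)) ^ 2)

/-- `min(1, t)²` as an extended nonnegative real. -/
def minOneSq (t : ℝ) : ENNReal := ENNReal.ofReal ((min 1 t) ^ 2)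

theorem measurable_expDiffSq : Measurable expDiffSq := by unfold expDiffSq; fun_prop

theorem measurable_minOneSq : Measurable minOneSq := by unfold minOneSq; fun_prop

theorem enorm_exp_sub_one_sq (t : ℝ) :
    ‖Complex.exp (-Complex.I * (t : ℂ)) - 1‖ₑ ^ 2 = expDiffSq |t| := by
  have h := Complex.norm_exp_I_mul_ofReal_sub_one (-t)
  rw [ofReal_neg, mul_neg, ← neg_mul] at h
  rw [← ofReal_norm, h, Real.norm_eq_abs, ← ENNReal.ofReal_pow (abs_nonneg _), sq_abs, expDiffSq]
  congr 1
  rcases abs_cases t with ⟨ht, -⟩ | ⟨ht, -⟩ <;> rw [ht]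
  rw [neg_div, Real.sin_neg]
  ring

theorem expDiffSq_le {t : ℝ} (ht : 0 ≤ t) : expDiffSq t ≤ 4 * minOneSq t := by
  rw [expDiffSq, minOneSq, show (4 : ENNReal) = ENNReal.ofReal 4 by simp,
    ← ENNReal.ofReal_mul (by norm_num)]
  apply ENNReal.ofReal_le_ofReal
  have h0 : 0 ≤ min 1 t := le_min zero_le_one ht
  have h1 : |Real.sin (t / 2)| ≤ min 1 t :=
    le_min (Real.abs_sin_le_one _) (Real.abs_sin_le_abs.trans (by
      rw [abs_of_nonneg (by positivity)]; linarith))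
  have h2 := pow_le_pow_left₀ (abs_nonneg _) h1 2
  rw [sq_abs] at h2
  linarith

theorem expDiffSq_le_sq (t : ℝ) : expDiffSq t ≤ ENNReal.ofReal (t ^ 2) := by
  apply ENNReal.ofReal_le_ofReal
  have h2 := pow_le_pow_left₀ (abs_nonneg _) (Real.abs_sin_le_abs (x := t / 2)) 2
  rw [sq_abs, sq_abs] at h2
  linarith

theorem minOneSq_le_sq {t : ℝ} (ht : 0 ≤ t) : minOneSq t ≤ ENNReal.ofReal (t ^ 2) := by
  apply ENNReal.ofReal_le_ofReal
  exact pow_le_pow_left₀ (le_min zero_le_one ht) (min_le_right _ _) 2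

theorem lintegral_minOneSq_lt_top {s : ℝ} (hs : 0 < s) (hs2 : s < 2) :
    ∫⁻ t in Set.Ioi 0, minOneSq t * ENNReal.ofReal (t ^ (-1 - s)) < ⊤ := by
  have h1 := lintegral_Ioi_indicator_rpow hs
  have h2 := lintegral_Ioi_indicator_Iic_rpow_lt_top hs2
  have h3 : ∀ t ∈ Set.Ioi (0 : ℝ), minOneSq t * ENNReal.ofReal (t ^ (-1 - s)) ≤
      (Set.Ioi (1 : ℝ)).indicator 1 t * ENNReal.ofReal (t ^ (-1 - s)) +
      (Set.Iic (1 : ℝ)).indicator (fun t => ENNReal.ofReal (t ^ (2 : ℝ))) t *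
        ENNReal.ofReal (t ^ (-1 - s)) := by
    intro t ht
    rw [← add_mul]
    gcongr
    rcases le_or_gt t 1 with h | h
    · have h' : t ∉ Set.Ioi (1 : ℝ) := not_lt.2 h
      rw [Set.indicator_of_notMem h', Set.indicator_of_mem (by exact h), zero_add, Real.rpow_two]
      exact minOneSq_le_sq (le_of_lt ht)
    · have h' : t ∉ Set.Iic (1 : ℝ) := not_le.2 h
      rw [Set.indicator_of_notMem h', Set.indicator_of_mem (by exact h), add_zero, minOneSq,
        min_eq_left h.le]
      simp
  refine (setLIntegral_mono' measurableSet_Ioi h3).trans_lt ?_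
  have h4 : Measurable fun t : ℝ => (Set.Ioi (1 : ℝ)).indicator (1 : ℝ → ENNReal) t *
      ENNReal.ofReal (t ^ (-1 - s)) :=
    (measurable_one.indicator measurableSet_Ioi).mul (by fun_prop)
  rw [lintegral_add_left h4, h1]
  exact ENNReal.add_lt_top.2 ⟨ENNReal.ofReal_lt_top, h2⟩

theorem lintegral_expDiffSq_pos (s : ℝ) :
    0 < ∫⁻ t in Set.Ioi 0, expDiffSq t * ENNReal.ofReal (t ^ (-1 - s)) := by
  have hm : Measurable fun t : ℝ => expDiffSq t * ENNReal.ofReal (t ^ (-1 - s)) :=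
    measurable_expDiffSq.mul (by fun_prop)
  rw [setLIntegral_pos_iff hm]
  refine lt_of_lt_of_le (by simp) (measure_mono (s := Set.Ioo (0 : ℝ) 1) ?_)
  intro t ⟨ht0, ht1⟩
  refine ⟨?_, ht0⟩
  have hsin : 0 < Real.sin (t / 2) :=
    Real.sin_pos_of_pos_of_lt_pi (by linarith) (by linarith [Real.pi_gt_three])
  have hpow : 0 < t ^ (-1 - s) := Real.rpow_pos_of_pos ht0 _
  rw [Function.mem_support]
  refine mul_ne_zero ?_ ?_
  · rw [expDiffSq, Ne, ENNReal.ofReal_eq_zero, not_le]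
    positivity
  · rwa [Ne, ENNReal.ofReal_eq_zero, not_le]

theorem tendsto_expDiffSq_div (a : ℝ) :
    Filter.Tendsto (fun k : ℕ => expDiffSq (1 / ((k : ℝ) + 1) * a) *
      ENNReal.ofReal (((k : ℝ) + 1) ^ 2)) Filter.atTop (nhds (ENNReal.ofReal (a ^ 2))) := by
  have h0 : HasDerivAt (fun t : ℝ => 2 * Real.sin (t * a / 2)) a 0 := by
    have h := ((((hasDerivAt_id (0 : ℝ)).mul_const a).div_const 2).sin).const_mul 2
    simpa [mul_div_cancel₀] using h
  have h1 := h0.tendsto_slope_zero_right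
  have h2 : Filter.Tendsto (fun k : ℕ => (1 / ((k : ℝ) + 1))) Filter.atTop
      (nhdsWithin 0 (Set.Ioi 0)) := by
    refine tendsto_nhdsWithin_iff.2 ⟨tendsto_one_div_add_atTop_nhds_zero_nat, ?_⟩
    exact Filter.Eventually.of_forall fun k => by
      simp only [Set.mem_Ioi]
      positivity
  have h3 := ENNReal.tendsto_ofReal ((h1.comp h2).pow 2)
  refine h3.congr fun k => ?_
  rw [expDiffSq, ← ENNReal.ofReal_mul (by positivity)]
  congr 1
  simp
  ring

theorem weighted_le_of_difference_le {α : Type*} [MeasurableSpace α] {μ : Measure α} [SFinite μ]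
    {s : ℝ} (hs : 0 < s) (hs2 : s ≤ 2) : ∃ C : ENNReal, C ≠ ⊤ ∧
    ∀ (a b : α → ℝ) (u v w : α → ENNReal) (A B : ENNReal), A ≠ ⊤ → B ≠ ⊤ →
      Measurable a → Measurable b → (∀ x, 0 ≤ a x) → (∀ x, 0 ≤ b x) →
      Measurable u → (∀ x, u x ≠ ⊤) → Measurable v → Measurable w →
      (∀ t > 0, ∫⁻ x, expDiffSq (t * a x) * u x ∂μ ≤
        A * (∫⁻ x, expDiffSq (t * a x) * v x ∂μ) + B * ∫⁻ x, minOneSq (t * b x) * w x ∂μ) →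
      ∫⁻ x, ENNReal.ofReal (a x ^ s) * u x ∂μ ≤
        C * (A * (∫⁻ x, ENNReal.ofReal (a x ^ s) * v x ∂μ) +
          B * ∫⁻ x, ENNReal.ofReal (b x ^ s) * w x ∂μ) := by
  have hz1 : expDiffSq 0 = 0 := by simp [expDiffSq]
  have hz2 : minOneSq 0 = 0 := by simp [minOneSq]
  rcases hs2.lt_or_eq with hs2 | rfl
  · have hc3 := lintegral_minOneSq_lt_top hs hs2
    have hc4 := lintegral_expDiffSq_pos s
    have hc43 : ∫⁻ t in Set.Ioi 0, expDiffSq t * ENNReal.ofReal (t ^ (-1 - s)) ≤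
        4 * ∫⁻ t in Set.Ioi 0, minOneSq t * ENNReal.ofReal (t ^ (-1 - s)) := by
      rw [← lintegral_const_mul' _ _ (by simp)]
      refine setLIntegral_mono' measurableSet_Ioi fun t ht => ?_
      rw [← mul_assoc]
      gcongr
      exact expDiffSq_le (le_of_lt ht)
    set c₃ := ∫⁻ t in Set.Ioi 0, minOneSq t * ENNReal.ofReal (t ^ (-1 - s))
    set c₄ := ∫⁻ t in Set.Ioi 0, expDiffSq t * ENNReal.ofReal (t ^ (-1 - s))
    have hc4top : c₄ ≠ ⊤ := ne_top_of_le_ne_top (ENNReal.mul_ne_top (by simp) hc3.ne) hc43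
    refine ⟨c₄⁻¹ * (c₄ + c₃), ENNReal.mul_ne_top (ENNReal.inv_ne_top.2 hc4.ne')
      (ENNReal.add_ne_top.2 ⟨hc4top, hc3.ne⟩), ?_⟩
    intro a b u v w A B hA hB ham hbm ha hb hu hutop hv hw h
    have e1 := lintegral_Ioi_lintegral_comp_mul_rpow (μ := μ) measurable_expDiffSq hz1 hs ham ha hu
    have e2 := lintegral_Ioi_lintegral_comp_mul_rpow (μ := μ) measurable_expDiffSq hz1 hs ham ha hv
    have e3 := lintegral_Ioi_lintegral_comp_mul_rpow (μ := μ) measurable_minOneSq hz2 hs hbm hb hw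
    set I := ∫⁻ x, ENNReal.ofReal (a x ^ s) * u x ∂μ
    set J := ∫⁻ x, ENNReal.ofReal (a x ^ s) * v x ∂μ
    set H := ∫⁻ x, ENNReal.ofReal (b x ^ s) * w x ∂μ
    have key : c₄ * I ≤ A * (c₄ * J) + B * (c₃ * H) := by
      rw [← e1, ← e2, ← e3, ← lintegral_const_mul' _ _ hA, ← lintegral_const_mul' _ _ hB,
        ← lintegral_add_left]
      · refine setLIntegral_mono' measurableSet_Ioi fun t ht => ?_
        rw [← mul_assoc, ← mul_assoc, ← add_mul]
        gcongr
        exact h t ht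
      · refine Measurable.const_mul (Measurable.mul (Measurable.lintegral_prod_right'
          (f := fun p : ℝ × α => expDiffSq (p.1 * a p.2) * v p.2) ?_) (by fun_prop)) _
        exact (measurable_expDiffSq.comp (by fun_prop)).mul (hv.comp measurable_snd)
    calc I = c₄⁻¹ * (c₄ * I) := by
          rw [← mul_assoc, ENNReal.inv_mul_cancel hc4.ne' hc4top, one_mul]
      _ ≤ c₄⁻¹ * (A * (c₄ * J) + B * (c₃ * H)) := by gcongr
      _ ≤ c₄⁻¹ * (A * ((c₄ + c₃) * J) + B * ((c₄ + c₃) * H)) := by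
        gcongr
        · exact le_self_add
        · exact le_add_self
      _ = _ := by ring
  · refine ⟨1, by simp, ?_⟩
    intro a b u v w A B hA hB ham hbm ha hb hu hutop hv hw h
    simp only [Real.rpow_two, one_mul]
    set R := A * (∫⁻ x, ENNReal.ofReal (a x ^ 2) * v x ∂μ) +
          B * ∫⁻ x, ENNReal.ofReal (b x ^ 2) * w x ∂μ with hR
    have hscale : ∀ (t : ℝ) (k : ℕ), ENNReal.ofReal ((1 / ((k : ℝ) + 1) * t) ^ 2) *
        ENNReal.ofReal (((k : ℝ) + 1) ^ 2) = ENNReal.ofReal (t ^ 2) := by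
      intro t k
      rw [← ENNReal.ofReal_mul (by positivity)]
      congr 1
      field_simp
    have hk : ∀ k : ℕ, ∫⁻ x, expDiffSq (1 / ((k : ℝ) + 1) * a x) *
        ENNReal.ofReal (((k : ℝ) + 1) ^ 2) * u x ∂μ ≤ R := by
      intro k
      have hpos : (0 : ℝ) < 1 / ((k : ℝ) + 1) := by positivity
      calc _ = ENNReal.ofReal (((k : ℝ) + 1) ^ 2) *
            ∫⁻ x, expDiffSq (1 / ((k : ℝ) + 1) * a x) * u x ∂μ := by
            rw [← lintegral_const_mul' _ _ ENNReal.ofReal_ne_top]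
            simp_rw [mul_comm (expDiffSq _) (ENNReal.ofReal _), mul_assoc]
        _ ≤ ENNReal.ofReal (((k : ℝ) + 1) ^ 2) *
            (A * (∫⁻ x, expDiffSq (1 / ((k : ℝ) + 1) * a x) * v x ∂μ) +
              B * ∫⁻ x, minOneSq (1 / ((k : ℝ) + 1) * b x) * w x ∂μ) := by
            gcongr
            exact h _ hpos
        _ = A * (∫⁻ x, ENNReal.ofReal (((k : ℝ) + 1) ^ 2) *
              (expDiffSq (1 / ((k : ℝ) + 1) * a x) * v x) ∂μ) +
            B * ∫⁻ x, ENNReal.ofReal (((k : ℝ) + 1) ^ 2) *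
              (minOneSq (1 / ((k : ℝ) + 1) * b x) * w x) ∂μ := by
            rw [lintegral_const_mul' _ _ ENNReal.ofReal_ne_top,
              lintegral_const_mul' _ _ ENNReal.ofReal_ne_top]
            ring
        _ ≤ R := by
            rw [hR]
            refine add_le_add (mul_le_mul' le_rfl (lintegral_mono fun x => ?_))
              (mul_le_mul' le_rfl (lintegral_mono fun x => ?_))
            · rw [← hscale (a x) k, ← mul_assoc, mul_comm (ENNReal.ofReal _)]
              gcongr
              exact expDiffSq_le_sq _
            · rw [← hscale (b x) k, ← mul_assoc, mul_comm (ENNReal.ofReal _)]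
              gcongr
              exact minOneSq_le_sq (mul_nonneg hpos.le (hb x))
    have hlim : ∀ x, Filter.Tendsto (fun k : ℕ => expDiffSq (1 / ((k : ℝ) + 1) * a x) *
        ENNReal.ofReal (((k : ℝ) + 1) ^ 2) * u x) Filter.atTop
        (nhds (ENNReal.ofReal (a x ^ 2) * u x)) := by
      exact fun x => ENNReal.Tendsto.mul_const (tendsto_expDiffSq_div (a x)) (Or.inr (hutop x))
    calc _ = ∫⁻ x, Filter.liminf (fun k : ℕ => expDiffSq (1 / ((k : ℝ) + 1) * a x) *
          ENNReal.ofReal (((k : ℝ) + 1) ^ 2) * u x) Filter.atTop ∂μ := by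
          congr 1
          ext x
          exact (hlim x).liminf_eq.symm
      _ ≤ Filter.liminf (fun k : ℕ => ∫⁻ x, expDiffSq (1 / ((k : ℝ) + 1) * a x) *
          ENNReal.ofReal (((k : ℝ) + 1) ^ 2) * u x ∂μ) Filter.atTop :=
          lintegral_liminf_le fun k =>
            ((measurable_expDiffSq.comp (by fun_prop)).mul_const _).mul hu
      _ ≤ R := by
          refine Filter.liminf_le_of_le (by isBoundedDefault) fun y hy => ?_
          obtain ⟨k, hyk⟩ := hy.exists
          exact hyk.trans (hk k)

end SingularIntegral

theorem aestronglyMeasurable_of_continuousOn_compl_singleton {n : ℕ} (hn : 1 ≤ n)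
    {q : EuclideanSpace ℝ (Fin n) → ℂ} (hq : ContinuousOn q {0}ᶜ) :
    AEStronglyMeasurable q volume := by
  have : Nonempty (Fin n) := ⟨⟨0, hn⟩⟩
  have h := hq.aestronglyMeasurable (μ := volume) (measurableSet_singleton 0).compl
  rwa [Measure.restrict_eq_self_of_ae_mem] at h
  exact compl_mem_ae_iff.2 (measure_singleton 0)

/-- The `L²` bound for differences of a multiplier acting on a function, in terms of differences of
the function and a Hardy-type term. -/
theorem lintegral_enorm_mul_add_sub_sq_le {n : ℕ} (hn : 1 ≤ n)
    {q F : EuclideanSpace ℝ (Fin n) → ℂ} {M : ℝ} (hM : 0 ≤ M) (hqM : ∀ ξ, ‖q ξ‖ ≤ M)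
    (hq : ∀ ξ h, ξ ≠ 0 → ‖q (ξ + h) - q ξ‖ ≤ 2 * M * min 1 (‖h‖ * ‖ξ‖⁻¹))
    (hF : Continuous F) (h : EuclideanSpace ℝ (Fin n)) :
    ∫⁻ ξ, ‖q (ξ + h) * F (ξ + h) - q ξ * F ξ‖ₑ ^ 2 ≤
      ENNReal.ofReal (2 * M ^ 2) * (∫⁻ ξ, ‖F (ξ + h) - F ξ‖ₑ ^ 2) +
      ENNReal.ofReal (8 * M ^ 2) * ∫⁻ ξ, minOneSq (‖h‖ * ‖ξ‖⁻¹) * ‖F ξ‖ₑ ^ 2 := by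
  have : Nonempty (Fin n) := ⟨⟨0, hn⟩⟩
  have hm1 : Measurable fun ξ => ‖F (ξ + h) - F ξ‖ₑ ^ 2 := by
    have : Continuous fun ξ => F (ξ + h) - F ξ := by fun_prop
    exact this.measurable.enorm.pow_const 2
  have hm2 : Measurable fun ξ : EuclideanSpace ℝ (Fin n) =>
      minOneSq (‖h‖ * ‖ξ‖⁻¹) * ‖F ξ‖ₑ ^ 2 :=
    (measurable_minOneSq.comp (by fun_prop)).mul (hF.measurable.enorm.pow_const 2)
  rw [← lintegral_const_mul _ hm1, ← lintegral_const_mul _ hm2,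
    ← lintegral_add_left (hm1.const_mul _)]
  have hae : ∀ᵐ ξ : EuclideanSpace ℝ (Fin n), ξ ≠ 0 := compl_mem_ae_iff.2 (measure_singleton 0)
  refine lintegral_mono_ae ?_
  filter_upwards [hae] with ξ hξ
  have e : q (ξ + h) * F (ξ + h) - q ξ * F ξ =
      q (ξ + h) * (F (ξ + h) - F ξ) + (q (ξ + h) - q ξ) * F ξ := by ring
  have h1 : ‖q (ξ + h)‖ₑ ≤ ENNReal.ofReal M := by
    rw [← ofReal_norm]
    exact ENNReal.ofReal_le_ofReal (hqM _)
  have h2 : ‖q (ξ + h) - q ξ‖ₑ ≤ ENNReal.ofReal (2 * M * min 1 (‖h‖ * ‖ξ‖⁻¹)) := by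
    rw [← ofReal_norm]
    exact ENNReal.ofReal_le_ofReal (hq _ _ hξ)
  rw [e]
  refine (enorm_add_sq_le _ _).trans ?_
  have e1 : ENNReal.ofReal (2 * M ^ 2) = 2 * ENNReal.ofReal M ^ 2 := by
    rw [ENNReal.ofReal_mul (by norm_num), ENNReal.ofReal_pow hM]
    norm_num
  have e2 : ENNReal.ofReal (8 * M ^ 2) * minOneSq (‖h‖ * ‖ξ‖⁻¹) =
      2 * ENNReal.ofReal (2 * M * min 1 (‖h‖ * ‖ξ‖⁻¹)) ^ 2 := by
    have h0 : 0 ≤ min 1 (‖h‖ * ‖ξ‖⁻¹) := by positivity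
    rw [minOneSq, ← ENNReal.ofReal_mul (by positivity), ← ENNReal.ofReal_pow (by positivity),
      show 8 * M ^ 2 * min 1 (‖h‖ * ‖ξ‖⁻¹) ^ 2 = 2 * (2 * M * min 1 (‖h‖ * ‖ξ‖⁻¹)) ^ 2 by ring,
      ENNReal.ofReal_mul (by norm_num), ENNReal.ofReal_ofNat]
  rw [← mul_assoc, e1, e2, enorm_mul, enorm_mul, mul_pow, mul_pow, ← mul_assoc, ← mul_assoc]
  gcongr

theorem inner_smul_single {n : ℕ} (x : EuclideanSpace ℝ (Fin n)) (t : ℝ) (i : Fin n) :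
    ⟪x, t • EuclideanSpace.single i (1 : ℝ)⟫ = t * x i := by
  rw [real_inner_smul_right, EuclideanSpace.inner_single_right]
  simp

theorem enorm_exp_inner_smul_single_sub_one_sq {n : ℕ} (x : EuclideanSpace ℝ (Fin n)) {t : ℝ}
    (ht : 0 < t) (i : Fin n) :
    ‖Complex.exp (-Complex.I *
      ((⟪x, t • EuclideanSpace.single i (1 : ℝ)⟫ : ℝ) : ℂ)) - 1‖ₑ ^ 2 = expDiffSq (t * |x i|) := by
  rw [enorm_exp_sub_one_sq, inner_smul_single, abs_mul, abs_of_pos ht]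

theorem lintegral_enorm_FT_add_sub_sq {n : ℕ} {f : EuclideanSpace ℝ (Fin n) → ℂ}
    (hf1 : Integrable f) (hf2 : MemLp f 2) {t : ℝ} (ht : 0 < t) (i : Fin n) :
    ∫⁻ ξ, ‖FT n f (ξ + t • EuclideanSpace.single i (1 : ℝ)) - FT n f ξ‖ₑ ^ 2 =
      ∫⁻ x, expDiffSq (t * |x i|) * ‖f x‖ₑ ^ 2 := by
  set h : EuclideanSpace ℝ (Fin n) := t • EuclideanSpace.single i (1 : ℝ) with hh
  have hc : Continuous fun x : EuclideanSpace ℝ (Fin n) =>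
      Complex.exp (-Complex.I * ((⟪x, h⟫ : ℝ) : ℂ)) - 1 := by fun_prop
  have hb : ∀ x : EuclideanSpace ℝ (Fin n),
      ‖Complex.exp (-Complex.I * ((⟪x, h⟫ : ℝ) : ℂ)) - 1‖ ≤ 2 := fun x => by
    refine (norm_sub_le _ _).trans ?_
    rw [neg_mul, ← mul_neg, ← Complex.ofReal_neg, mul_comm, Complex.norm_exp_ofReal_mul_I]
    norm_num
  have hg1 : Integrable fun x => (Complex.exp (-Complex.I * ((⟪x, h⟫ : ℝ) : ℂ)) - 1) * f x :=
    hf1.bdd_mul hc.aestronglyMeasurable (Filter.Eventually.of_forall hb)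
  have hg2 : MemLp (fun x => (Complex.exp (-Complex.I * ((⟪x, h⟫ : ℝ) : ℂ)) - 1) * f x) 2 := by
    refine hf2.of_le_mul (c := 2) hg1.aestronglyMeasurable (Filter.Eventually.of_forall fun x => ?_)
    rw [norm_mul]
    gcongr
    exact hb x
  have h1 := lintegral_enorm_FT_sq hg1 hg2
  simp only [FT_modulation_sub hf1, enorm_mul, mul_pow] at h1
  rw [h1]
  refine lintegral_congr fun x => ?_
  rw [hh, enorm_exp_inner_smul_single_sub_one_sq x ht]

theorem lintegral_expDiffSq_mul_IFT {n : ℕ} {G : EuclideanSpace ℝ (Fin n) → ℂ}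
    (hG1 : Integrable G) (hG2 : MemLp G 2) {t : ℝ} (ht : 0 < t) (i : Fin n) :
    ∫⁻ x, expDiffSq (t * |x i|) * ‖IFT n G x‖ₑ ^ 2 =
      ∫⁻ ξ, ‖G (ξ + t • EuclideanSpace.single i (1 : ℝ)) - G ξ‖ₑ ^ 2 := by
  set h : EuclideanSpace ℝ (Fin n) := t • EuclideanSpace.single i (1 : ℝ) with hh
  have hT : MemLp (fun ξ => G (ξ + h)) 2 :=
    hG2.comp_measurePreserving (measurePreserving_add_right volume h)
  refine Eq.trans (lintegral_congr fun x => ?_)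
    (lintegral_enorm_IFT_sq (F := fun ξ => G (ξ + h) - G ξ)
      ((hG1.comp_add_right h).sub hG1) (hT.sub hG2))
  rw [IFT_translation_sub hG1, enorm_mul, mul_pow, hh, enorm_exp_inner_smul_single_sub_one_sq x ht]

theorem one_add_norm_sq_rpow_le {n : ℕ} (x : EuclideanSpace ℝ (Fin n)) {δ : ℝ} (h0 : 0 < δ)
    (h1 : δ ≤ 1) : (1 + ‖x‖ ^ 2) ^ δ ≤ 1 + ∑ i, |x i| ^ (2 * δ) := by
  have key : ∀ S : Finset (Fin n),
      (1 + ∑ i ∈ S, |x i| ^ 2) ^ δ ≤ 1 + ∑ i ∈ S, |x i| ^ (2 * δ) := fun S => by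
    induction S using Finset.cons_induction with
    | empty => simp
    | cons i S hi ih =>
      rw [Finset.sum_cons, Finset.sum_cons, add_left_comm, add_left_comm (1 : ℝ)]
      refine (Real.rpow_add_le_add_rpow (by positivity) (by positivity) h0.le h1).trans ?_
      have e : (|x i| ^ 2) ^ δ = |x i| ^ (2 * δ) := by
        rw [Real.rpow_mul (abs_nonneg _)]
        norm_num
      rw [e]
      gcongr
  have e : ‖x‖ ^ 2 = ∑ i, |x i| ^ 2 := by
    rw [EuclideanSpace.norm_sq_eq]
    rfl
  rw [e]
  exact key _

theorem sqrt_one_add_norm_sq_rpow_sq {n : ℕ} (x : EuclideanSpace ℝ (Fin n)) (δ : ℝ) :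
    (Real.sqrt (1 + ‖x‖ ^ 2) ^ δ) ^ 2 = (1 + ‖x‖ ^ 2) ^ δ := by
  rw [Real.sqrt_eq_rpow, ← Real.rpow_natCast, ← Real.rpow_mul (by positivity),
    ← Real.rpow_mul (by positivity)]
  congr 1
  push_cast
  ring

theorem eLpNorm_weight_mul_sq {n : ℕ} (δ : ℝ) (g : EuclideanSpace ℝ (Fin n) → ℂ) :
    eLpNorm (fun x : EuclideanSpace ℝ (Fin n) =>
      ((Real.sqrt (1 + ‖x‖ ^ 2) ^ δ : ℝ) : ℂ) * g x) 2 volume ^ 2 =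
      ∫⁻ x, ENNReal.ofReal ((1 + ‖x‖ ^ 2) ^ δ) * ‖g x‖ₑ ^ 2 := by
  rw [eLpNorm_two_sq]
  refine lintegral_congr fun x => ?_
  rw [enorm_mul, mul_pow, ← sqrt_one_add_norm_sq_rpow_sq, ENNReal.ofReal_pow (by positivity),
    ← ofReal_norm (((Real.sqrt (1 + ‖x‖ ^ 2) ^ δ : ℝ) : ℂ)), Complex.norm_real,
    Real.norm_of_nonneg (by positivity)]

theorem weighted_bound_multiplier (n : ℕ) (hn : 2 ≤ n) (δ : ℝ) (hδ0 : 0 < δ)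
    (hδ1 : 3 ≤ n → δ ≤ 1) (hδ2 : n = 2 → δ < 1)
    (q : EuclideanSpace ℝ (Fin n) → ℂ)
    (hq_smooth : ContDiffOn ℝ (⊤ : ℕ∞) q {(0 : EuclideanSpace ℝ (Fin n))}ᶜ)
    (hq_hom : ∀ t : ℝ, 0 < t → ∀ ξ, q (t • ξ) = q ξ) :
    ∃ C > 0, ∀ f : SchwartzMap (EuclideanSpace ℝ (Fin n)) ℂ,
      eLpNorm (fun x : EuclideanSpace ℝ (Fin n) =>
          ((Real.sqrt (1 + ‖x‖ ^ 2) ^ (δ) : ℝ) : ℂ) * mult n q (fun y => f y) x) 2 volume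
        ≤ ENNReal.ofReal C *
            eLpNorm (fun x : EuclideanSpace ℝ (Fin n) => ((Real.sqrt (1 + ‖x‖ ^ 2) ^ (δ) : ℝ) : ℂ) * f x) 2 volume := by
  have hn1 : 1 ≤ n := by omega
  have hδ : δ ≤ 1 := by
    rcases hn.eq_or_lt with h | h
    · exact (hδ2 h.symm).le
    · exact hδ1 h
  have hδn : 2 * δ < n := by
    rcases hn.eq_or_lt with h | h
    · rw [← h]
      push_cast
      linarith [hδ2 h.symm]
    · have h3 : (3 : ℝ) ≤ n := by exact_mod_cast h
      linarith
  obtain ⟨M, hM, hqM, hqL⟩ :=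
    exists_lipschitz_of_homogeneous (hq_smooth.of_le (by exact_mod_cast le_top)) hq_hom
  obtain ⟨CH, hCH, hardy⟩ := exists_lintegral_FT_hardy hn1 (by positivity : 0 < 2 * δ) hδn
  obtain ⟨CW, hCW, weighted⟩ := weighted_le_of_difference_le
    (μ := (volume : Measure (EuclideanSpace ℝ (Fin n)))) (by positivity : 0 < 2 * δ) (by linarith)
  set A := ENNReal.ofReal (2 * M ^ 2) with hA
  set B := ENNReal.ofReal (8 * M ^ 2) with hB
  set K := ENNReal.ofReal M ^ 2 + ∑ _i : Fin n, CW * (A + B * CH) with hK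
  have hKtop : K ≠ ⊤ := by
    refine ENNReal.add_ne_top.2 ⟨ENNReal.pow_ne_top ENNReal.ofReal_ne_top, ?_⟩
    refine (ENNReal.sum_lt_top.2 fun _ _ => ?_).ne
    exact (ENNReal.mul_ne_top hCW (ENNReal.add_ne_top.2 ⟨ENNReal.ofReal_ne_top,
      ENNReal.mul_ne_top ENNReal.ofReal_ne_top hCH⟩)).lt_top
  refine ⟨K.toReal + 1, by positivity, fun f => ?_⟩
  have hf1 : Integrable (fun y => f y) volume := f.integrable
  have hf2 : MemLp (fun y => f y) 2 volume := f.memLp 2 volume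
  set F := FT n fun y => f y with hFdef
  have hFc : Continuous F := continuous_FT hf1
  have hF1 : Integrable F := integrable_FT_schwartz f
  have hF2 : MemLp F 2 := memLp_FT_schwartz f
  have hqm := aestronglyMeasurable_of_continuousOn_compl_singleton hn1 hq_smooth.continuousOn
  have hG1 : Integrable fun ξ => q ξ * F ξ := hF1.bdd_mul hqm (Filter.Eventually.of_forall hqM)
  have hG2 : MemLp (fun ξ => q ξ * F ξ) 2 := by
    refine hF2.of_le_mul (c := M) hG1.aestronglyMeasurable (Filter.Eventually.of_forall fun x => ?_)
    rw [norm_mul]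
    gcongr
    exact hqM x
  set g := mult n q fun y => f y with hg
  have hgc : Continuous g := continuous_IFT hG1
  have hgm : Measurable fun x => ‖g x‖ₑ ^ 2 := hgc.measurable.enorm.pow_const 2
  have hfm : Measurable fun x => ‖f x‖ₑ ^ 2 := f.continuous.measurable.enorm.pow_const 2
  set W := ∫⁻ x, ENNReal.ofReal ((1 + ‖x‖ ^ 2) ^ δ) * ‖f x‖ₑ ^ 2 with hW
  have hone : ∀ x : EuclideanSpace ℝ (Fin n), 1 ≤ (1 + ‖x‖ ^ 2) ^ δ := fun x =>
    Real.one_le_rpow (by nlinarith [sq_nonneg ‖x‖]) hδ0.le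
  have hnorm : ∀ x : EuclideanSpace ℝ (Fin n), ‖x‖ ^ (2 * δ) ≤ (1 + ‖x‖ ^ 2) ^ δ := fun x => by
    rw [Real.rpow_mul (norm_nonneg _), Real.rpow_two]
    exact Real.rpow_le_rpow (by positivity) (by linarith) hδ0.le
  have hcoord : ∀ (x : EuclideanSpace ℝ (Fin n)) i, |x i| ^ (2 * δ) ≤ (1 + ‖x‖ ^ 2) ^ δ :=
    fun x i => (Real.rpow_le_rpow (abs_nonneg _) (PiLp.norm_apply_le x i) (by positivity)).trans
      (hnorm x)
  have hzero : ∫⁻ x, ‖g x‖ₑ ^ 2 ≤ ENNReal.ofReal M ^ 2 * W := by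
    calc ∫⁻ x, ‖g x‖ₑ ^ 2 = ∫⁻ ξ, ‖q ξ * F ξ‖ₑ ^ 2 := lintegral_enorm_IFT_sq hG1 hG2
      _ ≤ ∫⁻ ξ, ENNReal.ofReal M ^ 2 * ‖F ξ‖ₑ ^ 2 := by
        refine lintegral_mono fun ξ => ?_
        rw [enorm_mul, mul_pow, ← ofReal_norm (q ξ)]
        gcongr
        exact hqM ξ
      _ = ENNReal.ofReal M ^ 2 * ∫⁻ x, ‖f x‖ₑ ^ 2 := by
        rw [lintegral_const_mul _ (hFc.measurable.enorm.pow_const 2),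
          lintegral_enorm_FT_sq hf1 hf2]
      _ ≤ ENNReal.ofReal M ^ 2 * W := by
        refine mul_le_mul_right (lintegral_mono fun x => ?_) _
        exact le_mul_of_one_le_left' (ENNReal.one_le_ofReal.2 (hone x))
  have hhardy : ∫⁻ ξ, ENNReal.ofReal (‖ξ‖⁻¹ ^ (2 * δ)) * ‖F ξ‖ₑ ^ 2 ≤ CH * W := by
    refine (hardy _ f.continuous hf1 hf2).trans ?_
    refine mul_le_mul_right (lintegral_mono fun x => ?_) _
    gcongr
    exact hnorm x
  have hdir : ∀ i : Fin n, ∫⁻ x, ENNReal.ofReal (|x i| ^ (2 * δ)) * ‖g x‖ₑ ^ 2 ≤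
      CW * (A + B * CH) * W := fun i => by
    refine (weighted (fun x => |x i|) (fun ξ => ‖ξ‖⁻¹) (fun x => ‖g x‖ₑ ^ 2)
      (fun x => ‖f x‖ₑ ^ 2) (fun ξ => ‖F ξ‖ₑ ^ 2) A B ENNReal.ofReal_ne_top ENNReal.ofReal_ne_top
      (by fun_prop) (by fun_prop) (fun _ => abs_nonneg _) (fun _ => by positivity) hgm
      (fun x => by finiteness) hfm (hFc.measurable.enorm.pow_const 2) fun t ht => ?_).trans ?_
    · have hnt : ‖t • EuclideanSpace.single i (1 : ℝ)‖ = t := by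
        simp [norm_smul, abs_of_pos ht]
      have hle := lintegral_enorm_mul_add_sub_sq_le hn1 hM hqM hqL hFc
        (t • EuclideanSpace.single i (1 : ℝ))
      rw [hnt, lintegral_enorm_FT_add_sub_sq hf1 hf2 ht i,
        ← lintegral_expDiffSq_mul_IFT hG1 hG2 ht i] at hle
      exact hle
    · rw [mul_assoc, add_mul, mul_assoc B]
      gcongr
      refine lintegral_mono fun x => ?_
      gcongr
      exact hcoord x i
  have hmain : ∫⁻ x, ENNReal.ofReal ((1 + ‖x‖ ^ 2) ^ δ) * ‖g x‖ₑ ^ 2 ≤ K * W := by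
    calc ∫⁻ x, ENNReal.ofReal ((1 + ‖x‖ ^ 2) ^ δ) * ‖g x‖ₑ ^ 2
        ≤ ∫⁻ x, (‖g x‖ₑ ^ 2 + ∑ i, ENNReal.ofReal (|x i| ^ (2 * δ)) * ‖g x‖ₑ ^ 2) := by
          refine lintegral_mono fun x => ?_
          rw [← Finset.sum_mul, ← one_add_mul, ← ENNReal.ofReal_one,
            ← ENNReal.ofReal_sum_of_nonneg fun _ _ => by positivity,
            ← ENNReal.ofReal_add zero_le_one (by positivity)]
          gcongr
          exact one_add_norm_sq_rpow_le x hδ0 hδ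
      _ = (∫⁻ x, ‖g x‖ₑ ^ 2) + ∑ i, ∫⁻ x, ENNReal.ofReal (|x i| ^ (2 * δ)) * ‖g x‖ₑ ^ 2 := by
          rw [lintegral_add_left hgm, lintegral_finsetSum]
          exact fun i _ => Measurable.mul (by fun_prop) hgm
      _ ≤ K * W := by
          rw [hK, add_mul, Finset.sum_mul]
          gcongr with i
          exact hdir i
  have hKle : K ≤ ENNReal.ofReal (K.toReal + 1) ^ 2 := by
    rw [← ENNReal.ofReal_pow (by positivity)]
    refine (ENNReal.le_ofReal_iff_toReal_le hKtop (by positivity)).2 ?_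
    nlinarith [K.toReal_nonneg]
  refine (ENNReal.pow_le_pow_left_iff two_ne_zero).1 ?_
  rw [mul_pow, eLpNorm_weight_mul_sq, eLpNorm_weight_mul_sq δ fun x => f x]
  exact hmain.trans (by gcongr)
end
end

section
/- Let n ≥ 2, m > 1 and δ > 1/2. There exists a constant C > 0 such that for all ζ ∈ ℂ∖ℝ and all Schwartz functions f, g on ℝⁿ, |( |p′(D_x)| (ζ − p(D_x))^{-1} f , g )_{L²(ℝⁿ)}| ≤ C ‖⟨x⟩^{δ} f‖_{L²(ℝⁿ)} ‖⟨x⟩^{δ} g‖_{L²(ℝⁿ)}; in particular the supremum over ζ ∈ ℂ∖ℝ of the left-hand side is finite and bounded by the right-hand side. -/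
open MeasureTheory Real Complex RealInnerProductSpace

noncomputable section

open scoped FourierTransform SchwartzMap ENNReal

set_option linter.unusedSectionVars false

section
variable {E F : Type*} [NormedAddCommGroup E] [InnerProductSpace ℝ E] [FiniteDimensional ℝ E]
  [MeasurableSpace E] [BorelSpace E]
  [NormedAddCommGroup F] [InnerProductSpace ℝ F] [FiniteDimensional ℝ F]
  [MeasurableSpace F] [BorelSpace F]

/-- The unnormalised Fourier integral with angular frequency. -/
def angFourier (f : E → ℂ) (ξ : E) : ℂ :=
  ∫ x, cexp (-I * ((⟪x, ξ⟫ : ℝ) : ℂ)) * f x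

theorem angFourier_eq_fourier (f : E → ℂ) (ξ : E) :
    angFourier f ξ = 𝓕 f ((2 * π)⁻¹ • ξ) := by
  rw [angFourier, Real.fourier_eq']
  refine integral_congr_ae (.of_forall fun x => ?_)
  simp only [smul_eq_mul, inner_smul_right]
  congr 2
  push_cast
  have : (π : ℂ) ≠ 0 := by exact_mod_cast pi_ne_zero
  field_simp

theorem lintegral_enorm_sq_angFourier (h : 𝓢(E, ℂ)) :
    ∫⁻ ξ, ‖angFourier h ξ‖ₑ ^ 2 =
      ENNReal.ofReal ((2 * π) ^ Module.finrank ℝ E) * ∫⁻ x, ‖h x‖ₑ ^ 2 := by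
  have key : ∀ k : 𝓢(E, ℂ), ∫⁻ x, ‖k x‖ₑ ^ 2 = ENNReal.ofReal (∫ x, ‖k x‖ ^ 2) := by
    intro k
    rw [ofReal_integral_eq_lintegral_ofReal]
    · refine lintegral_congr fun x => ?_
      rw [ENNReal.ofReal_pow (norm_nonneg _), ofReal_norm]
    · exact (memLp_two_iff_integrable_sq_norm k.continuous.aestronglyMeasurable).1 (k.memLp 2)
    · exact .of_forall fun x => by positivity
  have h1 : ∀ ξ, angFourier h ξ = (𝓕 h) ((2 * π)⁻¹ • ξ) := fun ξ => by
    rw [angFourier_eq_fourier, SchwartzMap.fourier_coe]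
  simp_rw [h1]
  have hr : (2 * π)⁻¹ ≠ 0 := by positivity
  have h2 := lintegral_map (μ := (volume : Measure E)) (f := fun x => ‖(𝓕 h) x‖ₑ ^ 2)
    (g := fun x => (2 * π)⁻¹ • x) (by fun_prop) (measurable_const_smul _)
  rw [← h2, Measure.map_addHaar_smul _ hr, lintegral_smul_measure, key, key,
    SchwartzMap.integral_norm_sq_fourier, abs_of_pos (by positivity)]
  rw [smul_eq_mul, inv_pow, inv_inv]

theorem integrable_exp_mul_prod {h A : ℝ → ℂ} (hh : Integrable h) (hA : Integrable A) (σ x : ℝ) :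
    Integrable (Function.uncurry fun s t : ℝ =>
      cexp (I * (x + σ * t : ℝ) * s) * (h s * A t)) (volume.prod volume) := by
  refine (hh.mul_prod hA).bdd_mul (c := 1) ?_ ?_
  · exact (by fun_prop : Continuous fun z : ℝ × ℝ =>
      cexp (I * (x + σ * z.2 : ℝ) * z.1)).aestronglyMeasurable
  · refine .of_forall fun z => ?_
    rw [show I * ((x + σ * z.2 : ℝ) : ℂ) * z.1 = ((x + σ * z.2) * z.1 : ℝ) * I by
      push_cast; ring, Complex.norm_exp_ofReal_mul_I]

theorem integrable_mul_fourier {h A : ℝ → ℂ} (hh : Integrable h) (hA : Integrable A) (σ : ℝ) :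
    Integrable fun s : ℝ => h s * ∫ t : ℝ, cexp (I * (σ * t : ℝ) * s) * A t := by
  refine (integrable_exp_mul_prod hh hA σ 0).integral_prod_left.congr (.of_forall fun s => ?_)
  simp only [Function.uncurry_apply_pair, zero_add]
  rw [← integral_const_mul]
  refine integral_congr_ae (.of_forall fun t => ?_)
  simp only
  ring

theorem integral_exp_mul_mul_fourier {h A : ℝ → ℂ} (hh : Integrable h) (hA : Integrable A)
    (σ x : ℝ) :
    ∫ s : ℝ, cexp (I * x * s) * (h s * ∫ t : ℝ, cexp (I * (σ * t : ℝ) * s) * A t) =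
      ∫ t : ℝ, (∫ s : ℝ, cexp (I * (x + σ * t : ℝ) * s) * h s) * A t := by
  have h1 : ∀ s : ℝ, cexp (I * x * s) * (h s * ∫ t : ℝ, cexp (I * (σ * t : ℝ) * s) * A t) =
      ∫ t : ℝ, cexp (I * (x + σ * t : ℝ) * s) * (h s * A t) := fun s => by
    rw [← integral_const_mul, ← integral_const_mul]
    refine integral_congr_ae (.of_forall fun t => ?_)
    have : cexp (I * (x + σ * t : ℝ) * s) = cexp (I * x * s) * cexp (I * (σ * t : ℝ) * s) := by
      rw [← Complex.exp_add]; congr 1; push_cast; ring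
    simp only [this]; ring
  simp_rw [h1]
  rw [integral_integral_swap (integrable_exp_mul_prod hh hA σ x)]
  refine integral_congr_ae (.of_forall fun t => ?_)
  simp only
  rw [← integral_mul_const]
  simp only [mul_assoc]

theorem norm_integral_exp_mul_mul_fourier_le {h A : ℝ → ℂ} (hh : Integrable h) (hA : Integrable A)
    {K : ℝ} (hK : ∀ x : ℝ, ‖∫ s : ℝ, cexp (I * x * s) * h s‖ ≤ K) (σ x : ℝ) :
    ‖∫ s : ℝ, cexp (I * x * s) * (h s * ∫ t : ℝ, cexp (I * (σ * t : ℝ) * s) * A t)‖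
      ≤ K * ∫ t, ‖A t‖ := by
  rw [integral_exp_mul_mul_fourier hh hA, ← integral_const_mul]
  refine norm_integral_le_of_norm_le (hA.norm.const_mul K) (.of_forall fun t => ?_)
  rw [norm_mul]
  gcongr
  exact hK _

/-- The partial Fourier integral of `f` in the second variable of the splitting `J`. -/
def partialFourier (J : WithLp 2 (ℝ × F) ≃ₗᵢ[ℝ] E) (f : E → ℂ) (x : ℝ) (y : F) : ℂ :=
  angFourier (fun z => f (J (WithLp.toLp 2 (x, z)))) y

variable (J : WithLp 2 (ℝ × F) ≃ₗᵢ[ℝ] E)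

theorem measurePreserving_splitting :
    MeasurePreserving (fun z : ℝ × F => J (WithLp.toLp 2 z)) :=
  J.measurePreserving.comp (WithLp.volume_preserving_toLp ℝ F)

theorem measurableEmbedding_splitting :
    MeasurableEmbedding (fun z : ℝ × F => J (WithLp.toLp 2 z)) :=
  J.toMeasurableEquiv.measurableEmbedding.comp
    (MeasurableEquiv.toLp 2 (ℝ × F)).measurableEmbedding

theorem continuous_splitting : Continuous (fun z : ℝ × F => J (WithLp.toLp 2 z)) := by
  fun_prop

theorem inner_splitting (s t : ℝ) (y z : F) :
    ⟪J (WithLp.toLp 2 (s, y)), J (WithLp.toLp 2 (t, z))⟫ = s * t + ⟪y, z⟫ := by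
  rw [LinearIsometryEquiv.inner_map_map, WithLp.prod_inner_apply]
  simp [mul_comm]

theorem norm_sq_splitting (s : ℝ) (y : F) :
    ‖J (WithLp.toLp 2 (s, y))‖ ^ 2 = s ^ 2 + ‖y‖ ^ 2 := by
  rw [← real_inner_self_eq_norm_sq, inner_splitting, real_inner_self_eq_norm_sq]; ring

theorem integrable_phase_splitting {f : E → ℂ} (hf : Integrable f) (s : ℝ) (y : F) :
    Integrable (fun z : ℝ × F => cexp (-I * ((z.1 * s + ⟪z.2, y⟫ : ℝ) : ℂ)) *
      f (J (WithLp.toLp 2 z))) (volume.prod volume) := by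
  refine Integrable.bdd_mul (c := 1)
    ((measurePreserving_splitting J).integrable_comp_of_integrable hf) ?_ ?_
  · exact (by fun_prop : Continuous fun z : ℝ × F =>
      cexp (-I * ((z.1 * s + ⟪z.2, y⟫ : ℝ) : ℂ))).aestronglyMeasurable
  · refine .of_forall fun z => ?_
    rw [show -I * ((z.1 * s + ⟪z.2, y⟫ : ℝ) : ℂ) = ((-(z.1 * s + ⟪z.2, y⟫) : ℝ) : ℂ) * I by
      push_cast; ring, Complex.norm_exp_ofReal_mul_I]

theorem integrable_partialFourier {f : E → ℂ} (hf : Integrable f) (y : F) :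
    Integrable (fun x => partialFourier J f x y) := by
  have := (integrable_phase_splitting J hf 0 y).integral_prod_left
  simpa [partialFourier, angFourier] using this

theorem angFourier_splitting {f : E → ℂ} (hf : Integrable f) (s : ℝ) (y : F) :
    angFourier f (J (WithLp.toLp 2 (s, y))) =
      ∫ x : ℝ, cexp (I * (-1 * x : ℝ) * s) * partialFourier J f x y := by
  rw [angFourier, ← (measurePreserving_splitting J).integral_comp (measurableEmbedding_splitting J)]
  have h := integral_prod _ (integrable_phase_splitting J hf s y)
  have hz : ∀ z : ℝ × F, ⟪J (WithLp.toLp 2 z), J (WithLp.toLp 2 (s, y))⟫ = z.1 * s + ⟪z.2, y⟫ :=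
    fun z => inner_splitting J z.1 s z.2 y
  simp_rw [hz]
  refine h.trans (integral_congr_ae (.of_forall fun x => ?_))
  simp only [partialFourier, angFourier]
  rw [← integral_const_mul]
  refine integral_congr_ae (.of_forall fun z => ?_)
  simp only [← mul_assoc]
  rw [← Complex.exp_add]
  congr 2
  push_cast; ring

theorem lintegral_enorm_sq_partialFourier (f : 𝓢(E, ℂ)) (x : ℝ) :
    ∫⁻ y, ‖partialFourier J f x y‖ₑ ^ 2 = ENNReal.ofReal ((2 * π) ^ Module.finrank ℝ F) *
      ∫⁻ z, ‖f (J (WithLp.toLp 2 (x, z)))‖ₑ ^ 2 := by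
  have hg : Function.HasTemperateGrowth (fun z : F => J (WithLp.toLp 2 (x, z))) := by
    have : (fun z : F => J (WithLp.toLp 2 (x, z))) = fun z : F =>
        J (WithLp.toLp 2 (x, (0 : F))) + (J.toContinuousLinearEquiv.toContinuousLinearMap ∘L
          (WithLp.prodContinuousLinearEquiv 2 ℝ ℝ F).symm.toContinuousLinearMap ∘L
          ContinuousLinearMap.inr ℝ ℝ F) z := by
      ext z
      simp only [ContinuousLinearMap.comp_apply, ContinuousLinearMap.inr_apply]
      change _ = J (WithLp.toLp 2 (x, (0 : F))) + J (WithLp.toLp 2 ((0 : ℝ), z))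
      rw [← map_add, ← WithLp.toLp_add]
      simp
    rw [this]
    fun_prop
  have hup : ∃ (k : ℕ) (C : ℝ), ∀ z : F, ‖z‖ ≤ C * (1 + ‖J (WithLp.toLp 2 (x, z))‖) ^ k := by
    refine ⟨1, 1, fun z => ?_⟩
    have := norm_sq_splitting J x z
    have h2 : ‖z‖ ≤ ‖J (WithLp.toLp 2 (x, z))‖ :=
      abs_le_of_sq_le_sq' (by nlinarith [sq_nonneg x]) (norm_nonneg _) |>.2
    linarith
  exact lintegral_enorm_sq_angFourier (SchwartzMap.compCLM ℝ hg hup f)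

theorem sq_lintegral_mul_le {α : Type*} [MeasurableSpace α] {μ : Measure α} {u v : α → ℝ≥0∞}
    (hu : AEMeasurable u μ) (hv : AEMeasurable v μ) :
    (∫⁻ x, u x * v x ∂μ) ^ 2 ≤ (∫⁻ x, u x ^ 2 ∂μ) * ∫⁻ x, v x ^ 2 ∂μ := by
  have h := ENNReal.lintegral_mul_le_Lp_mul_Lq μ Real.HolderConjugate.two_two hu hv
  calc (∫⁻ x, u x * v x ∂μ) ^ 2
      ≤ ((∫⁻ x, u x ^ (2 : ℝ) ∂μ) ^ (1 / 2 : ℝ) * (∫⁻ x, v x ^ (2 : ℝ) ∂μ) ^ (1 / 2 : ℝ)) ^ 2 := by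
        gcongr; exact h
    _ = _ := by
        rw [mul_pow, ← ENNReal.rpow_natCast, ← ENNReal.rpow_natCast, ← ENNReal.rpow_mul,
          ← ENNReal.rpow_mul]
        norm_num

/-- The square of the `L²` norm of `⟨x⟩^{-δ}` on the line. -/
def bracketConst (δ : ℝ) : ℝ≥0∞ :=
  ∫⁻ x : ℝ, ENNReal.ofReal ((√(1 + x ^ 2) ^ δ)⁻¹) ^ 2

theorem sqrt_rpow_inv_sq {t : ℝ} (ht : 0 ≤ t) (δ : ℝ) : ((√t ^ δ)⁻¹) ^ 2 = t ^ (-δ) := by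
  rw [inv_pow, ← Real.rpow_natCast, ← Real.rpow_mul (sqrt_nonneg _), mul_comm, Real.rpow_mul
    (sqrt_nonneg _), Real.rpow_natCast, sq_sqrt ht, Real.rpow_neg ht]

theorem bracketConst_lt_top {δ : ℝ} (hδ : 1 / 2 < δ) : bracketConst δ < ⊤ := by
  have h := integrable_rpow_neg_one_add_norm_sq (E := ℝ) (μ := volume) (r := 2 * δ)
    (by simp; linarith)
  have h2 := h.lintegral_lt_top
  refine lt_of_le_of_lt (lintegral_mono fun x => ?_) h2
  rw [← ENNReal.ofReal_pow (by positivity), sqrt_rpow_inv_sq (by positivity)]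
  apply le_of_eq
  congr 1
  simp
  congr 1
  ring

theorem measurable_partialFourier (f : 𝓢(E, ℂ)) :
    Measurable (Function.uncurry fun (x : ℝ) (y : F) => partialFourier J f x y) := by
  have h : StronglyMeasurable (fun z : (ℝ × F) × F => cexp (-I * ((⟪z.2, z.1.2⟫ : ℝ) : ℂ)) *
      f (J (WithLp.toLp 2 (z.1.1, z.2)))) := by
    have := f.continuous
    exact (by fun_prop : Continuous _).stronglyMeasurable
  exact (h.integral_prod_right' (ν := (volume : Measure F))).measurable

theorem lintegral_sq_lintegral_partialFourier_le {δ : ℝ} (hδ : 1 / 2 < δ) (f : 𝓢(E, ℂ)) :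
    ∫⁻ y, (∫⁻ x, ‖partialFourier J f x y‖ₑ) ^ 2 ≤
      bracketConst δ * ENNReal.ofReal ((2 * π) ^ Module.finrank ℝ F) *
        ∫⁻ x, ‖((√(1 + ‖x‖ ^ 2) ^ δ : ℝ) : ℂ) * f x‖ₑ ^ 2 := by
  have hmeas := measurable_partialFourier J f
  set w : ℝ → ℝ := fun x => √(1 + x ^ 2) ^ δ with hw
  have hwpos : ∀ x, 0 < w x := fun x => by positivity
  have hwmeas : Measurable w := by fun_prop
  have hN : ∀ y, (∫⁻ x, ‖partialFourier J f x y‖ₑ) ^ 2 ≤ bracketConst δ *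
      ∫⁻ x, ENNReal.ofReal (w x) ^ 2 * ‖partialFourier J f x y‖ₑ ^ 2 := by
    intro y
    have hy : Measurable fun x => partialFourier J f x y :=
      hmeas.comp (measurable_id.prodMk measurable_const)
    have := sq_lintegral_mul_le (μ := (volume : Measure ℝ))
      (u := fun x => ENNReal.ofReal ((w x)⁻¹))
      (v := fun x => ENNReal.ofReal (w x) * ‖partialFourier J f x y‖ₑ)
      (by fun_prop) (by fun_prop)
    refine le_trans (le_of_eq ?_) (this.trans (le_of_eq ?_))
    · congr 1
      refine lintegral_congr fun x => ?_
      rw [← mul_assoc, ← ENNReal.ofReal_mul (inv_pos.2 (hwpos x)).le,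
        inv_mul_cancel₀ (hwpos x).ne', ENNReal.ofReal_one, one_mul]
    · simp only [mul_pow]; rfl
  have hb : bracketConst δ ≠ ⊤ := (bracketConst_lt_top hδ).ne
  calc ∫⁻ y, (∫⁻ x, ‖partialFourier J f x y‖ₑ) ^ 2
      ≤ ∫⁻ y, bracketConst δ *
          ∫⁻ x, ENNReal.ofReal (w x) ^ 2 * ‖partialFourier J f x y‖ₑ ^ 2 := lintegral_mono hN
    _ = bracketConst δ * ∫⁻ x, ENNReal.ofReal (w x) ^ 2 *
          ∫⁻ y, ‖partialFourier J f x y‖ₑ ^ 2 := by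
        rw [lintegral_const_mul' _ _ hb, lintegral_lintegral_swap]
        · congr 1
          refine lintegral_congr fun x => ?_
          rw [lintegral_const_mul']
          exact ENNReal.pow_ne_top ENNReal.ofReal_ne_top
        · have : Measurable (Function.uncurry fun (y : F) (x : ℝ) => partialFourier J f x y) :=
            hmeas.comp measurable_swap
          exact ((hwmeas.comp measurable_snd).ennreal_ofReal.pow_const 2 |>.mul
            (this.enorm.pow_const 2)).aemeasurable
    _ = bracketConst δ * (ENNReal.ofReal ((2 * π) ^ Module.finrank ℝ F) * ∫⁻ x, ∫⁻ z : F,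
          ENNReal.ofReal (w x) ^ 2 * ‖f (J (WithLp.toLp 2 (x, z)))‖ₑ ^ 2) := by
        rw [← lintegral_const_mul' _ _ ENNReal.ofReal_ne_top]
        congr 1
        refine lintegral_congr fun x => ?_
        rw [lintegral_enorm_sq_partialFourier,
          lintegral_const_mul' _ _ (ENNReal.pow_ne_top ENNReal.ofReal_ne_top)]
        ring
    _ ≤ _ := by
        rw [← mul_assoc]
        gcongr
        rw [← (measurePreserving_splitting J).lintegral_comp_emb (measurableEmbedding_splitting J)]
        have hfm : Measurable fun z : ℝ × F => ‖f (J (WithLp.toLp 2 z))‖ₑ :=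
          (f.continuous.comp (continuous_splitting J)).measurable.enorm
        rw [← lintegral_prod (fun z : ℝ × F => ENNReal.ofReal (w z.1) ^ 2 *
          ‖f (J (WithLp.toLp 2 z))‖ₑ ^ 2) (by fun_prop)]
        refine lintegral_mono fun z => ?_
        rw [enorm_mul, mul_pow]
        gcongr
        rw [← ofReal_norm, Complex.norm_real, Real.norm_of_nonneg (by positivity)]
        have := norm_sq_splitting J z.1 z.2
        apply ENNReal.ofReal_le_ofReal
        refine Real.rpow_le_rpow (sqrt_nonneg _) (Real.sqrt_le_sqrt ?_) (by linarith)
        nlinarith [sq_nonneg ‖z.2‖]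

theorem enorm_integral_mul_angFourier_le {δ : ℝ} (hδ : 1 / 2 < δ) (f g : 𝓢(E, ℂ)) {q : E → ℂ}
    {K : ℝ} (hq : ∀ y : F, Integrable fun s : ℝ => q (J (WithLp.toLp 2 (s, y))))
    (hK : ∀ (y : F) (x : ℝ), ‖∫ s : ℝ, cexp (I * x * s) * q (J (WithLp.toLp 2 (s, y)))‖ ≤ K)
    (hInt : Integrable fun ξ => q ξ * angFourier f ξ * (starRingEnd ℂ) (angFourier g ξ)) :
    ‖∫ ξ, q ξ * angFourier f ξ * (starRingEnd ℂ) (angFourier g ξ)‖ₑ ≤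
      ENNReal.ofReal K * (bracketConst δ * ENNReal.ofReal ((2 * π) ^ Module.finrank ℝ F)) *
        eLpNorm (fun x => ((√(1 + ‖x‖ ^ 2) ^ δ : ℝ) : ℂ) * f x) 2 volume *
        eLpNorm (fun x => ((√(1 + ‖x‖ ^ 2) ^ δ : ℝ) : ℂ) * g x) 2 volume := by
  have hK0 : 0 ≤ K := (norm_nonneg _).trans (hK 0 0)
  have hline : ∀ y : F, ‖∫ s : ℝ, q (J (WithLp.toLp 2 (s, y))) *
      angFourier f (J (WithLp.toLp 2 (s, y))) *
      (starRingEnd ℂ) (angFourier g (J (WithLp.toLp 2 (s, y))))‖ₑ ≤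
      ENNReal.ofReal K * ((∫⁻ x, ‖partialFourier J f x y‖ₑ) * ∫⁻ x, ‖partialFourier J g x y‖ₑ) := by
    intro y
    have hf := integrable_partialFourier J f.integrable y
    have hg := integrable_partialFourier J g.integrable y
    have hg' : Integrable fun x => (starRingEnd ℂ) (partialFourier J g x y) :=
      (LinearIsometryEquiv.integrable_comp_iff Complex.conjLIE).2 hg
    have hu : Integrable fun s : ℝ => q (J (WithLp.toLp 2 (s, y))) *
        ∫ t : ℝ, cexp (I * (-1 * t : ℝ) * s) * partialFourier J f t y :=
      integrable_mul_fourier (hq y) hf (-1)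
    have h1 := norm_integral_exp_mul_mul_fourier_le hu hg'
      (fun x => norm_integral_exp_mul_mul_fourier_le (hq y) hf (hK y) (-1) x) 1 0
    have h2 : ∀ s : ℝ, (starRingEnd ℂ) (angFourier g (J (WithLp.toLp 2 (s, y)))) =
        ∫ t : ℝ, cexp (I * (1 * t : ℝ) * s) * (starRingEnd ℂ) (partialFourier J g t y) := by
      intro s
      rw [angFourier_splitting J g.integrable, ← integral_conj]
      refine integral_congr_ae (.of_forall fun t => ?_)
      simp [← Complex.exp_conj]
    simp only [Complex.ofReal_zero, mul_zero, zero_mul, Complex.exp_zero, one_mul] at h1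
    simp_rw [h2, angFourier_splitting J f.integrable, one_mul]
    rw [← ofReal_norm]
    refine (ENNReal.ofReal_le_ofReal h1).trans (le_of_eq ?_)
    simp only [RCLike.norm_conj]
    rw [ENNReal.ofReal_mul (mul_nonneg hK0 (integral_nonneg fun _ => norm_nonneg _)),
      ENNReal.ofReal_mul hK0, ofReal_integral_norm_eq_lintegral_enorm hf,
      ofReal_integral_norm_eq_lintegral_enorm hg, mul_assoc]
  have hfm : Measurable fun y => ∫⁻ x, ‖partialFourier J f x y‖ₑ :=
    (measurable_partialFourier J f).enorm.lintegral_prod_left'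
  have hgm : Measurable fun y => ∫⁻ x, ‖partialFourier J g x y‖ₑ :=
    (measurable_partialFourier J g).enorm.lintegral_prod_left'
  have hL2 : ∀ h : 𝓢(E, ℂ), eLpNorm (fun x => ((√(1 + ‖x‖ ^ 2) ^ δ : ℝ) : ℂ) * h x) 2 volume ^ 2 =
      ∫⁻ x, ‖((√(1 + ‖x‖ ^ 2) ^ δ : ℝ) : ℂ) * h x‖ₑ ^ 2 := fun h => by
    simpa using eLpNorm_nnreal_pow_eq_lintegral (f := fun x => ((√(1 + ‖x‖ ^ 2) ^ δ : ℝ) : ℂ) * h x)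
      (μ := (volume : Measure E)) (p := 2) (by norm_num)
  have hInt' := (measurePreserving_splitting J).integrable_comp_of_integrable hInt
  have hprod : ∫ ξ, q ξ * angFourier f ξ * (starRingEnd ℂ) (angFourier g ξ) =
      ∫ y : F, ∫ s : ℝ, q (J (WithLp.toLp 2 (s, y))) *
        angFourier f (J (WithLp.toLp 2 (s, y))) *
        (starRingEnd ℂ) (angFourier g (J (WithLp.toLp 2 (s, y)))) := by
    rw [← (measurePreserving_splitting J).integral_comp (measurableEmbedding_splitting J)]
    exact integral_prod_symm _ hInt'
  rw [hprod]
  set c := bracketConst δ * ENNReal.ofReal ((2 * π) ^ Module.finrank ℝ F) with hc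
  have hcs : (∫⁻ y, (∫⁻ x, ‖partialFourier J f x y‖ₑ) * ∫⁻ x, ‖partialFourier J g x y‖ₑ) ≤
      c * eLpNorm (fun x => ((√(1 + ‖x‖ ^ 2) ^ δ : ℝ) : ℂ) * f x) 2 volume *
        eLpNorm (fun x => ((√(1 + ‖x‖ ^ 2) ^ δ : ℝ) : ℂ) * g x) 2 volume := by
    rw [← ENNReal.pow_le_pow_left_iff two_ne_zero]
    refine (sq_lintegral_mul_le hfm.aemeasurable hgm.aemeasurable).trans ?_
    rw [mul_pow, mul_pow, hL2, hL2]
    calc _ ≤ (c * _) * (c * _) := mul_le_mul' (lintegral_sq_lintegral_partialFourier_le J hδ f)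
          (lintegral_sq_lintegral_partialFourier_le J hδ g)
      _ = _ := by ring
  calc _ ≤ ∫⁻ y : F, ‖∫ s : ℝ, q (J (WithLp.toLp 2 (s, y))) *
        angFourier f (J (WithLp.toLp 2 (s, y))) *
        (starRingEnd ℂ) (angFourier g (J (WithLp.toLp 2 (s, y))))‖ₑ :=
        enorm_integral_le_lintegral_enorm _
    _ ≤ ∫⁻ y, ENNReal.ofReal K *
        ((∫⁻ x, ‖partialFourier J f x y‖ₑ) * ∫⁻ x, ‖partialFourier J g x y‖ₑ) :=
        lintegral_mono hline
    _ ≤ _ := by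
        rw [lintegral_const_mul' _ _ ENNReal.ofReal_ne_top]
        simp only [mul_assoc] at hcs ⊢
        gcongr
end

theorem integrable_ofReal_gaussian {b : ℝ} (hb : 0 < b) :
    Integrable fun t : ℝ => ((rexp (-b * t ^ 2) : ℝ) : ℂ) :=
  (integrable_exp_neg_mul_sq hb).ofReal

theorem norm_integral_exp_mul_gaussian (y : ℝ) :
    ‖∫ s : ℝ, cexp (I * y * s) * ((rexp (-1 * s ^ 2) : ℝ) : ℂ)‖ = √π * rexp (-(1 / 4) * y ^ 2) := by
  have h := fourierIntegral_gaussian (b := 1) (by simp) y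
  have h2 : ∫ s : ℝ, cexp (I * y * s) * ((rexp (-1 * s ^ 2) : ℝ) : ℂ) =
      ∫ s : ℝ, cexp (I * y * s) * cexp (-1 * s ^ 2) := by
    simp
  rw [h2, h, norm_mul, Complex.norm_exp]
  congr 1
  · rw [div_one, Complex.norm_cpow_eq_rpow_re_of_pos pi_pos, Real.sqrt_eq_rpow]
    norm_num
  · congr 1
    rw [show -(y : ℂ) ^ 2 / (4 * 1) = ((-(1 / 4) * y ^ 2 : ℝ) : ℂ) by push_cast; ring,
      Complex.ofReal_re]

theorem norm_integral_gaussian_resolvent_le_of_pos {ε : ℝ} (hε : 0 < ε) (x : ℝ) :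
    ‖∫ s : ℝ, cexp (I * x * s) * (((rexp (-1 * s ^ 2) : ℝ) : ℂ) * (-s + I * ε)⁻¹)‖ ≤ 2 * π := by
  set A : ℝ → ℂ := (Set.Ioi (0 : ℝ)).indicator fun t => cexp (-ε * t) with hAdef
  have hA : Integrable A := by
    rw [hAdef, integrable_indicator_iff measurableSet_Ioi]
    exact integrableOn_exp_mul_complex_Ioi (by simpa using hε) 0
  have hres : ∀ s : ℝ, (-s + I * ε : ℂ)⁻¹ =
      -I * ∫ t : ℝ, cexp (I * (-1 * t : ℝ) * s) * A t := by
    intro s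
    have h1 : ∫ t : ℝ, cexp (I * (-1 * t : ℝ) * s) * A t =
        ∫ t in Set.Ioi (0 : ℝ), cexp (I * (-s + I * ε) * t) := by
      rw [← integral_indicator measurableSet_Ioi]
      refine integral_congr_ae (.of_forall fun t => ?_)
      by_cases ht : t ∈ Set.Ioi (0 : ℝ)
      · simp only [hAdef, Set.indicator_of_mem ht]
        rw [← Complex.exp_add]
        congr 1
        push_cast
        linear_combination (-(ε * t) : ℂ) * I_sq
      · simp [hAdef, Set.indicator_of_notMem ht]
    have hne : (-s + I * ε : ℂ) ≠ 0 := fun h => hε.ne' (by simpa using congrArg Complex.im h)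
    rw [h1, integral_exp_mul_complex_Ioi (by simpa using hε)]
    field_simp
    simp
  have hfac : ∀ s : ℝ, cexp (I * x * s) * (((rexp (-1 * s ^ 2) : ℝ) : ℂ) * (-s + I * ε)⁻¹) =
      -I * (cexp (I * x * s) * (((rexp (-1 * s ^ 2) : ℝ) : ℂ) *
        ∫ t : ℝ, cexp (I * (-1 * t : ℝ) * s) * A t)) := fun s => by rw [hres]; ring
  simp_rw [hfac]
  rw [integral_const_mul, norm_mul, norm_neg, norm_I, one_mul,
    integral_exp_mul_mul_fourier (integrable_ofReal_gaussian one_pos) hA]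
  have hgauss : ∫ t : ℝ, √π * rexp (-(1 / 4) * (x + -1 * t) ^ 2) = 2 * π := by
    rw [integral_const_mul]
    have := integral_sub_left_eq_self (fun t : ℝ => rexp (-(1 / 4) * t ^ 2)) volume x
    simp only [neg_mul, one_mul, ← sub_eq_add_neg] at this ⊢
    rw [this]
    have h4 := integral_gaussian (1 / 4)
    simp only [neg_mul] at h4
    rw [h4, ← Real.sqrt_mul pi_pos.le, show π * (π / (1 / 4)) = (2 * π) ^ 2 by ring,
      Real.sqrt_sq (by positivity)]
  rw [← hgauss]
  refine norm_integral_le_of_norm_le ?_ (.of_forall fun t => ?_)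
  · have := ((integrable_exp_neg_mul_sq (b := 1 / 4) (by norm_num)).comp_sub_left x).const_mul (√π)
    simpa [sub_eq_add_neg] using this
  · rw [norm_mul, norm_integral_exp_mul_gaussian]
    refine mul_le_of_le_one_right (by positivity) ?_
    by_cases ht : t ∈ Set.Ioi (0 : ℝ)
    · simp only [hAdef, Set.indicator_of_mem ht]
      rw [Complex.norm_exp]
      have : 0 < ε * t := mul_pos hε ht
      simpa using this.le
    · simp [hAdef, Set.indicator_of_notMem ht]

theorem norm_integral_gaussian_resolvent_le {ε : ℝ} (hε : ε ≠ 0) (x : ℝ) :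
    ‖∫ s : ℝ, cexp (I * x * s) * (((rexp (-1 * s ^ 2) : ℝ) : ℂ) * (-s + I * ε)⁻¹)‖ ≤ 2 * π := by
  rcases hε.lt_or_gt with h | h
  · have h1 := norm_integral_gaussian_resolvent_le_of_pos (neg_pos.2 h) (-x)
    rw [← integral_neg_eq_self] at h1
    rw [← norm_neg, ← integral_neg]
    refine le_trans (le_of_eq ?_) h1
    congr 2
    funext s
    have : (-((-s : ℝ) : ℂ) + I * ((-ε : ℝ) : ℂ)) = -(-s + I * ε) := by push_cast; ring
    rw [this, inv_neg]
    push_cast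
    simp
  · exact norm_integral_gaussian_resolvent_le_of_pos h x

theorem one_sub_exp_neg_sq_le (t : ℝ) : |1 - rexp (-1 * t ^ 2)| ≤ |t| := by
  have h0 : rexp (-1 * t ^ 2) ≤ 1 := Real.exp_le_one_iff.2 (by nlinarith [sq_nonneg t])
  have h1 := Real.add_one_le_exp (-1 * t ^ 2)
  have h2 := Real.exp_pos (-1 * t ^ 2)
  rw [abs_of_nonneg (by linarith)]
  rcases le_total |t| 1 with h | h
  · nlinarith [sq_abs t, abs_nonneg t]
  · linarith

theorem norm_integral_scaled_gaussian_resolvent_le {ε d : ℝ} (hε : ε ≠ 0) (hd : 0 < d) (x s₀ : ℝ) :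
    ‖∫ s : ℝ, cexp (I * x * s) *
      (((rexp (-1 * (s - s₀) ^ 2) : ℝ) : ℂ) * (d * (s₀ - s) + I * ε)⁻¹)‖ ≤ 2 * π / d := by
  have h := norm_integral_gaussian_resolvent_le (div_ne_zero hε hd.ne') x
  rw [← integral_sub_right_eq_self _ s₀] at h
  have hd' : (d : ℂ) ≠ 0 := by exact_mod_cast hd.ne'
  have hfac : ∀ s : ℝ, cexp (I * x * s) *
      (((rexp (-1 * (s - s₀) ^ 2) : ℝ) : ℂ) * (d * (s₀ - s) + I * ε)⁻¹) =
      (cexp ((x * s₀ : ℝ) * I) * (d : ℂ)⁻¹) * (cexp (I * x * (s - s₀ : ℝ)) *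
        (((rexp (-1 * (s - s₀) ^ 2) : ℝ) : ℂ) * (-(s - s₀ : ℝ) + I * (ε / d : ℝ))⁻¹)) := by
    intro s
    have e1 : cexp (I * x * s) = cexp ((x * s₀ : ℝ) * I) * cexp (I * x * (s - s₀ : ℝ)) := by
      rw [← Complex.exp_add]; congr 1; push_cast; ring
    have e2 : (d * (s₀ - s) + I * ε : ℂ) = d * (-(s - s₀ : ℝ) + I * (ε / d : ℝ)) := by
      push_cast; field_simp; ring
    rw [e1, e2, mul_inv]; ring
  simp_rw [hfac]
  rw [integral_const_mul, norm_mul, norm_mul, Complex.norm_exp_ofReal_mul_I, one_mul, norm_inv,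
    Complex.norm_real, Real.norm_of_nonneg hd.le, div_eq_inv_mul (2 * π) d]
  exact mul_le_mul_of_nonneg_left h (inv_nonneg.2 hd.le)

theorem le_sub_of_le_hasDerivAt {φ φ' : ℝ → ℝ} {α β c : ℝ}
    (hφ : ∀ s ∈ Set.Icc α β, HasDerivAt φ (φ' s) s) (hc : ∀ s ∈ Set.Icc α β, c ≤ φ' s)
    {s t : ℝ} (hs : s ∈ Set.Icc α β) (ht : t ∈ Set.Icc α β) (hst : s ≤ t) :
    c * (t - s) ≤ φ t - φ s :=
  (convex_Icc α β).mul_sub_le_image_sub_of_le_deriv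
    (fun u hu => (hφ u hu).continuousAt.continuousWithinAt)
    (fun u hu => (hφ u (interior_subset hu)).differentiableAt.differentiableWithinAt)
    (fun u hu => (hφ u (interior_subset hu)).deriv ▸ hc u (interior_subset hu)) s hs t ht hst

theorem exists_resonant_point {φ φ' : ℝ → ℝ} {α β c : ℝ} (hαβ : α ≤ β)
    (hφ : ∀ s ∈ Set.Icc α β, HasDerivAt φ (φ' s) s) (hc : ∀ s ∈ Set.Icc α β, c ≤ φ' s) (σ : ℝ) :
    ∃ s₀ ∈ Set.Icc α β, (∀ s ∈ Set.Icc α β, c * |s - s₀| ≤ |σ - φ s|) ∧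
      (φ s₀ = σ ∨ s₀ = α ∨ s₀ = β) := by
  have hα : α ∈ Set.Icc α β := ⟨le_rfl, hαβ⟩
  have hβ : β ∈ Set.Icc α β := ⟨hαβ, le_rfl⟩
  have hcont : ContinuousOn φ (Set.Icc α β) :=
    fun u hu => (hφ u hu).continuousAt.continuousWithinAt
  rcases lt_or_ge σ (φ α) with h1 | h1
  · refine ⟨α, hα, fun s hs => ?_, .inr (.inl rfl)⟩
    have := le_sub_of_le_hasDerivAt hφ hc hα hs hs.1
    rw [abs_of_nonneg (by linarith [hs.1]), abs_sub_comm]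
    exact le_trans (by linarith) (le_abs_self _)
  rcases lt_or_ge (φ β) σ with h2 | h2
  · refine ⟨β, hβ, fun s hs => ?_, .inr (.inr rfl)⟩
    have := le_sub_of_le_hasDerivAt hφ hc hs hβ hs.2
    rw [abs_sub_comm, abs_of_nonneg (by linarith [hs.2])]
    exact le_trans (by linarith) (le_abs_self _)
  obtain ⟨s₀, hs₀, rfl⟩ := intermediate_value_Icc hαβ hcont ⟨h1, h2⟩
  refine ⟨s₀, hs₀, fun s hs => ?_, .inl rfl⟩
  rcases le_total s s₀ with h | h
  · have := le_sub_of_le_hasDerivAt hφ hc hs hs₀ h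
    rw [abs_sub_comm, abs_of_nonneg (by linarith)]
    exact le_trans this (le_abs_self _)
  · have := le_sub_of_le_hasDerivAt hφ hc hs₀ hs h
    rw [abs_of_nonneg (by linarith), abs_sub_comm]
    exact le_trans this (le_abs_self _)

theorem abs_taylor_le {φ φ' : ℝ → ℝ} {α β M : ℝ} (hM : 0 ≤ M)
    (hφ : ∀ s ∈ Set.Icc α β, HasDerivAt φ (φ' s) s)
    (hL : ∀ s ∈ Set.Icc α β, ∀ t ∈ Set.Icc α β, |φ' s - φ' t| ≤ M * |s - t|)
    {s s₀ : ℝ} (hs : s ∈ Set.Icc α β) (hs₀ : s₀ ∈ Set.Icc α β) :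
    |φ s - φ s₀ - φ' s₀ * (s - s₀)| ≤ M * |s - s₀| * |s - s₀| := by
  have hsub : Set.uIcc s₀ s ⊆ Set.Icc α β := Set.uIcc_subset_Icc hs₀ hs
  have := (convex_uIcc s₀ s).norm_image_sub_le_of_norm_hasDerivWithin_le
    (f := fun t => φ t - φ' s₀ * t) (f' := fun t => φ' t - φ' s₀) (C := M * |s - s₀|)
    (fun t ht => ((hφ t (hsub ht)).sub
      (by simpa using (hasDerivAt_id t).const_mul (φ' s₀))).hasDerivWithinAt)
    (fun t ht => ?_) Set.left_mem_uIcc Set.right_mem_uIcc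
  · simp only [Real.norm_eq_abs] at this
    refine le_trans (le_of_eq ?_) this
    congr 1; ring
  · refine (hL t (hsub ht) s₀ hs₀).trans ?_
    exact mul_le_mul_of_nonneg_left (Set.abs_sub_left_of_mem_uIcc ht) hM

theorem norm_mul_inv_le_of_le {A B : ℂ} {K : ℝ} (hK : 0 ≤ K) (h : ‖A‖ ≤ K * ‖B‖) :
    ‖A * B⁻¹‖ ≤ K := by
  rw [norm_mul, norm_inv, ← div_eq_mul_inv]
  exact div_le_of_le_mul₀ (norm_nonneg _) hK h

theorem integrable_resolvent_of_support_Icc {φ b : ℝ → ℝ} {α β : ℝ}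
    (hφ : ContinuousOn φ (Set.Icc α β)) (hb : ContinuousOn b (Set.Icc α β))
    (hsupp : ∀ s, s ∉ Set.Icc α β → b s = 0) {ζ : ℂ} (hζ : ζ.im ≠ 0) :
    Integrable fun s : ℝ => (b s : ℂ) * (ζ - φ s)⁻¹ := by
  have hne : ∀ s, ζ - φ s ≠ 0 := fun s h => hζ (by simpa using congrArg Complex.im h)
  have hcont : ContinuousOn (fun s : ℝ => (b s : ℂ) * (ζ - φ s)⁻¹) (Set.Icc α β) := by
    refine ContinuousOn.mul (Complex.continuous_ofReal.comp_continuousOn hb) ?_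
    exact (continuousOn_const.sub (Complex.continuous_ofReal.comp_continuousOn hφ)).inv₀
      fun s _ => hne s
  refine (hcont.integrableOn_Icc).integrable_of_forall_notMem_eq_zero fun s hs => ?_
  simp [hsupp s hs]

/-- A nondegenerate phase on an interval: the oscillatory integral of a compactly supported
Lipschitz amplitude against the resolvent kernel is bounded uniformly in `ζ` and the frequency. -/
theorem norm_integral_exp_mul_resolvent_le {φ φ' b : ℝ → ℝ} {α β c M : ℝ} (hαβ : α ≤ β)
    (hc0 : 0 < c) (hM : 0 ≤ M)
    (hφ : ∀ s ∈ Set.Icc α β, HasDerivAt φ (φ' s) s) (hc : ∀ s ∈ Set.Icc α β, c ≤ φ' s)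
    (hL : ∀ s ∈ Set.Icc α β, ∀ t ∈ Set.Icc α β, |φ' s - φ' t| ≤ M * |s - t|)
    (hbL : ∀ s ∈ Set.Icc α β, ∀ t ∈ Set.Icc α β, |b s - b t| ≤ M * |s - t|)
    (hbM : ∀ s ∈ Set.Icc α β, |b s| ≤ M) (hbα : b α = 0) (hbβ : b β = 0)
    (hsupp : ∀ s, s ∉ Set.Icc α β → b s = 0) {ζ : ℂ} (hζ : ζ.im ≠ 0) (x : ℝ)
    (hq : Integrable fun s : ℝ => (b s : ℂ) * (ζ - φ s)⁻¹) :
    ‖∫ s : ℝ, cexp (I * x * s) * ((b s : ℂ) * (ζ - φ s)⁻¹)‖ ≤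
      (2 * M / c + M * M / (c * c)) * (β - α) + M / c * √π + M * (2 * π / c) := by
  obtain ⟨s₀, hs₀, hlow, hcase⟩ := exists_resonant_point hαβ hφ hc ζ.re
  set d := φ' s₀ with hd
  have hdc : c ≤ d := hc s₀ hs₀
  have hd0 : 0 < d := hc0.trans_le hdc
  obtain ⟨G, hG⟩ : ∃ G : ℝ → ℂ, ∀ s, G s = ((rexp (-1 * (s - s₀) ^ 2) : ℝ) : ℂ) :=
    ⟨_, fun _ => rfl⟩
  have hGint : Integrable G := by
    rw [funext hG]
    exact (integrable_ofReal_gaussian one_pos).comp_sub_right s₀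
  have hG1 : ∀ s, ‖G s‖ ≤ 1 := fun s => by
    rw [hG, Complex.norm_real, Real.norm_of_nonneg (exp_pos _).le]
    exact Real.exp_le_one_iff.2 (by nlinarith [sq_nonneg (s - s₀)])
  have hmod : ∀ s : ℝ, d * |s - s₀| ≤ ‖(d * (s₀ - s) + I * ζ.im : ℂ)‖ := fun s => by
    have := Complex.abs_re_le_norm (d * (s₀ - s) + I * ζ.im : ℂ)
    refine le_trans (le_of_eq ?_) this
    simp [abs_mul, abs_of_pos hd0, abs_sub_comm]
  have hmod' : ∀ s : ℝ, c * |s - s₀| ≤ ‖(d * (s₀ - s) + I * ζ.im : ℂ)‖ := fun s =>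
    le_trans (by gcongr) (hmod s)
  have hlow' : ∀ s ∈ Set.Icc α β, c * |s - s₀| ≤ ‖ζ - φ s‖ := fun s hs => by
    have := Complex.abs_re_le_norm (ζ - φ s)
    exact (hlow s hs).trans (by simpa using this)
  obtain ⟨q₀, hq₀⟩ : ∃ q₀ : ℝ → ℂ, ∀ s, q₀ s = b s₀ * (G s * (d * (s₀ - s) + I * ζ.im)⁻¹) :=
    ⟨_, fun _ => rfl⟩
  have hne : ∀ s : ℝ, (d * (s₀ - s) + I * ζ.im : ℂ) ≠ 0 :=
    fun s h => hζ (by simpa using congrArg Complex.im h)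
  have hq₀int : Integrable q₀ := by
    rw [funext hq₀]
    refine (Integrable.mul_bdd (c := |ζ.im|⁻¹) hGint ?_ (.of_forall fun s => ?_)).const_mul _
    · exact (Continuous.inv₀ (by fun_prop) hne).aestronglyMeasurable
    · rw [norm_inv]
      refine inv_anti₀ (abs_pos.2 hζ) ?_
      · have := Complex.abs_im_le_norm (d * (s₀ - s) + I * ζ.im : ℂ)
        simpa using this
  have hdiff : ∀ s, ‖(b s : ℂ) * (ζ - φ s)⁻¹ - q₀ s‖ ≤
      (Set.Icc α β).indicator (fun _ => 2 * M / c + M * M / (c * c)) s +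
        M / c * rexp (-1 * (s - s₀) ^ 2) := by
    intro s
    by_cases hs : s ∈ Set.Icc α β
    · rw [Set.indicator_of_mem hs]
      have hsplit : (b s : ℂ) * (ζ - φ s)⁻¹ - q₀ s = (b s - b s₀ * G s) * (ζ - φ s)⁻¹ +
          b s₀ * G s * ((ζ - φ s)⁻¹ - (d * (s₀ - s) + I * ζ.im)⁻¹) := by
        rw [hq₀]; ring
      have hA : ‖(b s - b s₀ * G s) * (ζ - φ s)⁻¹‖ ≤ 2 * M / c := by
        refine norm_mul_inv_le_of_le (by positivity) ?_
        have e : (b s - b s₀ * G s : ℂ) =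
            ((b s - b s₀ + b s₀ * (1 - rexp (-1 * (s - s₀) ^ 2)) : ℝ) : ℂ) := by
          rw [hG]; push_cast; ring
        rw [e, Complex.norm_real, Real.norm_eq_abs]
        calc _ ≤ |b s - b s₀| + |b s₀| * |1 - rexp (-1 * (s - s₀) ^ 2)| := by
              rw [← abs_mul]; exact abs_add_le _ _
          _ ≤ M * |s - s₀| + M * |s - s₀| := by
              exact add_le_add (hbL s hs s₀ hs₀) (mul_le_mul (hbM s₀ hs₀)
                (one_sub_exp_neg_sq_le _) (abs_nonneg _) hM)
          _ = 2 * M / c * (c * |s - s₀|) := by field_simp; ring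
          _ ≤ _ := by gcongr; exact hlow' s hs
      have hB : ‖b s₀ * G s * ((ζ - φ s)⁻¹ - (d * (s₀ - s) + I * ζ.im)⁻¹)‖ ≤ M * M / (c * c) := by
        rcases hcase with h | h | h
        · have hne' : ζ - φ s ≠ 0 := fun h => hζ (by simpa using congrArg Complex.im h)
          rw [inv_sub_inv hne' (hne s), div_eq_mul_inv, ← mul_assoc]
          refine norm_mul_inv_le_of_le (by positivity) ?_
          have e : (d * (s₀ - s) + I * ζ.im - (ζ - φ s) : ℂ) =
              ((φ s - φ s₀ - d * (s - s₀) : ℝ) : ℂ) := by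
            apply Complex.ext
            · simp [h]; ring
            · simp
          rw [e, norm_mul, norm_mul, Complex.norm_real, Complex.norm_real, norm_mul,
            Real.norm_eq_abs, Real.norm_eq_abs]
          calc _ ≤ M * 1 * (M * |s - s₀| * |s - s₀|) := by
                gcongr
                · exact hbM s₀ hs₀
                · exact hG1 s
                · exact abs_taylor_le hM hφ hL hs hs₀
            _ = M * M / (c * c) * (c * |s - s₀| * (c * |s - s₀|)) := by field_simp
            _ ≤ _ := by
                gcongr
                · exact hlow' s hs
                · exact hmod' s
        · rw [h, hbα]; simp; positivity
        · rw [h, hbβ]; simp; positivity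
      rw [hsplit]
      have : 0 ≤ M / c * rexp (-1 * (s - s₀) ^ 2) := by positivity
      exact (norm_add_le _ _).trans (by linarith)
    · rw [Set.indicator_of_notMem hs, hsupp s hs, zero_add]
      have hbs : |b s₀| ≤ M * |s - s₀| := by
        rw [Set.mem_Icc, not_and_or, not_le, not_le] at hs
        rcases hs with h | h
        · have := hbL s₀ hs₀ α ⟨le_rfl, hαβ⟩
          rw [hbα, sub_zero] at this
          refine this.trans ?_
          gcongr 1
          rw [abs_of_nonneg (by linarith [hs₀.1]), abs_sub_comm, abs_of_nonneg
            (by linarith [hs₀.1])]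
          linarith
        · have := hbL s₀ hs₀ β ⟨hαβ, le_rfl⟩
          rw [hbβ, sub_zero] at this
          refine this.trans ?_
          gcongr 1
          rw [abs_sub_comm, abs_of_nonneg (by linarith [hs₀.2]), abs_of_nonneg
            (by linarith [hs₀.2])]
          linarith
      rw [Complex.ofReal_zero, zero_mul, zero_sub, norm_neg, hq₀, ← mul_assoc]
      refine norm_mul_inv_le_of_le (by positivity) ?_
      rw [norm_mul, Complex.norm_real, hG, Complex.norm_real, Real.norm_eq_abs, Real.norm_of_nonneg
        (exp_pos _).le]
      calc _ ≤ M * |s - s₀| * rexp (-1 * (s - s₀) ^ 2) := by gcongr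
        _ = M / c * rexp (-1 * (s - s₀) ^ 2) * (c * |s - s₀|) := by field_simp
        _ ≤ _ := by gcongr; exact hmod' s
  have hphase : ∀ s : ℝ, ‖cexp (I * x * s)‖ = 1 := fun s => by
    rw [show I * (x : ℂ) * s = ((x * s : ℝ) : ℂ) * I by push_cast; ring,
      Complex.norm_exp_ofReal_mul_I]
  have hbdd : ∀ {h : ℝ → ℂ}, Integrable h → Integrable fun s : ℝ => cexp (I * x * s) * h s :=
    fun hh => hh.bdd_mul (c := 1)
      (by fun_prop : Continuous fun s : ℝ => cexp (I * x * s)).aestronglyMeasurable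
      (.of_forall fun s => (hphase s).le)
  have hsum : ∫ s : ℝ, cexp (I * x * s) * ((b s : ℂ) * (ζ - φ s)⁻¹) =
      (∫ s : ℝ, cexp (I * x * s) * ((b s : ℂ) * (ζ - φ s)⁻¹ - q₀ s)) +
        ∫ s : ℝ, cexp (I * x * s) * q₀ s := by
    have h1 : Integrable fun s : ℝ => cexp (I * x * s) * ((b s : ℂ) * (ζ - φ s)⁻¹ - q₀ s) :=
      hbdd (hq.sub hq₀int)
    rw [← integral_add h1 (hbdd hq₀int)]
    congr 1; funext s; ring
  have hI1 : ‖∫ s : ℝ, cexp (I * x * s) * ((b s : ℂ) * (ζ - φ s)⁻¹ - q₀ s)‖ ≤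
      (2 * M / c + M * M / (c * c)) * (β - α) + M / c * √π := by
    have hi1 : Integrable ((Set.Icc α β).indicator
        (fun _ : ℝ => 2 * M / c + M * M / (c * c))) := by
      rw [integrable_indicator_iff measurableSet_Icc]
      exact integrableOn_const (by simp)
    have hi2 : Integrable fun s : ℝ => M / c * rexp (-1 * (s - s₀) ^ 2) :=
      ((integrable_exp_neg_mul_sq one_pos).comp_sub_right s₀).const_mul _
    refine (norm_integral_le_of_norm_le (hi1.add hi2) (.of_forall fun s => ?_)).trans
      (le_of_eq ?_)
    · rw [norm_mul, hphase, one_mul]; exact hdiff s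
    · have hg := integral_sub_right_eq_self (fun t : ℝ => rexp (-1 * t ^ 2)) (μ := volume) s₀
      rw [integral_gaussian, div_one] at hg
      simp only [Pi.add_apply]
      rw [integral_add hi1 hi2, integral_const_mul, hg, integral_indicator measurableSet_Icc,
        setIntegral_const, measureReal_def, Real.volume_Icc, ENNReal.toReal_ofReal (by linarith),
        smul_eq_mul]
      ring
  have hI2 : ‖∫ s : ℝ, cexp (I * x * s) * q₀ s‖ ≤ M * (2 * π / c) := by
    have e : ∀ s : ℝ, cexp (I * x * s) * q₀ s = b s₀ * (cexp (I * x * s) *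
        (((rexp (-1 * (s - s₀) ^ 2) : ℝ) : ℂ) * (d * (s₀ - s) + I * ζ.im)⁻¹)) := fun s => by
      rw [hq₀, hG]; ring
    simp_rw [e]
    rw [integral_const_mul, norm_mul, Complex.norm_real, Real.norm_eq_abs]
    have h := norm_integral_scaled_gaussian_resolvent_le hζ hd0 x s₀
    gcongr
    · exact hbM s₀ hs₀
    · exact h.trans (by gcongr)
  rw [hsum]
  exact (norm_add_le _ _).trans (add_le_add hI1 hI2)

section
variable {E : Type*} [NormedAddCommGroup E] [InnerProductSpace ℝ E] [FiniteDimensional ℝ E]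
  [MeasurableSpace E] [BorelSpace E]

/-- The `L²` norm with polynomial weight `⟨x⟩ ^ δ`. -/
def weightedNorm (δ : ℝ) (f : E → ℂ) : ℝ≥0∞ :=
  eLpNorm (fun x => ((√(1 + ‖x‖ ^ 2) ^ δ : ℝ) : ℂ) * f x) 2 volume

theorem weightedNorm_ne_top (δ : ℝ) (f : 𝓢(E, ℂ)) : weightedNorm δ f ≠ ⊤ := by
  have h1 : Function.HasTemperateGrowth fun x : E => (1 + ‖x‖ ^ 2) ^ (δ / 2) :=
    Function.hasTemperateGrowth_one_add_norm_sq_rpow E (δ / 2)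
  obtain ⟨u, hu⟩ : ∃ u : 𝓢(E, ℂ), ∀ x, ((√(1 + ‖x‖ ^ 2) ^ δ : ℝ) : ℂ) * f x = u x := by
    refine ⟨SchwartzMap.smulLeftCLM ℂ (fun x : E => (1 + ‖x‖ ^ 2) ^ (δ / 2)) f, fun x => ?_⟩
    have h2 : √(1 + ‖x‖ ^ 2) ^ δ = (1 + ‖x‖ ^ 2) ^ (δ / 2) := by
      rw [Real.sqrt_eq_rpow, ← Real.rpow_mul (by positivity), one_div_mul_eq_div]
    rw [SchwartzMap.smulLeftCLM_apply_apply h1, h2, Complex.real_smul]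
  rw [weightedNorm, funext hu]
  have h : MemLp (fun x => u x) 2 (volume : Measure E) := u.memLp 2 volume
  exact h.eLpNorm_ne_top

/-- Orthogonal splitting of a Euclidean space along a unit vector. -/
def lineSplitting (e : E) (he : ‖e‖ = 1) :
    WithLp 2 (ℝ × (ℝ ∙ e)ᗮ) ≃ₗᵢ[ℝ] E :=
  (LinearIsometryEquiv.withLpProdCongr 2 (LinearIsometryEquiv.toSpanUnitSingleton e he)
    (LinearIsometryEquiv.refl ℝ _)).trans (Submodule.orthogonalDecomposition (ℝ ∙ e)).symm

theorem lineSplitting_apply (e : E) (he : ‖e‖ = 1) (s : ℝ) (y : (ℝ ∙ e)ᗮ) :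
    lineSplitting e he (WithLp.toLp 2 (s, y)) = s • e + y := by
  simp [lineSplitting]

/-- The symbol `q` is integrable along every line in the direction `e`, and its Fourier transforms
along these lines are bounded by `K`. -/
def LineBounded (e : E) (q : E → ℂ) (K : ℝ) : Prop :=
  ∀ y : E, ⟪e, y⟫ = 0 → (Integrable fun s : ℝ => q (s • e + y)) ∧
    ∀ x : ℝ, ‖∫ s : ℝ, cexp (I * x * s) * q (s • e + y)‖ ≤ K

theorem LineBounded.dilation {e : E} {q : E → ℂ} {K : ℝ} (h : LineBounded e q K) {R : ℝ}
    (hR : 0 < R) : LineBounded e (fun ξ => (R : ℂ)⁻¹ * q (R⁻¹ • ξ)) K := by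
  intro y hy
  obtain ⟨h1, h2⟩ := h (R⁻¹ • y) (by rw [inner_smul_right, hy, mul_zero])
  have hpt : ∀ s : ℝ, R⁻¹ • (s • e + y) = (R⁻¹ * s) • e + R⁻¹ • y := fun s => by
    rw [smul_add, smul_smul]
  have hR' : (R : ℂ) ≠ 0 := by exact_mod_cast hR.ne'
  constructor
  · simp_rw [hpt]
    exact (h1.comp_mul_left' (inv_ne_zero hR.ne')).const_mul _
  · intro x
    refine le_trans (le_of_eq ?_) (h2 (R * x))
    have key := Measure.integral_comp_mul_left
      (fun s : ℝ => cexp (I * (R * x : ℝ) * s) * q (s • e + R⁻¹ • y)) R⁻¹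
    rw [inv_inv, abs_of_pos hR] at key
    have : ∀ s : ℝ, cexp (I * x * s) * ((R : ℂ)⁻¹ * q (R⁻¹ • (s • e + y))) =
        (R : ℂ)⁻¹ * (cexp (I * (R * x : ℝ) * (R⁻¹ * s : ℝ)) * q ((R⁻¹ * s) • e + R⁻¹ • y)) := by
      intro s
      rw [hpt]
      have : I * x * s = I * (R * x : ℝ) * (R⁻¹ * s : ℝ) := by
        push_cast; field_simp
      rw [this]; ring
    simp_rw [this]
    rw [integral_const_mul, key, Complex.real_smul, inv_mul_cancel_left₀ hR']

theorem LineBounded.enorm_integral_le {e : E} (he : ‖e‖ = 1) {δ : ℝ} (hδ : 1 / 2 < δ)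
    (f g : 𝓢(E, ℂ)) {q : E → ℂ} {K : ℝ} (h : LineBounded e q K)
    (hInt : Integrable fun ξ => q ξ * angFourier f ξ * (starRingEnd ℂ) (angFourier g ξ)) :
    ‖∫ ξ, q ξ * angFourier f ξ * (starRingEnd ℂ) (angFourier g ξ)‖ₑ ≤
      ENNReal.ofReal K * (bracketConst δ * ENNReal.ofReal ((2 * π) ^ Module.finrank ℝ E)) *
        weightedNorm δ f * weightedNorm δ g := by
  have horth : ∀ y : (ℝ ∙ e)ᗮ, ⟪e, (y : E)⟫ = 0 := fun y =>
    Submodule.mem_orthogonal_singleton_iff_inner_right.1 y.2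
  have := enorm_integral_mul_angFourier_le (lineSplitting e he) hδ f g (q := q) (K := K)
    (fun y => by simpa only [lineSplitting_apply] using (h y (horth y)).1)
    (fun y x => by simpa only [lineSplitting_apply] using (h y (horth y)).2 x) hInt
  refine this.trans ?_
  rw [weightedNorm, weightedNorm]
  gcongr
  · linarith [pi_gt_three]
  · exact Submodule.finrank_le _

theorem continuous_angFourier (f : 𝓢(E, ℂ)) : Continuous (angFourier f) := by
  have : angFourier f = fun ξ => (𝓕 f) ((2 * π)⁻¹ • ξ) := by
    ext ξ
    rw [angFourier_eq_fourier, SchwartzMap.fourier_coe]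
  rw [this]
  fun_prop

theorem norm_angFourier_le (f : E → ℂ) (ξ : E) : ‖angFourier f ξ‖ ≤ ∫ x, ‖f x‖ := by
  refine (norm_integral_le_integral_norm _).trans (le_of_eq ?_)
  refine integral_congr_ae (.of_forall fun x => ?_)
  simp [Complex.norm_exp]

theorem integrable_mul_conj_angFourier {F : E → ℂ} (hF : Integrable F) (g : 𝓢(E, ℂ)) :
    Integrable fun ξ => F ξ * (starRingEnd ℂ) (angFourier g ξ) := by
  refine hF.mul_bdd (c := ∫ x, ‖g x‖)
    (Complex.continuous_conj.comp (continuous_angFourier g)).aestronglyMeasurable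
    (.of_forall fun ξ => ?_)
  rw [RCLike.norm_conj]
  exact norm_angFourier_le _ _

/-- The Parseval identity for the inverse Fourier integral. -/
theorem integral_inverse_mul_conj {F : E → ℂ} (hF : Integrable F) (g : 𝓢(E, ℂ)) :
    ∫ x, (∫ ξ, cexp (I * ((⟪x, ξ⟫ : ℝ) : ℂ)) * F ξ) * (starRingEnd ℂ) (g x) =
      ∫ ξ, F ξ * (starRingEnd ℂ) (angFourier g ξ) := by
  have hInt : Integrable (Function.uncurry fun (x ξ : E) =>
      cexp (I * ((⟪x, ξ⟫ : ℝ) : ℂ)) * F ξ * (starRingEnd ℂ) (g x)) (volume.prod volume) := by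
    have h1 : Integrable (fun z : E × E => (starRingEnd ℂ) (g z.1) * F z.2)
        (volume.prod volume) :=
      ((LinearIsometryEquiv.integrable_comp_iff Complex.conjLIE).2 g.integrable).mul_prod hF
    have h2 : Continuous fun z : E × E => cexp (I * ((⟪z.1, z.2⟫ : ℝ) : ℂ)) := by fun_prop
    refine (h1.bdd_mul (c := 1) h2.aestronglyMeasurable (.of_forall fun z => ?_)).congr
      (.of_forall fun z => ?_)
    · rw [Complex.norm_exp_I_mul_ofReal]
    · simp only [Function.uncurry]; ring
  simp_rw [← integral_mul_const]
  rw [integral_integral_swap hInt]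
  refine integral_congr_ae (.of_forall fun ξ => ?_)
  simp only
  rw [angFourier, ← integral_conj, ← integral_const_mul]
  refine integral_congr_ae (.of_forall fun x => ?_)
  simp only [map_mul, ← Complex.exp_conj, map_neg, Complex.conj_I, Complex.conj_ofReal, neg_neg]
  ring

theorem integral_exp_mul_eq_zero_of_not_integrable {F : E → ℂ} (hF : ¬ Integrable F) (x : E) :
    ∫ ξ, cexp (I * ((⟪x, ξ⟫ : ℝ) : ℂ)) * F ξ = 0 := by
  refine integral_undef fun h => hF ?_
  have h2 : Continuous fun ξ : E => cexp (-(I * ((⟪x, ξ⟫ : ℝ) : ℂ))) := by fun_prop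
  refine (h.bdd_mul (c := 1) h2.aestronglyMeasurable (.of_forall fun ξ => ?_)).congr
    (.of_forall fun ξ => ?_)
  · simp [Complex.norm_exp]
  · simp only
    rw [← mul_assoc, ← Complex.exp_add, neg_add_cancel, Complex.exp_zero, one_mul]

/-- The cut-off `χ`, dilated along with the symbols in `𝒬`, gives sesquilinear forms which are
bounded in the weighted space uniformly in the symbol and the dilation. -/
def UniformlyBounded (δ : ℝ) (𝒬 : Set (E → ℂ)) (χ : E → ℝ) : Prop :=
  ∃ C : ℝ≥0∞, C ≠ ⊤ ∧ ∀ q ∈ 𝒬, ∀ R : ℝ, 0 < R → ∀ f g : 𝓢(E, ℂ),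
    (Integrable fun ξ => (R : ℂ)⁻¹ * q (R⁻¹ • ξ) * angFourier f ξ *
      (starRingEnd ℂ) (angFourier g ξ)) →
    ‖∫ ξ, (χ (R⁻¹ • ξ) : ℂ) * ((R : ℂ)⁻¹ * q (R⁻¹ • ξ) * angFourier f ξ *
      (starRingEnd ℂ) (angFourier g ξ))‖ₑ ≤ C * weightedNorm δ f * weightedNorm δ g

theorem integrable_cutoff_mul {χ : E → ℝ} (hχ : Measurable χ) (hχ1 : ∀ ξ, |χ ξ| ≤ 1) (R : ℝ)
    {F : E → ℂ} (hF : Integrable F) : Integrable fun ξ => (χ (R⁻¹ • ξ) : ℂ) * F ξ := by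
  refine hF.bdd_mul (c := 1) ?_ (.of_forall fun ξ => ?_)
  · exact (Complex.measurable_ofReal.comp (hχ.comp (measurable_const_smul _))).aestronglyMeasurable
  · simpa using hχ1 _

theorem UniformlyBounded.add {δ : ℝ} {𝒬 : Set (E → ℂ)} {χ₁ χ₂ : E → ℝ} (hχ₁ : Measurable χ₁)
    (hχ₁' : ∀ ξ, |χ₁ ξ| ≤ 1) (hχ₂ : Measurable χ₂) (hχ₂' : ∀ ξ, |χ₂ ξ| ≤ 1)
    (h₁ : UniformlyBounded δ 𝒬 χ₁) (h₂ : UniformlyBounded δ 𝒬 χ₂) :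
    UniformlyBounded δ 𝒬 fun ξ => χ₁ ξ + χ₂ ξ := by
  obtain ⟨C₁, hC₁, h₁⟩ := h₁
  obtain ⟨C₂, hC₂, h₂⟩ := h₂
  refine ⟨C₁ + C₂, ENNReal.add_ne_top.2 ⟨hC₁, hC₂⟩, fun q hq R hR f g hInt => ?_⟩
  simp only [Complex.ofReal_add, add_mul (χ₁ _ : ℂ)]
  rw [integral_add (integrable_cutoff_mul hχ₁ hχ₁' R hInt)
    (integrable_cutoff_mul hχ₂ hχ₂' R hInt), add_mul, add_mul]
  exact (enorm_add_le _ _).trans (add_le_add (h₁ q hq R hR f g hInt) (h₂ q hq R hR f g hInt))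

theorem UniformlyBounded.of_lineBounded {e : E} (he : ‖e‖ = 1) {δ : ℝ} (hδ : 1 / 2 < δ)
    {𝒬 : Set (E → ℂ)} {χ : E → ℝ} (hχ : Measurable χ) (hχ1 : ∀ ξ, |χ ξ| ≤ 1) {K : ℝ}
    (h : ∀ q ∈ 𝒬, LineBounded e (fun ξ => χ ξ * q ξ) K) : UniformlyBounded δ 𝒬 χ := by
  refine ⟨ENNReal.ofReal K * (bracketConst δ * ENNReal.ofReal ((2 * π) ^ Module.finrank ℝ E)),
    ENNReal.mul_ne_top ENNReal.ofReal_ne_top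
      (ENNReal.mul_ne_top (bracketConst_lt_top hδ).ne ENNReal.ofReal_ne_top),
    fun q hq R hR f g hInt => ?_⟩
  have heq : (fun ξ => (χ (R⁻¹ • ξ) : ℂ) * ((R : ℂ)⁻¹ * q (R⁻¹ • ξ) * angFourier f ξ *
      (starRingEnd ℂ) (angFourier g ξ))) = fun ξ => ((R : ℂ)⁻¹ * (χ (R⁻¹ • ξ) * q (R⁻¹ • ξ))) *
      angFourier f ξ * (starRingEnd ℂ) (angFourier g ξ) := by
    ext ξ; ring
  have hInt' := integrable_cutoff_mul hχ hχ1 R hInt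
  rw [heq] at hInt' ⊢
  exact ((h q hq).dilation hR).enorm_integral_le he hδ f g hInt'

/-- A positive symbol, homogeneous of degree `m` and smooth away from the origin. -/
structure IsHomogeneousSymbol (m : ℝ) (p : E → ℝ) : Prop where
  continuous : Continuous p
  contDiffAt : ∀ ξ, ξ ≠ 0 → ContDiffAt ℝ (⊤ : ℕ∞) p ξ
  map_smul : ∀ t : ℝ, 0 < t → ∀ ξ, p (t • ξ) = t ^ m * p ξ
  pos : ∀ ξ, ξ ≠ 0 → 0 < p ξ

namespace IsHomogeneousSymbol
variable {m : ℝ} {p : E → ℝ}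

theorem fderiv_smul (hp : IsHomogeneousSymbol m p) {t : ℝ} (ht : 0 < t) (ξ : E) :
    fderiv ℝ p (t • ξ) = t ^ (m - 1) • fderiv ℝ p ξ := by
  have h1 : (fun ξ => p (t • ξ)) = t ^ m • p := by
    ext ξ; simp [hp.map_smul t ht]
  have h2 := fderiv_comp_smul (𝕜 := ℝ) (f := p) (x := ξ) t
  rw [h1, fderiv_const_smul_field, Pi.smul_apply] at h2
  rw [Real.rpow_sub_one ht.ne', div_eq_inv_mul, mul_smul, h2, inv_smul_smul₀ ht.ne']

theorem fderiv_apply_self (hp : IsHomogeneousSymbol m p) {ξ : E} (hξ : ξ ≠ 0) :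
    fderiv ℝ p ξ ξ = m * p ξ := by
  have hd : HasFDerivAt p (fderiv ℝ p ξ) ((1 : ℝ) • ξ) := by
    rw [one_smul]
    exact ((hp.contDiffAt ξ hξ).differentiableAt (by simp)).hasFDerivAt
  have h1 : HasDerivAt (fun t : ℝ => p (t • ξ)) (fderiv ℝ p ξ ξ) 1 := by
    have := hd.comp_hasDerivAt (1 : ℝ) ((hasDerivAt_id (1 : ℝ)).smul_const ξ)
    rw [one_smul] at this
    exact this
  have h2 : HasDerivAt (fun t : ℝ => t ^ m * p ξ) (m * p ξ) 1 := by
    simpa using (Real.hasDerivAt_rpow_const (x := 1) (p := m) (Or.inl one_ne_zero)).mul_const (p ξ)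
  refine h1.unique (h2.congr_of_eventuallyEq ?_)
  filter_upwards [lt_mem_nhds (zero_lt_one' ℝ)] with t ht
  exact hp.map_smul t ht ξ

theorem continuousOn_fderiv (hp : IsHomogeneousSymbol m p) : ContinuousOn (fderiv ℝ p) {0}ᶜ :=
  fun ξ hξ => ((hp.contDiffAt ξ hξ).continuousAt_fderiv (by simp)).continuousWithinAt

theorem norm_fderiv_le (hp : IsHomogeneousSymbol m p) :
    ∃ C, 0 ≤ C ∧ ∀ ξ, ξ ≠ 0 → ‖fderiv ℝ p ξ‖ ≤ C * ‖ξ‖ ^ (m - 1) := by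
  have hsub : Metric.sphere (0 : E) 1 ⊆ {0}ᶜ := fun ξ hξ h => by
    rw [h] at hξ; simp at hξ
  obtain ⟨C, hC⟩ := (isCompact_sphere (0 : E) 1).exists_bound_of_continuousOn
    (hp.continuousOn_fderiv.mono hsub)
  refine ⟨max C 0, le_max_right _ _, fun ξ hξ => ?_⟩
  have hn : 0 < ‖ξ‖ := norm_pos_iff.2 hξ
  have h1 : ξ = ‖ξ‖ • (‖ξ‖⁻¹ • ξ) := by rw [smul_inv_smul₀ hn.ne']
  have h2 := hC (‖ξ‖⁻¹ • ξ) (by simp [norm_smul, hn.ne'])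
  conv_lhs => rw [h1]
  rw [hp.fderiv_smul hn, norm_smul, Real.norm_of_nonneg (by positivity), mul_comm]
  gcongr
  exact h2.trans (le_max_left _ _)

theorem exists_le (hp : IsHomogeneousSymbol m p) :
    ∃ c, 0 < c ∧ ∀ ξ, ξ ≠ 0 → c * ‖ξ‖ ^ m ≤ p ξ := by
  rcases (Metric.sphere (0 : E) 1).eq_empty_or_nonempty with he | hne
  · refine ⟨1, one_pos, fun ξ hξ => ?_⟩
    have hn : 0 < ‖ξ‖ := norm_pos_iff.2 hξ
    have : ‖ξ‖⁻¹ • ξ ∈ Metric.sphere (0 : E) 1 := by simp [norm_smul, hn.ne']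
    simp [he] at this
  · obtain ⟨η, hη, hmin⟩ := (isCompact_sphere (0 : E) 1).exists_isMinOn hne hp.continuous.continuousOn
    refine ⟨p η, hp.pos η (by rintro rfl; simp at hη), fun ξ hξ => ?_⟩
    have hn : 0 < ‖ξ‖ := norm_pos_iff.2 hξ
    have h1 : ξ = ‖ξ‖ • (‖ξ‖⁻¹ • ξ) := by rw [smul_inv_smul₀ hn.ne']
    have h2 : p η ≤ p (‖ξ‖⁻¹ • ξ) := hmin (by simp [norm_smul, hn.ne'])
    conv_rhs => rw [h1]
    rw [hp.map_smul _ hn, mul_comm]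
    gcongr

theorem map_zero (hp : IsHomogeneousSymbol m p) (hm : 0 < m) : p 0 = 0 := by
  have h := hp.map_smul 2 two_pos 0
  rw [smul_zero] at h
  have : (1 : ℝ) < 2 ^ m := Real.one_lt_rpow one_lt_two hm
  nlinarith

theorem isCompact_shell (hp : IsHomogeneousSymbol m p) (hm : 0 < m) :
    IsCompact {ξ | 1 / 2 ≤ p ξ ∧ p ξ ≤ 2} := by
  obtain ⟨c, hc, hcp⟩ := hp.exists_le
  refine Metric.isCompact_of_isClosed_isBounded ?_ ?_
  · exact (isClosed_le continuous_const hp.continuous).inter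
      (isClosed_le hp.continuous continuous_const)
  · refine (Metric.isBounded_closedBall (x := (0 : E)) (r := (2 / c) ^ m⁻¹)).subset fun ξ hξ => ?_
    rw [mem_closedBall_zero_iff]
    rcases eq_or_ne ξ 0 with rfl | h
    · rw [norm_zero]; positivity
    · have h1 : ‖ξ‖ ^ m ≤ 2 / c := by
        rw [le_div_iff₀ hc, mul_comm]
        exact (hcp ξ h).trans hξ.2
      calc ‖ξ‖ = (‖ξ‖ ^ m) ^ m⁻¹ := by
            rw [← Real.rpow_mul (norm_nonneg _), mul_inv_cancel₀ hm.ne', Real.rpow_one]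
        _ ≤ _ := by gcongr

end IsHomogeneousSymbol

/-- The symbols `|∇p| / (ζ - p)` for non-real `ζ` on the unit circle. -/
def resolventSymbols (p : E → ℝ) : Set (E → ℂ) :=
  {q | ∃ ζ : ℂ, ζ.im ≠ 0 ∧ ‖ζ‖ = 1 ∧ q = fun ξ => ((‖fderiv ℝ p ξ‖ : ℝ) : ℂ) * (ζ - p ξ)⁻¹}

theorem exists_lipschitzOnWith_of_contDiffAt {G : Type*} [NormedAddCommGroup G] [NormedSpace ℝ G]
    {f : E → G} {B : Set E} (hB : IsCompact B) (hf : ∀ ξ ∈ B, ContDiffAt ℝ 1 f ξ) :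
    ∃ K, LipschitzOnWith K f B := by
  refine LocallyLipschitzOn.exists_lipschitzOnWith_of_compact hB fun ξ hξ => ?_
  obtain ⟨K, t, ht, h⟩ := (hf ξ hξ).exists_lipschitzOnWith
  exact ⟨K, t, mem_nhdsWithin_of_mem_nhds ht, h⟩

theorem norm_sq_smul_add_of_orthogonal {e y : E} (he : ‖e‖ = 1) (hy : ⟪e, y⟫ = 0) (s : ℝ) :
    ‖s • e + y‖ ^ 2 = s ^ 2 + ‖y‖ ^ 2 := by
  rw [norm_add_sq_real, inner_smul_left, hy, norm_smul, he]
  simp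

/-- Near a point on which `p` has nonvanishing radial derivative, the localised resolvent symbols
are uniformly bounded along radial lines. -/
theorem IsHomogeneousSymbol.exists_lineBounded_near {m : ℝ} {p : E → ℝ}
    (hp : IsHomogeneousSymbol m p) (hm : 0 < m) {η₀ : E} (hη₀ : η₀ ≠ 0) :
    ∃ r > 0, ∀ χ : E → ℝ, ContDiff ℝ 1 χ → (∀ ξ, |χ ξ| ≤ 1) →
      (∀ ξ, r ≤ ‖ξ - η₀‖ → χ ξ = 0) →
      ∃ K, ∀ q ∈ resolventSymbols p, LineBounded (‖η₀‖⁻¹ • η₀) (fun ξ => χ ξ * q ξ) K := by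
  set s₀ := ‖η₀‖ with hs₀
  have hs₀pos : 0 < s₀ := norm_pos_iff.2 hη₀
  set e := s₀⁻¹ • η₀ with he_def
  have he : ‖e‖ = 1 := by
    rw [he_def, norm_smul, norm_inv, Real.norm_of_nonneg hs₀pos.le, inv_mul_cancel₀ hs₀pos.ne']
  have hη₀e : η₀ = s₀ • e := by rw [he_def, smul_inv_smul₀ hs₀pos.ne']
  have hrad : 0 < fderiv ℝ p η₀ e := by
    rw [he_def, ContinuousLinearMap.map_smul, hp.fderiv_apply_self hη₀, smul_eq_mul]
    have := hp.pos η₀ hη₀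
    positivity
  obtain ⟨c, hc0, hc⟩ := exists_between hrad
  have hev : ∀ᶠ η in nhds η₀, η ≠ 0 ∧ c ≤ fderiv ℝ p η e := by
    refine (eventually_ne_nhds hη₀).and ?_
    have h1 : ContinuousAt (fun η => fderiv ℝ p η e) η₀ :=
      ((hp.contDiffAt η₀ hη₀).continuousAt_fderiv (by simp)).clm_apply continuousAt_const
    exact (h1.eventually (lt_mem_nhds hc)).mono fun _ h => h.le
  obtain ⟨ε, hε, hball⟩ := Metric.eventually_nhds_iff_ball.1 hev
  refine ⟨ε / 4, by positivity, ?_⟩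
  set r := ε / 4 with hr
  have hrpos : 0 < r := by positivity
  intro χ hχ hχ1 hχ0
  set B := Metric.closedBall η₀ (3 * r) with hB
  have hBc : IsCompact B := isCompact_closedBall _ _
  have hBball : ∀ η ∈ B, η ≠ 0 ∧ c ≤ fderiv ℝ p η e := fun η hη =>
    hball η (Metric.closedBall_subset_ball (by linarith) hη)
  obtain ⟨L, hL⟩ := exists_lipschitzOnWith_of_contDiffAt hBc (f := fderiv ℝ p) fun ξ hξ =>
    ContDiffAt.fderiv_right (hp.contDiffAt ξ (hBball ξ hξ).1) (m := 1) (by norm_cast)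
  obtain ⟨Lχ, hLχ⟩ := exists_lipschitzOnWith_of_contDiffAt hBc (f := χ) fun ξ _ => hχ.contDiffAt
  obtain ⟨M₀, hM₀⟩ := hBc.exists_bound_of_continuousOn
    (hp.continuousOn_fderiv.mono fun η hη => (hBball η hη).1)
  have hM₀0 : 0 ≤ M₀ := (norm_nonneg _).trans (hM₀ η₀ (by simp [hB, hrpos.le]))
  set M : ℝ := L + Lχ * M₀ + M₀ with hM
  have hM0 : 0 ≤ M := by positivity
  set K := (2 * M / c + M * M / (c * c)) * (4 * r) + M / c * √π + M * (2 * π / c) with hK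
  have hK0 : 0 ≤ K := by positivity
  refine ⟨K, ?_⟩
  rintro q ⟨ζ, hζ, -, rfl⟩ y hy
  set φ : ℝ → ℝ := fun s => p (s • e + y)
  set b : ℝ → ℝ := fun s => χ (s • e + y) * ‖fderiv ℝ p (s • e + y)‖
  have hsym : ∀ s : ℝ, (χ (s • e + y) : ℂ) * (((‖fderiv ℝ p (s • e + y)‖ : ℝ) : ℂ) *
      (ζ - p (s • e + y))⁻¹) = (b s : ℂ) * (ζ - φ s)⁻¹ := fun s => by
    simp only [b, φ]; push_cast; ring
  simp only [hsym]
  have hdist : ∀ s : ℝ, ‖s • e + y - η₀‖ ^ 2 = (s - s₀) ^ 2 + ‖y‖ ^ 2 := fun s => by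
    rw [← norm_sq_smul_add_of_orthogonal he hy, hη₀e]
    congr 2
    module
  rcases le_or_gt r ‖y‖ with hyr | hyr
  · have hb0 : ∀ s, b s = 0 := fun s => by
      have : r ≤ ‖s • e + y - η₀‖ := by
        refine hyr.trans (pow_le_pow_iff_left₀ (norm_nonneg _) (norm_nonneg _) two_ne_zero |>.1 ?_)
        rw [hdist]; nlinarith [sq_nonneg (s - s₀)]
      simp only [b, hχ0 _ this, zero_mul]
    simp only [hb0, Complex.ofReal_zero, zero_mul, mul_zero, integral_zero, norm_zero]
    exact ⟨integrable_zero _ _ _, fun _ => hK0⟩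
  · have hfar : ∀ s, r ≤ |s - s₀| → b s = 0 := fun s hs => by
      have : r ≤ ‖s • e + y - η₀‖ := by
        refine pow_le_pow_iff_left₀ hrpos.le (norm_nonneg _) two_ne_zero |>.1 ?_
        rw [hdist, ← sq_abs (s - s₀)]; nlinarith [sq_nonneg ‖y‖]
      simp only [b, hχ0 _ this, zero_mul]
    have hmem : ∀ s ∈ Set.Icc (s₀ - 2 * r) (s₀ + 2 * r), s • e + y ∈ B := fun s hs => by
      rw [hB, mem_closedBall_iff_norm]
      refine pow_le_pow_iff_left₀ (norm_nonneg _) (by positivity) two_ne_zero |>.1 ?_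
      rw [hdist]
      have h1 : (s - s₀) ^ 2 ≤ (2 * r) ^ 2 := sq_le_sq' (by linarith [hs.1]) (by linarith [hs.2])
      have h2 : ‖y‖ ^ 2 ≤ r ^ 2 := by gcongr
      nlinarith
    have hdl : ∀ s t : ℝ, dist (s • e + y) (t • e + y) = |s - t| := fun s t => by
      rw [dist_add_right, dist_eq_norm, ← sub_smul, norm_smul, he, mul_one, Real.norm_eq_abs]
    have hder : ∀ s ∈ Set.Icc (s₀ - 2 * r) (s₀ + 2 * r),
        HasDerivAt φ (fderiv ℝ p (s • e + y) e) s := fun s hs => by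
      have h1 := ((hp.contDiffAt _ (hBball _ (hmem s hs)).1).differentiableAt (by simp)).hasFDerivAt
      have h2 : HasDerivAt (fun s : ℝ => s • e + y) e s := by
        have := ((hasDerivAt_id s).smul_const e).add_const y
        rw [one_smul] at this
        exact this
      exact h1.comp_hasDerivAt s h2
    have hfL : ∀ s ∈ Set.Icc (s₀ - 2 * r) (s₀ + 2 * r), ∀ t ∈ Set.Icc (s₀ - 2 * r) (s₀ + 2 * r),
        ‖fderiv ℝ p (s • e + y) - fderiv ℝ p (t • e + y)‖ ≤ L * |s - t| := fun s hs t ht => by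
      rw [← hdl s t, ← dist_eq_norm]
      exact hL.dist_le_mul _ (hmem s hs) _ (hmem t ht)
    have hbL : ∀ s ∈ Set.Icc (s₀ - 2 * r) (s₀ + 2 * r), ∀ t ∈ Set.Icc (s₀ - 2 * r) (s₀ + 2 * r),
        |b s - b t| ≤ M * |s - t| := fun s hs t ht => by
      have h1 : |χ (s • e + y) - χ (t • e + y)| ≤ Lχ * |s - t| := by
        rw [← hdl s t, ← Real.dist_eq]
        exact hLχ.dist_le_mul _ (hmem s hs) _ (hmem t ht)
      have h2 := (abs_norm_sub_norm_le _ _).trans (hfL s hs t ht)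
      have h3 : b s - b t = (χ (s • e + y) - χ (t • e + y)) * ‖fderiv ℝ p (s • e + y)‖ +
          χ (t • e + y) * (‖fderiv ℝ p (s • e + y)‖ - ‖fderiv ℝ p (t • e + y)‖) := by
        simp only [b]; ring
      rw [h3]
      refine (abs_add_le _ _).trans ?_
      rw [abs_mul, abs_mul, abs_of_nonneg (norm_nonneg (fderiv ℝ p (s • e + y)))]
      have h4 : |χ (s • e + y) - χ (t • e + y)| * ‖fderiv ℝ p (s • e + y)‖ ≤
          Lχ * |s - t| * M₀ := by
        gcongr
        exact hM₀ _ (hmem s hs)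
      have h5 : |χ (t • e + y)| * |‖fderiv ℝ p (s • e + y)‖ - ‖fderiv ℝ p (t • e + y)‖| ≤
          1 * (L * |s - t|) := by
        gcongr
        exact hχ1 _
      rw [hM]
      nlinarith [mul_nonneg hM₀0 (abs_nonneg (s - t))]
    have hsupp : ∀ s, s ∉ Set.Icc (s₀ - 2 * r) (s₀ + 2 * r) → b s = 0 := fun s hs => by
      refine hfar s ?_
      by_contra h
      have := abs_lt.1 (not_le.1 h)
      exact hs ⟨by linarith [this.1], by linarith [this.2]⟩
    have hbcont : ContinuousOn b (Set.Icc (s₀ - 2 * r) (s₀ + 2 * r)) :=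
      (LipschitzOnWith.of_dist_le_mul (K := ⟨M, hM0⟩) fun s hs t ht => by
        rw [Real.dist_eq, Real.dist_eq]; exact hbL s hs t ht).continuousOn
    have hInt := integrable_resolvent_of_support_Icc
      (fun s hs => (hder s hs).continuousAt.continuousWithinAt) hbcont hsupp hζ
    refine ⟨hInt, fun x => ?_⟩
    have := norm_integral_exp_mul_resolvent_le (by linarith) hc0 hM0 hder
      (fun s hs => (hBball _ (hmem s hs)).2) (fun s hs t ht => ?_) hbL (fun s hs => ?_)
      (hfar _ (by rw [sub_sub_cancel_left, abs_neg, abs_of_pos (by positivity)]; linarith))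
      (hfar _ (by rw [add_sub_cancel_left, abs_of_pos (by positivity)]; linarith))
      hsupp hζ x hInt
    · refine this.trans (le_of_eq ?_)
      rw [hK]; ring
    · rw [← sub_apply, ← Real.norm_eq_abs]
      refine (ContinuousLinearMap.le_opNorm _ _).trans ?_
      rw [he, mul_one]
      refine (hfL s hs t ht).trans ?_
      gcongr
      rw [hM]
      linarith [mul_nonneg Lχ.coe_nonneg hM₀0]
    · simp only [b]
      rw [abs_mul, abs_of_nonneg (norm_nonneg _)]
      have h1 : |χ (s • e + y)| * ‖fderiv ℝ p (s • e + y)‖ ≤ 1 * M₀ := by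
        gcongr
        · exact hχ1 _
        · exact hM₀ _ (hmem s hs)
      refine h1.trans ?_
      rw [hM]
      linarith [mul_nonneg Lχ.coe_nonneg hM₀0, L.coe_nonneg]

/-- A smooth function with values in `[0, 1]`. -/
def IsCutoff (w : E → ℝ) : Prop := ContDiff ℝ (⊤ : ℕ∞) w ∧ ∀ ξ, 0 ≤ w ξ ∧ w ξ ≤ 1

theorem IsCutoff.mul {v w : E → ℝ} (hv : IsCutoff v) (hw : IsCutoff w) :
    IsCutoff fun ξ => v ξ * w ξ :=
  ⟨hv.1.mul hw.1, fun ξ => ⟨mul_nonneg (hv.2 ξ).1 (hw.2 ξ).1,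
    mul_le_one₀ (hv.2 ξ).2 (hw.2 ξ).1 (hw.2 ξ).2⟩⟩

theorem IsCutoff.one_sub {w : E → ℝ} (hw : IsCutoff w) : IsCutoff fun ξ => 1 - w ξ :=
  ⟨contDiff_const.sub hw.1, fun ξ => ⟨by linarith [(hw.2 ξ).2], by linarith [(hw.2 ξ).1]⟩⟩

theorem IsCutoff.abs_le_one {w : E → ℝ} (hw : IsCutoff w) (ξ : E) : |w ξ| ≤ 1 := by
  rw [abs_of_nonneg (hw.2 ξ).1]; exact (hw.2 ξ).2

theorem IsCutoff.measurable {w : E → ℝ} (hw : IsCutoff w) : Measurable w :=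
  hw.1.continuous.measurable

theorem isCutoff_one : IsCutoff fun _ : E => (1 : ℝ) :=
  ⟨contDiff_const, fun _ => ⟨zero_le_one, le_rfl⟩⟩

/-- On compact sets avoiding the origin the resolvent symbols can be localised. -/
theorem IsHomogeneousSymbol.exists_cutoff {m : ℝ} {p : E → ℝ} (hp : IsHomogeneousSymbol m p)
    (hm : 0 < m) {δ : ℝ} (hδ : 1 / 2 < δ) {S : Set E} (hS : IsCompact S) (hS0 : ∀ ξ ∈ S, ξ ≠ 0) :
    ∃ w : E → ℝ, IsCutoff w ∧ (∀ ξ ∈ S, w ξ = 0) ∧ ∀ θ : E → ℝ, IsCutoff θ →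
      UniformlyBounded δ (resolventSymbols p) fun ξ => θ ξ * (1 - w ξ) := by
  refine hS.induction_on (p := fun S => ∃ w : E → ℝ, IsCutoff w ∧ (∀ ξ ∈ S, w ξ = 0) ∧
    ∀ θ : E → ℝ, IsCutoff θ → UniformlyBounded δ (resolventSymbols p) fun ξ => θ ξ * (1 - w ξ))
    ?_ ?_ ?_ ?_
  · refine ⟨fun _ => 1, isCutoff_one, by simp, fun θ _ => ⟨0, by simp, fun q _ R _ f g _ => ?_⟩⟩
    simp
  · rintro s t hst ⟨w, h1, h2, h3⟩
    exact ⟨w, h1, fun ξ hξ => h2 ξ (hst hξ), h3⟩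
  · rintro s t ⟨v, hv, hv0, hvb⟩ ⟨w, hw, hw0, hwb⟩
    refine ⟨fun ξ => v ξ * w ξ, hv.mul hw, ?_, fun θ hθ => ?_⟩
    · rintro ξ (hξ | hξ)
      · simp [hv0 ξ hξ]
      · simp [hw0 ξ hξ]
    · have h1 := hθ.mul hv.one_sub
      have h2 := (hθ.mul hv).mul hw.one_sub
      have := UniformlyBounded.add h1.measurable h1.abs_le_one h2.measurable h2.abs_le_one
        (hvb θ hθ) (hwb _ (hθ.mul hv))
      refine (congrArg (UniformlyBounded δ (resolventSymbols p)) ?_).mp this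
      ext ξ; ring
  · intro η₀ hη₀
    obtain ⟨r, hr, hbd⟩ := hp.exists_lineBounded_near hm (hS0 η₀ hη₀)
    let ψ : ContDiffBump η₀ := ⟨r / 2, r, by positivity, by linarith⟩
    have hψ : IsCutoff ψ := ⟨ψ.contDiff, fun ξ => ⟨ψ.nonneg, ψ.le_one⟩⟩
    refine ⟨Metric.closedBall η₀ (r / 2),
      mem_nhdsWithin_of_mem_nhds (Metric.closedBall_mem_nhds _ (by positivity)),
      fun ξ => 1 - ψ ξ, hψ.one_sub, fun ξ hξ => ?_, fun θ hθ => ?_⟩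
    · simp only [ψ.one_of_mem_closedBall hξ, sub_self]
    · have hχ := hθ.mul hψ
      simp only [sub_sub_cancel]
      obtain ⟨K, hK⟩ := hbd _ (hχ.1.of_le (by norm_cast)) hχ.abs_le_one fun ξ hξ => by
        rw [ψ.zero_of_le_dist (by rwa [dist_eq_norm]), mul_zero]
      have hpos : ‖η₀‖ ≠ 0 := norm_ne_zero_iff.2 (hS0 η₀ hη₀)
      exact UniformlyBounded.of_lineBounded (by simp [norm_smul, hpos]) hδ hχ.measurable
        hχ.abs_le_one hK

theorem IsHomogeneousSymbol.exists_norm_le_off_shell {m : ℝ} {p : E → ℝ}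
    (hp : IsHomogeneousSymbol m p) :
    ∃ A, 0 ≤ A ∧ ∀ q ∈ resolventSymbols p, ∀ ξ, ξ ≠ 0 → ¬ (1 / 2 ≤ p ξ ∧ p ξ ≤ 2) →
      ‖q ξ‖ ≤ A / ‖ξ‖ := by
  obtain ⟨C, hC, hCp⟩ := hp.norm_fderiv_le
  obtain ⟨c, hc, hcp⟩ := hp.exists_le
  refine ⟨2 * C / c, by positivity, ?_⟩
  rintro q ⟨ζ, -, hζ, rfl⟩ ξ hξ hshell
  have hn : 0 < ‖ξ‖ := norm_pos_iff.2 hξ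
  have hppos := hp.pos ξ hξ
  have h1 : |1 - p ξ| ≤ ‖ζ - p ξ‖ := by
    have := abs_norm_sub_norm_le ζ (p ξ : ℂ)
    rwa [hζ, Complex.norm_real, Real.norm_of_nonneg hppos.le] at this
  have h2 : p ξ / 2 ≤ ‖ζ - p ξ‖ := by
    refine le_trans ?_ h1
    rcases le_or_gt (1 / 2) (p ξ) with h | h
    · have : 2 < p ξ := not_le.1 fun h' => hshell ⟨h, h'⟩
      rw [abs_of_neg (by linarith)]; linarith
    · rw [abs_of_pos (by linarith)]; linarith
  have h3 : c * ‖ξ‖ ^ m / 2 ≤ ‖ζ - p ξ‖ := le_trans (by linarith [hcp ξ hξ]) h2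
  rw [norm_mul, norm_inv, Complex.norm_real, norm_norm]
  have hpow : 0 < ‖ξ‖ ^ m := Real.rpow_pos_of_pos hn m
  calc ‖fderiv ℝ p ξ‖ * ‖ζ - p ξ‖⁻¹ ≤ (C * ‖ξ‖ ^ (m - 1)) * (c * ‖ξ‖ ^ m / 2)⁻¹ := by
        gcongr
        exact hCp ξ hξ
    _ = 2 * C / c / ‖ξ‖ := by
        rw [Real.rpow_sub_one hn.ne']
        field_simp

theorem measurable_of_mem_resolventSymbols {p : E → ℝ} (hp : Continuous p) {q : E → ℂ}
    (hq : q ∈ resolventSymbols p) : Measurable q := by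
  obtain ⟨ζ, -, -, rfl⟩ := hq
  exact (Complex.measurable_ofReal.comp (measurable_fderiv ℝ p).norm).mul
    (measurable_const.sub (Complex.measurable_ofReal.comp hp.measurable)).inv

/-- Symbols of size `A / |ξ|` supported in a cone transversal to `e` are bounded along lines in the
direction `e`. -/
theorem lineBounded_of_norm_le_div {e : E} (he : ‖e‖ = 1) {u : E → ℂ} (hu : Measurable u) {A : ℝ}
    (hA : 0 ≤ A) (hbd : ∀ ξ, ξ ≠ 0 → ‖u ξ‖ ≤ A / ‖ξ‖)
    (hsupp : ∀ ξ, ‖ξ‖ ^ 2 < 2 * ⟪e, ξ⟫ ^ 2 → u ξ = 0) : LineBounded e u (2 * A) := by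
  intro y hy
  have hnorm := norm_sq_smul_add_of_orthogonal he hy
  have hinner : ∀ s : ℝ, ⟪e, s • e + y⟫ = s := fun s => by
    rw [inner_add_right, inner_smul_right, hy, real_inner_self_eq_norm_sq, he]; ring
  set B : ℝ → ℝ := (Set.Icc (-‖y‖) ‖y‖).indicator fun _ => A / ‖y‖ with hB
  have hBint : Integrable B :=
    (integrable_indicator_iff measurableSet_Icc).2 (by simp)
  have hB0 : ∀ s, 0 ≤ B s := fun s => Set.indicator_nonneg (fun _ _ => by positivity) s
  have hle : ∀ᵐ s : ℝ, ‖u (s • e + y)‖ ≤ B s := by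
    filter_upwards [Measure.ae_ne volume (0 : ℝ)] with s hs
    by_cases hmem : s ∈ Set.Icc (-‖y‖) ‖y‖
    · have hy0 : 0 < ‖y‖ := by
        by_contra h
        have h0 : ‖y‖ = 0 := le_antisymm (not_lt.1 h) (norm_nonneg _)
        rw [h0] at hmem
        exact hs (le_antisymm hmem.2 (by simpa using hmem.1))
      have hyle : ‖y‖ ≤ ‖s • e + y‖ := by
        refine pow_le_pow_iff_left₀ (norm_nonneg _) (norm_nonneg _) two_ne_zero |>.1 ?_
        rw [hnorm]; nlinarith [sq_nonneg s]
      rw [hB, Set.indicator_of_mem hmem]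
      refine (hbd _ (norm_pos_iff.1 (hy0.trans_le hyle))).trans ?_
      gcongr
    · rw [hsupp, norm_zero]
      · exact hB0 s
      · rw [hnorm, hinner]
        have : ‖y‖ ^ 2 < s ^ 2 := by
          rw [← sq_abs s]
          have : ‖y‖ < |s| := not_le.1 fun h => hmem (abs_le.1 h)
          gcongr
        linarith
  have hmeas : Measurable fun s : ℝ => u (s • e + y) :=
    hu.comp (by fun_prop : Continuous fun s : ℝ => s • e + y).measurable
  refine ⟨hBint.mono' hmeas.aestronglyMeasurable hle, fun x => ?_⟩
  calc ‖∫ s : ℝ, cexp (I * x * s) * u (s • e + y)‖ ≤ ∫ s, B s := by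
        refine norm_integral_le_of_norm_le hBint (hle.mono fun s hs => ?_)
        have : I * x * s = I * (x * s : ℝ) := by push_cast; ring
        rw [norm_mul, this, Complex.norm_exp_I_mul_ofReal, one_mul]
        exact hs
    _ ≤ 2 * A := by
        rw [hB, integral_indicator measurableSet_Icc, setIntegral_const]
        simp only [Measure.real, Real.volume_Icc, smul_eq_mul]
        rw [ENNReal.toReal_ofReal (by linarith [norm_nonneg y])]
        rcases (norm_nonneg y).eq_or_lt with h | h
        · rw [← h]; simp [hA]
        · apply le_of_eq; field_simp; ring

theorem IsHomogeneousSymbol.uniformlyBounded_cone {m : ℝ} {p : E → ℝ}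
    (hp : IsHomogeneousSymbol m p) {δ : ℝ} (hδ : 1 / 2 < δ) {w : E → ℝ} (hw : IsCutoff w)
    (hwS : ∀ ξ, 1 / 2 ≤ p ξ ∧ p ξ ≤ 2 → w ξ = 0) {e : E} (he : ‖e‖ = 1) {D : Set E}
    (hD : MeasurableSet D) (hcone : ∀ ξ ∈ D, 2 * ⟪e, ξ⟫ ^ 2 ≤ ‖ξ‖ ^ 2) :
    UniformlyBounded δ (resolventSymbols p) (D.indicator w) := by
  obtain ⟨A, hA, hbd⟩ := hp.exists_norm_le_off_shell
  have hmeas : Measurable (D.indicator w) := hw.measurable.indicator hD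
  have hle : ∀ ξ, |D.indicator w ξ| ≤ 1 := fun ξ => by
    by_cases h : ξ ∈ D
    · rw [Set.indicator_of_mem h]; exact hw.abs_le_one ξ
    · rw [Set.indicator_of_notMem h]; simp
  refine UniformlyBounded.of_lineBounded he hδ hmeas hle (K := 2 * A) fun q hq => ?_
  have hum : Measurable fun ξ => ((D.indicator w ξ : ℝ) : ℂ) * q ξ :=
    (Complex.measurable_ofReal.comp hmeas).mul
      (measurable_of_mem_resolventSymbols hp.continuous hq)
  refine lineBounded_of_norm_le_div he hum hA (fun ξ hξ => ?_) fun ξ hξ => ?_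
  · by_cases h : 1 / 2 ≤ p ξ ∧ p ξ ≤ 2
    · have : D.indicator w ξ = 0 := by
        rw [Set.indicator_apply_eq_zero]; exact fun _ => hwS ξ h
      simp only [this, Complex.ofReal_zero, zero_mul, norm_zero]
      positivity
    · rw [norm_mul, Complex.norm_real, Real.norm_eq_abs]
      exact (mul_le_of_le_one_left (norm_nonneg _) (hle ξ)).trans (hbd q hq ξ hξ h)
  · rw [Set.indicator_of_notMem fun h => (hcone ξ h).not_gt hξ]
    simp

theorem exists_unit_vectors_cone (hE : 2 ≤ Module.finrank ℝ E) :
    ∃ e₁ e₂ : E, ‖e₁‖ = 1 ∧ ‖e₂‖ = 1 ∧ ∀ ξ : E, ⟪e₁, ξ⟫ ^ 2 + ⟪e₂, ξ⟫ ^ 2 ≤ ‖ξ‖ ^ 2 := by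
  let b := stdOrthonormalBasis ℝ E
  let i : Fin (Module.finrank ℝ E) := ⟨0, by omega⟩
  let j : Fin (Module.finrank ℝ E) := ⟨1, by omega⟩
  have hij : i ≠ j := by simp [i, j]
  refine ⟨b i, b j, b.orthonormal.1 i, b.orthonormal.1 j, fun ξ => ?_⟩
  have := b.orthonormal.sum_inner_products_le (s := {i, j}) ξ
  simpa [Finset.sum_pair hij] using this

theorem IsHomogeneousSymbol.uniformlyBounded {m : ℝ} {p : E → ℝ} (hp : IsHomogeneousSymbol m p)
    (hm : 0 < m) (hE : 2 ≤ Module.finrank ℝ E) {δ : ℝ} (hδ : 1 / 2 < δ) :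
    UniformlyBounded δ (resolventSymbols p) fun _ => 1 := by
  obtain ⟨w, hw, hwS, hloc⟩ := hp.exists_cutoff hm hδ (hp.isCompact_shell hm) (by
    rintro ξ hξ rfl
    have := hξ.1
    rw [hp.map_zero hm] at this
    norm_num at this)
  obtain ⟨e₁, e₂, he₁, he₂, hsum⟩ := exists_unit_vectors_cone hE
  set D : Set E := {ξ | 2 * ⟪e₁, ξ⟫ ^ 2 ≤ ‖ξ‖ ^ 2} with hD
  have hDm : MeasurableSet D :=
    (isClosed_le (by fun_prop) (by fun_prop) : IsClosed D).measurableSet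
  have h1 := hp.uniformlyBounded_cone hδ hw hwS he₁ hDm fun ξ h => h
  have h2 := hp.uniformlyBounded_cone hδ hw hwS he₂ hDm.compl fun ξ h => by
    have h' : ‖ξ‖ ^ 2 < 2 * ⟪e₁, ξ⟫ ^ 2 := not_le.1 h
    linarith [hsum ξ]
  have h3 := hloc _ isCutoff_one
  have hind : ∀ D' : Set E, ∀ ξ, |D'.indicator w ξ| ≤ 1 := fun D' ξ => by
    by_cases h : ξ ∈ D'
    · rw [Set.indicator_of_mem h]; exact hw.abs_le_one ξ
    · rw [Set.indicator_of_notMem h]; simp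
  have h12 := UniformlyBounded.add (hw.measurable.indicator hDm) (hind D)
    (hw.measurable.indicator hDm.compl) (hind Dᶜ) h1 h2
  have hadd : (fun ξ => D.indicator w ξ + Dᶜ.indicator w ξ) = w :=
    Set.indicator_self_add_compl D w
  rw [hadd] at h12
  have hl := isCutoff_one.mul hw.one_sub
  have := UniformlyBounded.add hw.measurable hw.abs_le_one hl.measurable hl.abs_le_one h12 h3
  refine (congrArg (UniformlyBounded δ (resolventSymbols p)) ?_).mp this
  ext ξ; ring

/-- The uniform weighted estimate for `|∇p|(D) (ζ - p(D))⁻¹`, on the Fourier side. -/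
theorem IsHomogeneousSymbol.exists_enorm_integral_le {m : ℝ} {p : E → ℝ}
    (hp : IsHomogeneousSymbol m p) (hm : 0 < m) (hE : 2 ≤ Module.finrank ℝ E) {δ : ℝ}
    (hδ : 1 / 2 < δ) : ∃ C : ℝ≥0∞, C ≠ ⊤ ∧ ∀ ζ : ℂ, ζ.im ≠ 0 → ∀ f g : 𝓢(E, ℂ),
      (Integrable fun ξ => ((‖fderiv ℝ p ξ‖ : ℝ) : ℂ) * (ζ - p ξ)⁻¹ * angFourier f ξ *
        (starRingEnd ℂ) (angFourier g ξ)) →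
      ‖∫ ξ, ((‖fderiv ℝ p ξ‖ : ℝ) : ℂ) * (ζ - p ξ)⁻¹ * angFourier f ξ *
        (starRingEnd ℂ) (angFourier g ξ)‖ₑ ≤ C * weightedNorm δ f * weightedNorm δ g := by
  obtain ⟨C, hC, h⟩ := hp.uniformlyBounded hm hE hδ
  refine ⟨C, hC, fun ζ hζ f g hInt => ?_⟩
  have hζ0 : 0 < ‖ζ‖ := norm_pos_iff.2 (by rintro rfl; simp at hζ)
  set R := ‖ζ‖ ^ m⁻¹ with hR
  have hRpos : 0 < R := Real.rpow_pos_of_pos hζ0 _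
  set t := R⁻¹ with ht
  have htpos : 0 < t := inv_pos.2 hRpos
  have htm : t ^ m = ‖ζ‖⁻¹ := by
    rw [ht, Real.inv_rpow hRpos.le, hR, ← Real.rpow_mul hζ0.le, inv_mul_cancel₀ hm.ne',
      Real.rpow_one]
  have htm0 : ((t ^ m : ℝ) : ℂ) ≠ 0 := by exact_mod_cast (Real.rpow_pos_of_pos htpos m).ne'
  have hmem : (fun ξ => ((‖fderiv ℝ p ξ‖ : ℝ) : ℂ) * ((t ^ m : ℝ) * ζ - p ξ)⁻¹) ∈
      resolventSymbols p := by
    refine ⟨(t ^ m : ℝ) * ζ, ?_, ?_, rfl⟩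
    · rw [Complex.im_ofReal_mul]
      exact mul_ne_zero (Real.rpow_pos_of_pos htpos m).ne' hζ
    · rw [norm_mul, Complex.norm_real, Real.norm_of_nonneg (by positivity), htm,
        inv_mul_cancel₀ hζ0.ne']
  have hsym : ∀ ξ, (R : ℂ)⁻¹ * (((‖fderiv ℝ p (t • ξ)‖ : ℝ) : ℂ) *
      ((t ^ m : ℝ) * ζ - p (t • ξ))⁻¹) = ((‖fderiv ℝ p ξ‖ : ℝ) : ℂ) * (ζ - p ξ)⁻¹ := by
    intro ξ
    rw [hp.fderiv_smul htpos, hp.map_smul t htpos, norm_smul, Real.norm_of_nonneg (by positivity),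
      Real.rpow_sub_one htpos.ne', ← Complex.ofReal_inv, ← ht]
    have e1 : ((t ^ m : ℝ) : ℂ) * ζ - ((t ^ m * p ξ : ℝ) : ℂ) = (t ^ m : ℝ) * (ζ - p ξ) := by
      push_cast; ring
    have ht0 : (t : ℂ) ≠ 0 := by exact_mod_cast htpos.ne'
    rw [e1, mul_inv, Complex.ofReal_mul, Complex.ofReal_div]
    field_simp
  have := h _ hmem R hRpos f g
  simp only [← ht, hsym, Complex.ofReal_one, one_mul] at this
  exact this hInt

end

theorem resolvent_gradient_symbol (n : ℕ) (hn : 2 ≤ n) (m : ℝ) (hm : 1 < m)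
    (δ : ℝ) (hδ : 1 / 2 < δ)
    (a : EuclideanSpace ℝ (Fin n) → ℝ)
    (ha_cont : Continuous a)
    (ha_smooth : ContDiffOn ℝ (⊤ : ℕ∞) a {(0 : EuclideanSpace ℝ (Fin n))}ᶜ)
    (ha_hom : ∀ t : ℝ, 0 < t → ∀ ξ, a (t • ξ) = t * a ξ)
    (ha_pos : ∀ ξ : EuclideanSpace ℝ (Fin n), ξ ≠ 0 → 0 < a ξ) :
    ∃ C > 0, ∀ ζ : ℂ, ζ.im ≠ 0 → ∀ f g : SchwartzMap (EuclideanSpace ℝ (Fin n)) ℂ,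
      ‖∫ x : EuclideanSpace ℝ (Fin n),
          mult n (fun ξ =>
              ((‖fderiv ℝ (fun ζ' : EuclideanSpace ℝ (Fin n) => a ζ' ^ m) ξ‖ : ℝ) : ℂ) *
                (ζ - ((a ξ ^ m : ℝ) : ℂ))⁻¹)
            (fun y => f y) x * (starRingEnd ℂ) (g x)‖
        ≤ C * (eLpNorm (fun x => ((Real.sqrt (1 + ‖x‖ ^ 2) ^ (δ) : ℝ) : ℂ) * f x) 2 volume).toReal *
            (eLpNorm (fun x => ((Real.sqrt (1 + ‖x‖ ^ 2) ^ (δ) : ℝ) : ℂ) * g x) 2 volume).toReal := by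
  have hp : IsHomogeneousSymbol m fun ξ => a ξ ^ m := by
    refine ⟨ha_cont.rpow_const fun _ => Or.inr (by linarith), fun ξ hξ => ?_, fun t ht ξ => ?_,
      fun ξ hξ => Real.rpow_pos_of_pos (ha_pos ξ hξ) m⟩
    · exact (ha_smooth.contDiffAt (isOpen_compl_singleton.mem_nhds hξ)).rpow_const_of_ne
        (ha_pos ξ hξ).ne'
    · have ha0 : 0 ≤ a ξ := by
        rcases eq_or_ne ξ 0 with rfl | h
        · have := ha_hom 2 two_pos 0
          rw [smul_zero] at this
          linarith
        · exact (ha_pos ξ h).le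
      rw [ha_hom t ht, Real.mul_rpow ht.le ha0]
  obtain ⟨C, hC, hbound⟩ := hp.exists_enorm_integral_le (by linarith) (by simpa using hn) hδ
  set κ : ℝ := (2 * π) ^ (-(n : ℝ) / 2) with hκ
  have hκpos : 0 < κ := Real.rpow_pos_of_pos (by positivity) _
  refine ⟨κ * κ * C.toReal + 1, by positivity, fun ζ hζ f g => ?_⟩
  change _ ≤ _ * (weightedNorm δ f).toReal * (weightedNorm δ g).toReal
  set q : EuclideanSpace ℝ (Fin n) → ℂ := fun ξ =>
    ((‖fderiv ℝ (fun ζ' : EuclideanSpace ℝ (Fin n) => a ζ' ^ m) ξ‖ : ℝ) : ℂ) *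
      (ζ - ((a ξ ^ m : ℝ) : ℂ))⁻¹ with hq
  have hmult : ∀ x, mult n q (fun y => f y) x =
      (κ * κ : ℝ) * ∫ ξ, cexp (I * ((⟪x, ξ⟫ : ℝ) : ℂ)) * (q ξ * angFourier f ξ) := fun x => by
    have h1 : ∀ ξ, cexp (I * ((⟪x, ξ⟫ : ℝ) : ℂ)) * (q ξ * FT n (fun y => f y) ξ) =
        κ * (cexp (I * ((⟪x, ξ⟫ : ℝ) : ℂ)) * (q ξ * angFourier f ξ)) := fun ξ => by
      have : FT n (fun y => f y) ξ = κ * angFourier f ξ := by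
        rw [← Complex.real_smul]; rfl
      rw [this]; ring
    rw [mult, IFT]
    simp_rw [h1]
    rw [integral_const_mul, Complex.real_smul, ← hκ]
    push_cast
    ring
  by_cases hF : Integrable fun ξ => q ξ * angFourier f ξ
  · have hle := hbound ζ hζ f g (integrable_mul_conj_angFourier hF g)
    have hreal : ‖∫ ξ, q ξ * angFourier f ξ * (starRingEnd ℂ) (angFourier g ξ)‖ ≤
        C.toReal * (weightedNorm δ f).toReal * (weightedNorm δ g).toReal := by
      have := ENNReal.toReal_mono (ENNReal.mul_ne_top (ENNReal.mul_ne_top hC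
        (weightedNorm_ne_top δ f)) (weightedNorm_ne_top δ g)) hle
      rwa [toReal_enorm, ENNReal.toReal_mul, ENNReal.toReal_mul] at this
    simp_rw [hmult, mul_assoc ((κ * κ : ℝ) : ℂ)]
    rw [integral_const_mul, integral_inverse_mul_conj hF, norm_mul, Complex.norm_real,
      Real.norm_of_nonneg (by positivity)]
    have hnn : 0 ≤ (weightedNorm δ f).toReal * (weightedNorm δ g).toReal := by positivity
    calc _ ≤ κ * κ * (C.toReal * (weightedNorm δ f).toReal * (weightedNorm δ g).toReal) := by
          gcongr
      _ ≤ _ := by linarith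
  · have hzero : ∀ x, mult n q (fun y => f y) x = 0 := fun x => by
      rw [hmult, integral_exp_mul_eq_zero_of_not_integrable hF, mul_zero]
    simp only [hzero, zero_mul, integral_zero, norm_zero]
    positivity
end
end
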